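/- Coarea formula in 1-quasiopen sets: Let U ⊂ X be a 1-quasiopen set and suppose that ‖Du‖(U) < ∞. Then ‖Du‖(U) = ∫_{−∞}^{∞} P({u > t}, U) dt. -/

import Mathlib

open MeasureTheory Filter Metric Set
open scoped Topology ENNReal NNReal symmDiff

noncomputable section

namespace PaperBV

/-- A rectifiable curve parametrized by arc-length: a `1`-Lipschitz map on `[0, len]`. -/
structure Curve (X : Type*) [MetricSpace X] where
  len : ℝ
  len_nonneg : 0 ≤ len
  toFun : ℝ → X
  lip : LipschitzOnWith 1 toFun (Set.Icc 0 len)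

variable {X : Type*} [MetricSpace X] [MeasurableSpace X] [BorelSpace X]

/-- The curve lies in the set `A`. -/
def Curve.In (γ : Curve X) (A : Set X) : Prop :=
  ∀ t ∈ Set.Icc (0 : ℝ) γ.len, γ.toFun t ∈ A

/-- The curve integral `∫_γ g ds` of a nonnegative function, for an
arc-length parametrized curve. -/
def Curve.integral (γ : Curve X) (g : X → ℝ≥0∞) : ℝ≥0∞ :=
  ∫⁻ t in Set.Icc (0 : ℝ) γ.len, g (γ.toFun t)

/-- The upper gradient inequality `|u(x) - u(y)| ≤ ∫_γ g ds` along the curve `γ`,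
where `x, y` are the endpoints of `γ`. -/
def UGIneq (u : X → ℝ) (g : X → ℝ≥0∞) (γ : Curve X) : Prop :=
  ENNReal.ofReal |u (γ.toFun 0) - u (γ.toFun γ.len)| ≤ γ.integral g

/-- `g` is an upper gradient of `u` on `X`: `g` is nonnegative (automatic in `ℝ≥0∞`),
Borel, and the upper gradient inequality holds along every curve. -/
def IsUpperGradient (u : X → ℝ) (g : X → ℝ≥0∞) : Prop :=
  Measurable g ∧ ∀ γ : Curve X, UGIneq u g γ

/-- A family of curves has zero `1`-modulus: there is a nonnegative Borel function
`ρ ∈ L¹(X)` whose curve integral is infinite along every curve of the family. -/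
def ZeroMod (μ : Measure X) (Γ : Set (Curve X)) : Prop :=
  ∃ ρ : X → ℝ≥0∞, Measurable ρ ∧ (∫⁻ x, ρ x ∂μ) < ∞ ∧ ∀ γ ∈ Γ, γ.integral ρ = ∞

/-- `g` is a `1`-weak upper gradient of `u` in `A`: `g` is nonnegative, `μ`-measurable,
and the upper gradient inequality holds along `1`-a.e. curve in `A`. -/
def IsWeakUpperGradientOn (μ : Measure X) (u : X → ℝ) (g : X → ℝ≥0∞) (A : Set X) : Prop :=
  AEMeasurable g μ ∧ ZeroMod μ {γ : Curve X | γ.In A ∧ ¬ UGIneq u g γ}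

/-- A nonnegative function `g` belongs to `L¹_loc(A)`. -/
def LIntegrableLocOn (μ : Measure X) (g : X → ℝ≥0∞) (A : Set X) : Prop :=
  ∀ x ∈ A, ∃ r > (0 : ℝ), (∫⁻ y in A ∩ Metric.ball x r, g y ∂μ) < ∞

/-- `g` is the minimal `1`-weak upper gradient of `u` in `A`: a `1`-weak upper gradient
satisfying `g ≤ g'` `μ`-a.e. in `A` for every `1`-weak upper gradient `g' ∈ L¹_loc(A)`. -/
def IsMinimalWUG (μ : Measure X) (u : X → ℝ) (g : X → ℝ≥0∞) (A : Set X) : Prop :=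
  IsWeakUpperGradientOn μ u g A ∧
    ∀ g' : X → ℝ≥0∞, IsWeakUpperGradientOn μ u g' A → LIntegrableLocOn μ g' A →
      ∀ᵐ x ∂(μ.restrict A), g x ≤ g' x

/-- The Newtonian norm `‖u‖_{N^{1,1}(A)}` (valued in `ℝ≥0∞`). -/
def NNorm (μ : Measure X) (A : Set X) (u : X → ℝ) : ℝ≥0∞ :=
  (∫⁻ x in A, ENNReal.ofReal |u x| ∂μ) +
    ⨅ (g : X → ℝ≥0∞) (_ : IsWeakUpperGradientOn μ u g A), ∫⁻ x in A, g x ∂μ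

/-- `u ∈ N^{1,1}(A)`. -/
def MemN11 (μ : Measure X) (A : Set X) (u : X → ℝ) : Prop :=
  NNorm μ A u < ∞

/-- `u ∈ N^{1,1}_loc(A)`: every point of `A` has a ball `B` with `u ∈ N^{1,1}(A ∩ B)`. -/
def MemN11Loc (μ : Measure X) (A : Set X) (u : X → ℝ) : Prop :=
  ∀ x ∈ A, ∃ r > (0 : ℝ), NNorm μ (A ∩ Metric.ball x r) u < ∞

/-- `u ∈ N^{1,1}(Ω')` for every bounded open `Ω' ⊆ X`. -/
def MemN11LocBounded (μ : Measure X) (u : X → ℝ) : Prop :=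
  ∀ Ω' : Set X, IsOpen Ω' → Bornology.IsBounded Ω' → NNorm μ Ω' u < ∞

/-- `u ∈ N^{1,1}_0(Ω)`: `u ∈ N^{1,1}(X)` and `u = 0` outside `Ω`. -/
def MemN110 (μ : Measure X) (Ω : Set X) (u : X → ℝ) : Prop :=
  MemN11 μ Set.univ u ∧ ∀ x ∉ Ω, u x = 0

/-- The `1`-capacity `capa₁(A) = inf {‖u‖_{N^{1,1}(X)} : u ∈ N^{1,1}(X), u ≥ 1 on A}`. -/
def capa1 (μ : Measure X) (A : Set X) : ℝ≥0∞ :=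
  ⨅ (u : X → ℝ) (_ : MemN11 μ Set.univ u) (_ : ∀ x ∈ A, 1 ≤ u x), NNorm μ Set.univ u

/-- `U` is `1`-quasiopen: for every `ε > 0` there is an open `G` with `capa₁(G) < ε`
such that `U ∪ G` is open. -/
def QuasiOpen (μ : Measure X) (U : Set X) : Prop :=
  ∀ ε : ℝ, 0 < ε → ∃ G : Set X, IsOpen G ∧ capa1 μ G < ENNReal.ofReal ε ∧ IsOpen (U ∪ G)

/-- `u ∈ L¹_loc(A)`. -/
def MemL1Loc (μ : Measure X) (A : Set X) (u : X → ℝ) : Prop :=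
  AEMeasurable u (μ.restrict A) ∧
    ∀ x ∈ A, ∃ r > (0 : ℝ), (∫⁻ y in A ∩ Metric.ball x r, ENNReal.ofReal |u y| ∂μ) < ∞

/-- `v i → u` in `L¹_loc(A)`: every `x ∈ A` has a ball `B` with `v i → u` in `L¹(A ∩ B)`. -/
def L1LocConv (μ : Measure X) (A : Set X) (v : ℕ → X → ℝ) (u : X → ℝ) : Prop :=
  ∀ x ∈ A, ∃ r > (0 : ℝ),
    Filter.Tendsto (fun i => ∫⁻ y in A ∩ Metric.ball x r, ENNReal.ofReal |v i y - u y| ∂μ)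
      Filter.atTop (𝓝 0)

/-- `u` is locally Lipschitz on `Ω`. -/
def LocLipOn (u : X → ℝ) (Ω : Set X) : Prop :=
  ∀ x ∈ Ω, ∃ r > (0 : ℝ), ∃ K : ℝ≥0, LipschitzOnWith K u (Ω ∩ Metric.ball x r)

/-- The total variation `‖Du‖(Ω)` of `u` in an open set `Ω`: the infimum of
`liminf_i ∫_Ω g_{v i} dμ` over sequences of locally Lipschitz functions `v i → u`
in `L¹_loc(Ω)`, where `g_{v i}` is the minimal `1`-weak upper gradient of `v i` in `Ω`. -/
def tvOpen (μ : Measure X) (Ω : Set X) (u : X → ℝ) : ℝ≥0∞ :=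
  ⨅ (v : ℕ → X → ℝ) (g : ℕ → X → ℝ≥0∞) (_ : ∀ i, LocLipOn (v i) Ω)
    (_ : ∀ i, IsMinimalWUG μ (v i) (g i) Ω) (_ : L1LocConv μ Ω v u),
    Filter.liminf (fun i => ∫⁻ x in Ω, g i x ∂μ) Filter.atTop

/-- The total variation `‖Du‖(A)` of `u` in an arbitrary set `A`:
`inf {‖Du‖(Ω) : Ω ⊇ A open}`. -/
def tv (μ : Measure X) (A : Set X) (u : X → ℝ) : ℝ≥0∞ :=
  ⨅ (Ω : Set X) (_ : IsOpen Ω) (_ : A ⊆ Ω), tvOpen μ Ω u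

/-- The perimeter `P(E, A) = ‖Dχ_E‖(A)` for arbitrary `A`. -/
def perim (μ : Measure X) (E A : Set X) : ℝ≥0∞ :=
  tv μ A (Set.indicator E (fun _ => (1 : ℝ)))

/-- The perimeter `P(E, Ω) = ‖Dχ_E‖(Ω)` for open `Ω`. -/
def perimOpen (μ : Measure X) (E Ω : Set X) : ℝ≥0∞ :=
  tvOpen μ Ω (Set.indicator E (fun _ => (1 : ℝ)))

/-- The measure `μ` is doubling with constant `Cd`. -/
def Doubling (μ : Measure X) (Cd : ℝ) : Prop :=
  1 ≤ Cd ∧ ∀ (x : X) (r : ℝ), 0 < r →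
    0 < μ (Metric.ball x (2 * r)) ∧
      μ (Metric.ball x (2 * r)) ≤ ENNReal.ofReal Cd * μ (Metric.ball x r) ∧
      μ (Metric.ball x r) < ∞

/-- The space supports a `(1,1)`-Poincaré inequality with constants `CP, lam`. -/
def Poincare (μ : Measure X) (CP lam : ℝ) : Prop :=
  1 ≤ CP ∧ 1 ≤ lam ∧ ∀ (x : X) (r : ℝ), 0 < r → ∀ (u : X → ℝ) (g : X → ℝ≥0∞),
    MemL1Loc μ Set.univ u → IsUpperGradient u g →
      ENNReal.ofReal (⨍ y in Metric.ball x r, |u y - ⨍ z in Metric.ball x r, u z ∂μ| ∂μ)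
        ≤ ENNReal.ofReal (CP * r) *
            ((∫⁻ y in Metric.ball x (lam * r), g y ∂μ) / μ (Metric.ball x (lam * r)))

/-- The restricted spherical Hausdorff content of codimension one. -/
def HR (μ : Measure X) (R : ℝ) (A : Set X) : ℝ≥0∞ :=
  ⨅ (c : ℕ → X) (r : ℕ → ℝ) (_ : ∀ i, 0 < r i ∧ r i ≤ R)
    (_ : A ⊆ ⋃ i, Metric.ball (c i) (r i)),
    ∑' i, μ (Metric.ball (c i) (r i)) / ENNReal.ofReal (r i)

/-- The codimension-one Hausdorff measure `H(A) = lim_{R → 0} H_R(A)`. -/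
def Hcodim (μ : Measure X) (A : Set X) : ℝ≥0∞ :=
  ⨆ (R : ℝ) (_ : 0 < R), HR μ R A

/-- The lower approximate limit `u^∧`. -/
def lowerApprox (μ : Measure X) (u : X → ℝ) (x : X) : EReal :=
  sSup ((fun t : ℝ => (t : EReal)) ''
    {t : ℝ | Filter.Tendsto
      (fun r => μ (Metric.ball x r ∩ {y | u y < t}) / μ (Metric.ball x r))
      (𝓝[>] (0 : ℝ)) (𝓝 0)})

/-- The upper approximate limit `u^∨`. -/
def upperApprox (μ : Measure X) (u : X → ℝ) (x : X) : EReal :=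
  sInf ((fun t : ℝ => (t : EReal)) ''
    {t : ℝ | Filter.Tendsto
      (fun r => μ (Metric.ball x r ∩ {y | t < u y}) / μ (Metric.ball x r))
      (𝓝[>] (0 : ℝ)) (𝓝 0)})

/-- `u ∈ BV_loc(X)`: `u ∈ L¹_loc(X)` with `‖Du‖(Ω') < ∞` for every bounded open `Ω'`. -/
def MemBVLoc (μ : Measure X) (u : X → ℝ) : Prop :=
  MemL1Loc μ Set.univ u ∧
    ∀ Ω' : Set X, IsOpen Ω' → Bornology.IsBounded Ω' → tvOpen μ Ω' u < ∞

/-- The measure-theoretic interior `I_E`. -/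
def mInterior (μ : Measure X) (E : Set X) : Set X :=
  {x | Filter.Tendsto (fun r => μ (Metric.ball x r \ E) / μ (Metric.ball x r))
    (𝓝[>] (0 : ℝ)) (𝓝 0)}

/-- The measure-theoretic exterior `O_E`. -/
def mExterior (μ : Measure X) (E : Set X) : Set X :=
  {x | Filter.Tendsto (fun r => μ (Metric.ball x r ∩ E) / μ (Metric.ball x r))
    (𝓝[>] (0 : ℝ)) (𝓝 0)}

/-- The measure-theoretic boundary `∂*E`: the points where both `E` and its complement
have positive upper density. -/
def mBoundary (μ : Measure X) (E : Set X) : Set X :=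
  {x | 0 < Filter.limsup (fun r => μ (Metric.ball x r ∩ E) / μ (Metric.ball x r))
        (𝓝[>] (0 : ℝ)) ∧
       0 < Filter.limsup (fun r => μ (Metric.ball x r \ E) / μ (Metric.ball x r))
        (𝓝[>] (0 : ℝ))}

/-!
On open sets, `≥` in the coarea formula comes from superposing ramps over the levels of a function,
and `≤` from approximating the function by staircases built on well-chosen levels. Both use that the
`L¹_loc` approximations defining `‖Du‖` can be patched by Lipschitz partitions of unity into global
ones without increasing the energy.

For a `1`-quasiopen `U`, choose open `G i` of capacity tending to `0` with `U ∪ G i` open. The open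
case on `(U ∪ G i) ∩ Ω` proves the claim up to `∫ P({u > t}, Ω ∩ G i) dt`, so by dominated
convergence it suffices that `P(E, Ω ∩ G i) → 0` for a set `E` of finite perimeter in `Ω`. For this,
multiply `χ_E` by `1 - w`, where `w` is a locally Lipschitz cutoff of small energy that is `1` on
all of `G i` but a part of small perimeter: this moves `χ_E` little in `L¹` and removes its
perimeter where `w = 1`, so lower semicontinuity of the perimeter bounds what was removed. The
cutoff is needed in locally Lipschitz form, whereas capacity only provides Newtonian functions. It
is obtained by measuring the distance to the set along discrete chains weighted by a lower
semicontinuous upper gradient; chains of vanishing mesh converge by Arzelà–Ascoli to curves, along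
which the upper gradient inequality gives the required bound.
-/

section RealLine

lemma norm_deriv_le_of_eventually_abs_sub_le {f F : ℝ → ℝ} {F' t : ℝ} (hF : HasDerivAt F F' t)
    (h : ∀ᶠ s in 𝓝[>] t, |f s - f t| ≤ F s - F t) : ‖deriv f t‖ ≤ F' := by
  have tendsto_slope : ∀ {φ : ℝ → ℝ} {φ' : ℝ}, HasDerivAt φ φ' t →
      Tendsto (slope φ t) (𝓝[>] t) (𝓝 φ') := fun hφ =>
    (hasDerivAt_iff_tendsto_slope.1 hφ).mono_left (nhdsWithin_mono t fun _ hs => ne_of_gt hs)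
  by_cases hf : DifferentiableAt ℝ f t
  · refine le_of_tendsto_of_tendsto (tendsto_slope hf.hasDerivAt).norm (tendsto_slope hF) ?_
    filter_upwards [h, self_mem_nhdsWithin] with s hs hts
    have : 0 < s - t := sub_pos.2 hts
    rw [slope_def_field, slope_def_field, norm_div, Real.norm_eq_abs, Real.norm_eq_abs,
      abs_of_pos this]
    gcongr
  · rw [deriv_zero_of_not_differentiableAt hf, norm_zero]
    refine ge_of_tendsto (tendsto_slope hF) ?_
    filter_upwards [h, self_mem_nhdsWithin] with s hs hts
    rw [slope_def_field]
    exact div_nonneg ((abs_nonneg _).trans hs) (sub_pos.2 hts).le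

lemma ae_enorm_deriv_le_of_abs_sub_le_setLIntegral {f : ℝ → ℝ} {k : ℝ → ℝ≥0∞} (hk : Measurable k)
    {a b : ℝ} (hab : a ≤ b) (hfin : ∫⁻ x in Icc a b, k x ≠ ∞) {W : Set ℝ} (hW : IsOpen W)
    (h : ∀ t s, t ≤ s → Icc t s ⊆ W ∩ Icc a b →
      ENNReal.ofReal |f s - f t| ≤ ∫⁻ x in Icc t s, k x) :
    ∀ᵐ t, t ∈ Ioo a b → t ∈ W → ‖deriv f t‖ₑ ≤ k t := by
  have hint : IntervalIntegrable (fun x => (k x).toReal) volume a b := by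
    rw [intervalIntegrable_iff_integrableOn_Icc_of_le hab]
    exact integrable_toReal_of_lintegral_ne_top hk.aemeasurable hfin
  have hk_lt_top : ∀ᵐ t, t ∈ Icc a b → k t < ∞ :=
    (ae_restrict_iff' measurableSet_Icc).1 (ae_lt_top hk hfin)
  filter_upwards [hint.ae_hasDerivAt_integral, hk_lt_top] with t hderiv hkt ht htW
  have htI : t ∈ Icc a b := Ioo_subset_Icc_self ht
  rw [← ofReal_norm, ENNReal.ofReal_le_iff_le_toReal (hkt htI).ne]
  refine norm_deriv_le_of_eventually_abs_sub_le
    (hderiv (by rwa [uIcc_of_le hab]) a left_mem_uIcc) ?_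
  obtain ⟨c, htc, hc⟩ := (mem_nhdsGE_iff_exists_Icc_subset).1
    (mem_nhdsWithin_of_mem_nhds ((hW.inter isOpen_Ioo).mem_nhds ⟨htW, ht⟩))
  filter_upwards [Ioc_mem_nhdsGT htc] with s hs
  have hsub : Icc t s ⊆ W ∩ Icc a b := (Icc_subset_Icc_right hs.2).trans
    (hc.trans (inter_subset_inter_right _ Ioo_subset_Icc_self))
  have hfin' : ∫⁻ x in Icc t s, k x ≠ ∞ :=
    ne_top_of_le_ne_top hfin (lintegral_mono_set fun x hx => (hsub hx).2)
  have hint_mono : ∀ r ∈ Icc a b, IntervalIntegrable (fun x => (k x).toReal) volume a r :=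
    fun r hr => hint.mono_set (by
      rw [uIcc_of_le hr.1, uIcc_of_le hab]; exact Icc_subset_Icc_right hr.2)
  rw [intervalIntegral.integral_interval_sub_left
      (hint_mono s (hsub (right_mem_Icc.2 hs.1.le)).2) (hint_mono t htI),
    intervalIntegral.integral_of_le hs.1.le, ← integral_Icc_eq_integral_Ioc,
    integral_toReal hk.aemeasurable (ae_lt_top hk hfin'), ← ENNReal.ofReal_le_iff_le_toReal hfin']
  exact h t s hs.1.le hsub

lemma ae_differentiableAt_of_locallyLipschitzOn {f : ℝ → ℝ} {W : Set ℝ} (hW : IsOpen W)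
    (hf : LocallyLipschitzOn W f) : ∀ᵐ t, t ∈ W → DifferentiableAt ℝ f t := by
  rw [ae_iff]
  refine measure_null_of_locally_null _ fun t ht => ?_
  simp only [mem_ofPred_eq, Classical.not_imp] at ht
  obtain ⟨K, s, hs, hK⟩ := hf ht.1
  rw [hW.nhdsWithin_eq ht.1] at hs
  refine ⟨_ ∩ interior s, inter_mem_nhdsWithin _ (interior_mem_nhds.2 hs),
    measure_mono_null ?_ (ae_iff.1 (hK.mono interior_subset).ae_differentiableWithinAt_of_mem_real)⟩
  rintro a ⟨hna, has⟩ ha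
  exact hna fun _ => (ha has).differentiableAt (isOpen_interior.mem_nhds has)

end RealLine

section LocallyLipschitz

variable {Y : Type*} [MetricSpace Y] {v w : Y → ℝ} {O O' : Set Y}

lemma locLipOn_iff_locallyLipschitzOn : LocLipOn v O ↔ LocallyLipschitzOn O v := by
  refine forall₂_congr fun x _ => ⟨?_, ?_⟩
  · rintro ⟨r, hr, K, hK⟩
    exact ⟨K, _, inter_mem_nhdsWithin _ (ball_mem_nhds x hr), hK⟩
  · rintro ⟨K, s, hs, hK⟩
    obtain ⟨r, hr, hrs⟩ := Metric.mem_nhdsWithin_iff.1 hs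
    exact ⟨r, hr, K, hK.mono (inter_comm O _ ▸ hrs)⟩

lemma LocLipOn.mono (h : LocLipOn v O) (hs : O' ⊆ O) : LocLipOn v O' :=
  locLipOn_iff_locallyLipschitzOn.2 ((locLipOn_iff_locallyLipschitzOn.1 h).mono hs)

lemma LocLipOn.continuousOn (h : LocLipOn v O) : ContinuousOn v O :=
  (locLipOn_iff_locallyLipschitzOn.1 h).continuousOn

lemma LocLipOn.congr (h : LocLipOn v O) (he : EqOn v w O) : LocLipOn w O := fun x hx => by
  obtain ⟨r, hr, K, hK⟩ := h x hx
  exact ⟨r, hr, K, fun y hy z hz => by rw [← he hy.1, ← he hz.1]; exact hK hy hz⟩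

lemma locLipOn_of_lipschitzWith {K : ℝ≥0} (h : LipschitzWith K v) (O : Set Y) : LocLipOn v O :=
  fun _ _ => ⟨1, one_pos, K, h.lipschitzOnWith⟩

lemma LocLipOn.add (h : LocLipOn v O) (h' : LocLipOn w O) : LocLipOn (fun x => v x + w x) O := by
  rw [locLipOn_iff_locallyLipschitzOn] at *
  exact LocallyLipschitzOn.add h h'

lemma LocLipOn.mul (h : LocLipOn v O) (h' : LocLipOn w O) : LocLipOn (fun x => v x * w x) O := by
  rw [locLipOn_iff_locallyLipschitzOn, locallyLipschitzOn_iff_restrict] at *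
  exact (contDiff_mul (𝕜 := ℝ) (𝔸 := ℝ)).locallyLipschitz.comp (h.prodMk h')

lemma LocLipOn.sum {ι : Type*} (s : Finset ι) {v : ι → Y → ℝ} (h : ∀ i ∈ s, LocLipOn (v i) O) :
    LocLipOn (fun x => ∑ i ∈ s, v i x) O := by
  classical
  induction s using Finset.induction_on with
  | empty => simpa using locLipOn_of_lipschitzWith (LipschitzWith.const (0 : ℝ)) O
  | insert a s ha ih =>
    simp only [Finset.sum_insert ha]
    exact (h a (Finset.mem_insert_self a s)).add fun x hx =>
      ih (fun i hi => h i (Finset.mem_insert_of_mem hi)) x hx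

lemma LocLipOn.comp_lipschitzWith (h : LocLipOn v O) {K : ℝ≥0} {c : ℝ → Y}
    (hc : LipschitzWith K c) : LocallyLipschitzOn (c ⁻¹' O) (fun s => v (c s)) := fun t ht => by
  obtain ⟨r, hr, L, hL⟩ := h (c t) ht
  refine ⟨L * K, _, inter_mem_nhdsWithin _ (hc.continuous.continuousAt.preimage_mem_nhds
    (ball_mem_nhds (c t) hr)), hL.comp hc.lipschitzOnWith fun s hs => hs⟩

end LocallyLipschitz

section Curves

variable {Y : Type*} [MetricSpace Y]

/-- The extension of a curve to the real line that is constant outside the parameter interval;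
it is globally `1`-Lipschitz, so the calculus of functions on `ℝ` applies to it. -/
def Curve.extend (γ : Curve Y) : ℝ → Y :=
  IccExtend γ.len_nonneg ((Icc 0 γ.len).domRestrict γ.toFun)

lemma Curve.extend_of_mem (γ : Curve Y) {t : ℝ} (ht : t ∈ Icc 0 γ.len) :
    γ.extend t = γ.toFun t :=
  IccExtend_of_mem _ _ ht

lemma Curve.lipschitzWith_extend (γ : Curve Y) : LipschitzWith 1 γ.extend := by
  have h := γ.lip.to_restrict.comp (LipschitzWith.projIcc γ.len_nonneg)
  rwa [mul_one] at h

lemma Curve.continuous_extend (γ : Curve Y) : Continuous γ.extend :=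
  γ.lipschitzWith_extend.continuous

lemma Curve.In.extend_mem {γ : Curve Y} {A : Set Y} (hγ : γ.In A) {t : ℝ}
    (ht : t ∈ Icc 0 γ.len) : γ.extend t ∈ A :=
  γ.extend_of_mem ht ▸ hγ t ht

lemma Curve.integral_eq_setLIntegral_extend (γ : Curve Y) (g : Y → ℝ≥0∞) :
    γ.integral g = ∫⁻ t in Icc 0 γ.len, g (γ.extend t) :=
  setLIntegral_congr_fun measurableSet_Icc fun t ht => by simp only [γ.extend_of_mem ht]

lemma ugIneq_iff_extend {v : Y → ℝ} {g : Y → ℝ≥0∞} {γ : Curve Y} :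
    UGIneq v g γ ↔ ENNReal.ofReal |v (γ.extend γ.len) - v (γ.extend 0)| ≤
      ∫⁻ t in Icc 0 γ.len, g (γ.extend t) := by
  rw [UGIneq, γ.integral_eq_setLIntegral_extend, abs_sub_comm,
    γ.extend_of_mem (left_mem_Icc.2 γ.len_nonneg), γ.extend_of_mem (right_mem_Icc.2 γ.len_nonneg)]

/-- The piece of a curve over the parameter interval `[a, b]`, reparametrized to start at `0`. -/
def Curve.subcurve (γ : Curve Y) {a b : ℝ} (hab : a ≤ b) : Curve Y where
  len := b - a
  len_nonneg := sub_nonneg.2 hab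
  toFun s := γ.extend (s + a)
  lip := by
    have h := γ.lipschitzWith_extend.comp (LipschitzWith.id.add (LipschitzWith.const a))
    rw [add_zero, mul_one] at h
    exact h.lipschitzOnWith

lemma Curve.integral_subcurve (γ : Curve Y) {a b : ℝ} (hab : a ≤ b) (g : Y → ℝ≥0∞) :
    (γ.subcurve hab).integral g = ∫⁻ t in Icc a b, g (γ.extend t) := by
  rw [← (measurePreserving_add_right (volume : Measure ℝ) a).setLIntegral_comp_preimage_emb
    (MeasurableEquiv.addRight a).measurableEmbedding (fun t => g (γ.extend t)) (Icc a b)]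
  simp [Curve.integral, Curve.subcurve]

/-- The derivative form of the upper gradient inequality along `γ`: at almost every parameter at
which `γ` lies in `O`, the derivative of `v` along `γ` is bounded by `g`. -/
def DerivIneq (v : Y → ℝ) (g : Y → ℝ≥0∞) (O : Set Y) (γ : Curve Y) : Prop :=
  ∀ᵐ t : ℝ, t ∈ Ioo 0 γ.len → γ.extend t ∈ O →
    ‖deriv (fun s => v (γ.extend s)) t‖ₑ ≤ g (γ.extend t)

lemma DerivIneq.ugIneq {v : Y → ℝ} {g : Y → ℝ≥0∞} {O : Set Y} {γ : Curve Y}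
    (h : DerivIneq v g O γ) (hv : LocLipOn v O) (hγ : γ.In O) : UGIneq v g γ := by
  obtain ⟨K, hK⟩ := ((hv.comp_lipschitzWith γ.lipschitzWith_extend).mono
    fun t ht => hγ.extend_mem ht).exists_lipschitzOnWith_of_compact isCompact_Icc
  have hac : AbsolutelyContinuousOnInterval (fun s => v (γ.extend s)) 0 γ.len := by
    apply LipschitzOnWith.absolutelyContinuousOnInterval (K := K)
    rwa [uIcc_of_le γ.len_nonneg]
  rw [ugIneq_iff_extend, ← hac.integral_deriv_eq_sub,
    intervalIntegral.integral_of_le γ.len_nonneg, ← Real.norm_eq_abs, ofReal_norm]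
  calc ‖∫ t in Ioc 0 γ.len, deriv (fun s => v (γ.extend s)) t‖ₑ
      ≤ ∫⁻ t in Ioc 0 γ.len, ‖deriv (fun s => v (γ.extend s)) t‖ₑ :=
        enorm_integral_le_lintegral_enorm _
    _ = ∫⁻ t in Ioo 0 γ.len, ‖deriv (fun s => v (γ.extend s)) t‖ₑ :=
        (setLIntegral_congr Ioo_ae_eq_Ioc).symm
    _ ≤ ∫⁻ t in Ioo 0 γ.len, g (γ.extend t) := by
        refine setLIntegral_mono_ae' measurableSet_Ioo ?_
        filter_upwards [h] with t hderiv ht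
        exact hderiv ht (hγ.extend_mem (Ioo_subset_Icc_self ht))
    _ = ∫⁻ t in Icc 0 γ.len, g (γ.extend t) := setLIntegral_congr Ioo_ae_eq_Icc

lemma DerivIneq.of_lipschitzWith {v : Y → ℝ} {K : ℝ≥0} (h : LipschitzWith K v) (O : Set Y)
    (γ : Curve Y) : DerivIneq v (fun _ => K) O γ :=
  Eventually.of_forall fun t _ _ => by
    have hlip : LipschitzWith K (fun s => v (γ.extend s)) := by
      have hcomp := h.comp γ.lipschitzWith_extend
      rwa [mul_one] at hcomp
    rw [← ofReal_norm, ← ENNReal.ofReal_coe_nnreal]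
    exact ENNReal.ofReal_le_ofReal (norm_deriv_le_of_lipschitz hlip)

end Curves

section Modulus

variable {Y : Type*} [MetricSpace Y] [MeasurableSpace Y] {μ : Measure Y}

lemma ZeroMod.mono {Γ Γ' : Set (Curve Y)} (h : ZeroMod μ Γ) (hs : Γ' ⊆ Γ) : ZeroMod μ Γ' := by
  obtain ⟨ρ, hρm, hρ, htop⟩ := h
  exact ⟨ρ, hρm, hρ, fun γ hγ => htop γ (hs hγ)⟩

lemma zeroMod_sUnion {S : Set (Set (Curve Y))} (hS : S.Countable) (h : ∀ Γ ∈ S, ZeroMod μ Γ) :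
    ZeroMod μ (⋃₀ S) := by
  have := hS.to_subtype
  choose ρ hρm hρ htop using fun Γ : S => h Γ Γ.2
  obtain ⟨δ, hδ, hsum⟩ := ENNReal.exists_pos_tsum_mul_lt_of_countable one_ne_zero
    (fun Γ => ∫⁻ x, ρ Γ x ∂μ) (fun Γ => (hρ Γ).ne)
  refine ⟨fun x => ∑' Γ, δ Γ * ρ Γ x, Measurable.tsum fun Γ => (hρm Γ).const_mul _, ?_, ?_⟩
  · rw [lintegral_tsum fun Γ => ((hρm Γ).const_mul _).aemeasurable]
    simp_rw [lintegral_const_mul _ (hρm _), mul_comm (δ _ : ℝ≥0∞)]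
    exact hsum.trans ENNReal.one_lt_top
  · rintro γ ⟨Γ, hΓ, hγ⟩
    have hρ_top : ∫⁻ t in Icc 0 γ.len, ρ ⟨Γ, hΓ⟩ (γ.extend t) = ∞ :=
      γ.integral_eq_setLIntegral_extend _ ▸ htop ⟨Γ, hΓ⟩ γ hγ
    rw [γ.integral_eq_setLIntegral_extend, eq_top_iff]
    calc ∞ = ∫⁻ t in Icc 0 γ.len, δ ⟨Γ, hΓ⟩ * ρ ⟨Γ, hΓ⟩ (γ.extend t) := by
          rw [lintegral_const_mul' _ _ ENNReal.coe_ne_top, hρ_top,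
            ENNReal.mul_top (ENNReal.coe_ne_zero.2 (hδ _).ne')]
      _ ≤ _ := lintegral_mono fun t => ENNReal.le_tsum (f := fun Γ => δ Γ * ρ Γ (γ.extend t)) _

/-- The filter of sets of curves with complement of zero `1`-modulus, so that
`∀ᶠ γ in curveAE μ, p γ` says that `p` holds along `1`-almost every curve. -/
def curveAE (μ : Measure Y) : Filter (Curve Y) :=
  Filter.ofCountableUnion {Γ | ZeroMod μ Γ} (fun _ hS h => zeroMod_sUnion hS h)
    fun _ h _ hs => ZeroMod.mono h hs

instance : CountableInterFilter (curveAE μ) := countableInter_ofCountableUnion _ _ _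

lemma eventually_curveAE {p : Curve Y → Prop} :
    (∀ᶠ γ in curveAE μ, p γ) ↔ ZeroMod μ {γ | ¬ p γ} := Iff.rfl

lemma eventually_curveAE_integral_ne_top {ρ : Y → ℝ≥0∞} (hρm : Measurable ρ)
    (hρ : ∫⁻ x, ρ x ∂μ ≠ ∞) : ∀ᶠ γ in curveAE μ, γ.integral ρ ≠ ∞ :=
  eventually_curveAE.2 ⟨ρ, hρm, hρ.lt_top, fun _ hγ => not_not.1 hγ⟩

lemma IsWeakUpperGradientOn.eventually_subcurve {O : Set Y} {v : Y → ℝ} {g : Y → ℝ≥0∞}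
    (h : IsWeakUpperGradientOn μ v g O) :
    ∀ᶠ γ in curveAE μ, ∀ (a b : ℝ) (hab : a ≤ b), Icc a b ⊆ γ.extend ⁻¹' O ∩ Icc 0 γ.len →
      UGIneq v g (γ.subcurve hab) := by
  obtain ⟨ρ, hρm, hρ, htop⟩ := h.2
  filter_upwards [eventually_curveAE_integral_ne_top hρm hρ.ne] with γ hγ a b hab hsub
  by_contra hno
  have hin : (γ.subcurve hab).In O := fun t ht =>
    (hsub ⟨le_add_of_nonneg_left ht.1, le_sub_iff_add_le.1 ht.2⟩).1
  have hle : (γ.subcurve hab).integral ρ ≤ γ.integral ρ := by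
    rw [γ.integral_subcurve, γ.integral_eq_setLIntegral_extend]
    exact lintegral_mono_set fun t ht => (hsub ht).2
  exact hγ (top_le_iff.1 (htop _ ⟨hin, hno⟩ ▸ hle))

lemma IsWeakUpperGradientOn.mono_set {O O' : Set Y} {v : Y → ℝ} {g : Y → ℝ≥0∞}
    (h : IsWeakUpperGradientOn μ v g O) (hs : O' ⊆ O) : IsWeakUpperGradientOn μ v g O' :=
  ⟨h.1, h.2.mono fun _ hγ => ⟨fun t ht => hs (hγ.1 t ht), hγ.2⟩⟩

end Modulus

section DerivUpperGradient

variable {Y : Type*} [MetricSpace Y] [MeasurableSpace Y]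

/-- The derivative form of the weak upper gradient property: along `1`-almost every curve the
derivative of `v` is bounded by `g` wherever the curve lies in `O`. Unlike the integrated form it
refers to arbitrary curves and is local in `O`. -/
def IsDerivUpperGradientOn (μ : Measure Y) (v : Y → ℝ) (g : Y → ℝ≥0∞) (O : Set Y) : Prop :=
  ∀ᶠ γ in curveAE μ, DerivIneq v g O γ

variable {μ : Measure Y} {v w : Y → ℝ} {g : Y → ℝ≥0∞} {O O' : Set Y}

lemma IsDerivUpperGradientOn.isWeakUpperGradientOn (h : IsDerivUpperGradientOn μ v g O)
    (hv : LocLipOn v O) (hg : AEMeasurable g μ) : IsWeakUpperGradientOn μ v g O :=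
  ⟨hg, ZeroMod.mono (eventually_curveAE.1 h) fun _ hγ h' => hγ.2 (h'.ugIneq hv hγ.1)⟩

lemma isDerivUpperGradientOn_of_lipschitzWith {K : ℝ≥0} (h : LipschitzWith K v) (O : Set Y) :
    IsDerivUpperGradientOn μ v (fun _ => K) O :=
  Eventually.of_forall fun γ => DerivIneq.of_lipschitzWith h O γ

lemma IsDerivUpperGradientOn.mono_set (h : IsDerivUpperGradientOn μ v g O) (hs : O' ⊆ O) :
    IsDerivUpperGradientOn μ v g O' := by
  filter_upwards [h] with γ hγ
  filter_upwards [hγ] with t ht hlen htO using ht hlen (hs htO)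

lemma IsDerivUpperGradientOn.iInf {ι : Type*} [Countable ι] {g : ι → Y → ℝ≥0∞}
    (h : ∀ i, IsDerivUpperGradientOn μ v (g i) O) :
    IsDerivUpperGradientOn μ v (fun x => ⨅ i, g i x) O := by
  filter_upwards [eventually_countable_forall.2 h] with γ hγ
  filter_upwards [ae_all_iff.2 hγ] with t ht hlen htO
  exact le_iInf fun i => ht i hlen htO

lemma IsDerivUpperGradientOn.iUnion {ι : Type*} [Countable ι] {O : ι → Set Y}
    (h : ∀ i, IsDerivUpperGradientOn μ v g (O i)) : IsDerivUpperGradientOn μ v g (⋃ i, O i) := by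
  filter_upwards [eventually_countable_forall.2 h] with γ hγ
  filter_upwards [ae_all_iff.2 hγ] with t ht hlen htO
  obtain ⟨i, hi⟩ := mem_iUnion.1 htO
  exact ht i hlen hi

/-- Pointwise calculus rules for derivatives along curves transfer to gradients. -/
lemma IsDerivUpperGradientOn.of_forall_deriv {ι : Type*} [Countable ι] {v : ι → Y → ℝ}
    {g : ι → Y → ℝ≥0∞} {Oi : ι → Set Y} (hOi : ∀ i, IsOpen (Oi i))
    (hv : ∀ i, LocLipOn (v i) (Oi i)) (hg : ∀ i, IsDerivUpperGradientOn μ (v i) (g i) (Oi i))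
    {gw : Y → ℝ≥0∞}
    (hw : ∀ c : ℝ → Y, LipschitzWith 1 c → ∀ t, c t ∈ O →
      (∀ i, c t ∈ Oi i → DifferentiableAt ℝ (fun s => v i (c s)) t ∧
        ‖deriv (fun s => v i (c s)) t‖ₑ ≤ g i (c t)) →
      ‖deriv (fun s => w (c s)) t‖ₑ ≤ gw (c t)) : IsDerivUpperGradientOn μ w gw O := by
  filter_upwards [eventually_countable_forall.2 hg] with γ hγ
  have hdiff := fun i => ae_differentiableAt_of_locallyLipschitzOn
    ((hOi i).preimage γ.continuous_extend) ((hv i).comp_lipschitzWith γ.lipschitzWith_extend)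
  filter_upwards [ae_all_iff.2 hγ, ae_all_iff.2 hdiff] with t hderiv hdiff ht htO
  exact hw γ.extend γ.lipschitzWith_extend t htO fun i hi => ⟨hdiff i hi, hderiv i ht hi⟩

end DerivUpperGradient

section MinimalGradient

lemma IsWeakUpperGradientOn.isDerivUpperGradientOn {μ : Measure X} {v : X → ℝ} {g g' : X → ℝ≥0∞}
    {O : Set X} (h : IsWeakUpperGradientOn μ v g O)
    (hO : IsOpen O) (hg' : Measurable g') (hle : g ≤ g') (hfin : ∫⁻ x in O, g' x ∂μ ≠ ∞) :
    IsDerivUpperGradientOn μ v g' O := by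
  have hm : Measurable (O.indicator g') := hg'.indicator hO.measurableSet
  rw [← lintegral_indicator hO.measurableSet] at hfin
  filter_upwards [h.eventually_subcurve, eventually_curveAE_integral_ne_top hm hfin] with γ hsub hγ
  rw [γ.integral_eq_setLIntegral_extend] at hγ
  have hderiv := ae_enorm_deriv_le_of_abs_sub_le_setLIntegral (f := fun s => v (γ.extend s))
    (hm.comp γ.continuous_extend.measurable) γ.len_nonneg hγ (hO.preimage γ.continuous_extend)
    fun t s hts hO' => ?_
  · filter_upwards [hderiv] with t ht hlen htO
    simpa only [Function.comp_apply, indicator_of_mem htO] using ht hlen htO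
  have hug := hsub t s hts hO'
  rw [UGIneq, γ.integral_subcurve, abs_sub_comm] at hug
  simp only [Curve.subcurve, zero_add, sub_add_cancel] at hug
  refine hug.trans (setLIntegral_mono' measurableSet_Icc fun a ha => ?_)
  rw [Function.comp_apply, indicator_of_mem (mem_preimage.1 (hO' ha).1)]
  exact hle _

lemma exists_measurable_ge_ae_eq {α : Type*} [MeasurableSpace α] {μ : Measure α} {g : α → ℝ≥0∞}
    (hg : AEMeasurable g μ) : ∃ g', Measurable g' ∧ g ≤ g' ∧ g' =ᵐ[μ] g := by
  classical
  obtain ⟨N, hsub, hN, hN0⟩ := exists_measurable_superset_of_null (ae_iff.1 hg.ae_eq_mk)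
  refine ⟨N.piecewise (fun _ => ∞) (hg.mk g), measurable_const.piecewise hN hg.measurable_mk,
    fun x => ?_, ?_⟩
  · by_cases hx : x ∈ N
    · simp [hx]
    · rw [piecewise_eq_of_notMem _ _ _ hx, not_not.1 fun hne => hx (hsub hne)]
  · filter_upwards [measure_eq_zero_iff_ae_notMem.1 hN0, hg.ae_eq_mk] with x hx hgx
    rw [piecewise_eq_of_notMem _ _ _ hx, hgx]

lemma ae_le_of_forall_lintegral_inv_le {α : Type*} [MeasurableSpace α] {ν : Measure α}
    [IsFiniteMeasure ν] {f h : α → ℝ≥0∞} (hf : Measurable f) (hh : Measurable h)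
    (hle : ∫⁻ x, (1 + min (f x) (h x))⁻¹ ∂ν ≤ ∫⁻ x, (1 + f x)⁻¹ ∂ν) : ∀ᵐ x ∂ν, f x ≤ h x := by
  have hfin : ∫⁻ x, (1 + f x)⁻¹ ∂ν ≠ ∞ := by
    refine ne_top_of_le_ne_top (measure_ne_top ν univ) ?_
    rw [← lintegral_one]
    exact lintegral_mono fun x => ENNReal.inv_le_one.2 le_self_add
  have heq := ae_eq_of_ae_le_of_lintegral_le (f := fun x => (1 + f x)⁻¹)
    (g := fun x => (1 + min (f x) (h x))⁻¹)
    (Eventually.of_forall fun x => by dsimp only; gcongr; exact min_le_left _ _)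
    hfin (measurable_const.add (hf.min hh)).inv.aemeasurable hle
  filter_upwards [heq] with x hx
  exact left_eq_inf.1 ((ENNReal.add_right_inj ENNReal.one_ne_top).1 (inv_injective hx))

lemma exists_mem_forall_ae_le {α : Type*} [MeasurableSpace α] {ν : Measure α} [SFinite ν]
    {S : Set (α → ℝ≥0∞)} (hne : S.Nonempty) (hm : ∀ f ∈ S, Measurable f)
    (hS : ∀ f : ℕ → α → ℝ≥0∞, (∀ n, f n ∈ S) → (fun x => ⨅ n, f n x) ∈ S) :
    ∃ f ∈ S, ∀ h ∈ S, ∀ᵐ x ∂ν, f x ≤ h x := by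
  let F : (α → ℝ≥0∞) → ℝ≥0∞ := fun f => ∫⁻ x, (1 + f x)⁻¹ ∂ν.toFinite
  obtain ⟨a, -, ha, haS⟩ := exists_seq_tendsto_sSup (hne.image F) (OrderTop.bddAbove _)
  choose f hfS hfa using haS
  have hmem : (fun x => ⨅ n, f n x) ∈ S := hS f hfS
  have hmax : ∀ h ∈ S, F h ≤ F fun x => ⨅ n, f n x := fun h hh => by
    refine (le_sSup (mem_image_of_mem F hh)).trans (le_of_tendsto' ha fun n => ?_)
    rw [← hfa n]
    refine lintegral_mono fun x => ?_
    dsimp only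
    gcongr
    exact iInf_le _ n
  refine ⟨_, hmem, fun h hh => (absolutelyContinuous_toFinite ν).ae_le
    (ae_le_of_forall_lintegral_inv_le (hm _ hmem) (hm h hh) ?_)⟩
  have hmin := hS (fun n => if n = 0 then fun x => ⨅ n, f n x else h)
    (fun n => by split_ifs <;> [exact hmem; exact hh])
  refine (lintegral_mono fun x => ?_).trans (hmax _ hmin)
  gcongr
  refine le_min (iInf_le_of_le 0 (by simp)) (iInf_le_of_le 1 (by simp))

variable [SecondCountableTopology X] {μ : Measure X} {O : Set X} {v : X → ℝ} {g : X → ℝ≥0∞}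

lemma IsWeakUpperGradientOn.exists_isDerivUpperGradientOn (h : IsWeakUpperGradientOn μ v g O)
    (hO : IsOpen O) (hfin : LIntegrableLocOn μ g O) :
    ∃ g', Measurable g' ∧ g' =ᵐ[μ] g ∧ IsDerivUpperGradientOn μ v g' O := by
  choose! r hr hfin using hfin
  obtain ⟨t, htO, htc, hcov⟩ := TopologicalSpace.countable_cover_nhdsWithin (s := O)
    (f := fun x => ball x (r x)) fun x hx => mem_nhdsWithin_of_mem_nhds (ball_mem_nhds x (hr x hx))
  have := htc.to_subtype
  obtain ⟨g', hg', hle, hae⟩ := exists_measurable_ge_ae_eq h.1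
  have hball : ∀ x : t, IsDerivUpperGradientOn μ v g' (O ∩ ball x (r x)) := fun x =>
    (h.mono_set inter_subset_left).isDerivUpperGradientOn (hO.inter isOpen_ball) hg' hle <| by
      rw [lintegral_congr_ae (ae_restrict_of_ae hae)]
      exact (hfin x (htO x.2)).ne
  refine ⟨g', hg', hae, (IsDerivUpperGradientOn.iUnion hball).mono_set fun x hx => ?_⟩
  obtain ⟨y, hy, hxy⟩ := mem_iUnion₂.1 (hcov hx)
  exact mem_iUnion.2 ⟨⟨y, hy⟩, hx, hxy⟩

lemma IsDerivUpperGradientOn.exists_isMinimalWUG [SFinite μ] (h : IsDerivUpperGradientOn μ v g O)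
    (hg : Measurable g) (hO : IsOpen O) (hv : LocLipOn v O) :
    ∃ gm, IsMinimalWUG μ v gm O ∧ ∀ᵐ x ∂μ.restrict O, gm x ≤ g x := by
  obtain ⟨gm, ⟨hgm, hgmd⟩, hmin⟩ := exists_mem_forall_ae_le (ν := μ.restrict O)
    (S := {g | Measurable g ∧ IsDerivUpperGradientOn μ v g O}) ⟨g, hg, h⟩ (fun _ hf => hf.1)
    fun f hf => ⟨Measurable.iInf fun n => (hf n).1, .iInf fun n => (hf n).2⟩
  refine ⟨gm, ⟨hgmd.isWeakUpperGradientOn hv hgm.aemeasurable, fun g' hg' hfin => ?_⟩,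
    hmin g ⟨hg, h⟩⟩
  obtain ⟨g'', hm, hae, hderiv⟩ := hg'.exists_isDerivUpperGradientOn hO hfin
  filter_upwards [hmin g'' ⟨hm, hderiv⟩, ae_restrict_of_ae hae] with x hle heq
  rwa [← heq]

end MinimalGradient

section RunningMin

variable {α : Type*}

/-- The minimum of `1` and the first `j` functions of the sequence `θ`. -/
def runningMin (θ : ℕ → α → ℝ) : ℕ → α → ℝ
  | 0, _ => 1
  | j + 1, y => min (runningMin θ j y) (θ j y)

lemma antitone_runningMin (θ : ℕ → α → ℝ) (y : α) : Antitone fun j => runningMin θ j y :=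
  antitone_nat_of_succ_le fun _ => min_le_left _ _

lemma runningMin_nonneg {θ : ℕ → α → ℝ} (hθ : ∀ j y, 0 ≤ θ j y) (j : ℕ) (y : α) :
    0 ≤ runningMin θ j y := by
  induction j with
  | zero => exact zero_le_one
  | succ j ih => exact le_min ih (hθ j y)

end RunningMin

section LipschitzPartition

variable {Y : Type*} [MetricSpace Y]

/-- A countable Lipschitz partition of unity on `A` subordinate to the sets `B j`: near each point
of `A` only finitely many of the `φ j` are nonzero and they sum to one. -/
structure IsLipschitzPartition (A : Set Y) (B : ℕ → Set Y) (φ : ℕ → Y → ℝ) (C : ℕ → ℝ≥0) :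
    Prop where
  nonneg : ∀ j y, 0 ≤ φ j y
  lipschitzWith : ∀ j, LipschitzWith (C j) (φ j)
  eventually_eq_zero : ∀ j, ∀ y ∉ B j, ∀ᶠ z in 𝓝 y, φ j z = 0
  sum_range_le_one : ∀ J y, ∑ j ∈ Finset.range J, φ j y ≤ 1
  locally_sum_eq_one : ∀ y ∈ A, ∃ J, ∀ᶠ z in 𝓝 y,
    (∀ j ≥ J, φ j z = 0) ∧ ∑ j ∈ Finset.range J, φ j z = 1

section Telescope

variable {θ : ℕ → Y → ℝ}

lemma exists_lipschitzWith_runningMin (hθ : ∀ j, ∃ K, LipschitzWith K (θ j)) (j : ℕ) :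
    ∃ K, LipschitzWith K (runningMin θ j) := by
  induction j with
  | zero => exact ⟨0, LipschitzWith.const 1⟩
  | succ j ih =>
    obtain ⟨K, hK⟩ := ih
    obtain ⟨K', hK'⟩ := hθ j
    exact ⟨_, hK.min hK'⟩

lemma exists_isLipschitzPartition_of_cutoff {A : Set Y} {B : ℕ → Set Y} (hθ : ∀ j y, 0 ≤ θ j y)
    (hlip : ∀ j, ∃ K, LipschitzWith K (θ j)) (hone : ∀ j, ∀ y ∉ B j, ∀ᶠ z in 𝓝 y, 1 ≤ θ j z)
    (hzero : ∀ y ∈ A, ∃ j, ∀ᶠ z in 𝓝 y, θ j z = 0) :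
    ∃ φ C, IsLipschitzPartition A B φ C := by
  choose K hK using exists_lipschitzWith_runningMin hlip
  have hsum : ∀ J y, ∑ j ∈ Finset.range J, (runningMin θ j y - runningMin θ (j + 1) y) =
      1 - runningMin θ J y := fun J y => Finset.sum_range_sub' (fun j => runningMin θ j y) J
  refine ⟨fun j y => runningMin θ j y - runningMin θ (j + 1) y, fun j => K j + K (j + 1),
    fun j y => sub_nonneg.2 (antitone_runningMin θ y j.le_succ), fun j => (hK j).sub (hK (j + 1)),
    fun j y hy => ?_, fun J y => ?_, fun y hy => ?_⟩
  · filter_upwards [hone j y hy] with z hz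
    exact sub_eq_zero.2 (min_eq_left ((antitone_runningMin θ z j.zero_le).trans hz)).symm
  · rw [hsum]
    exact sub_le_self _ (runningMin_nonneg hθ J y)
  · obtain ⟨j, hj⟩ := hzero y hy
    refine ⟨j + 1, hj.mono fun z hz => ?_⟩
    have hvanish : ∀ k ≥ j + 1, runningMin θ k z = 0 := fun k hk =>
      le_antisymm ((antitone_runningMin θ z hk).trans (hz ▸ min_le_right _ _))
        (runningMin_nonneg hθ k z)
    exact ⟨fun k hk => by rw [hvanish k hk, hvanish (k + 1) (hk.trans k.le_succ), sub_self],
      by rw [hsum, hvanish _ le_rfl, sub_zero]⟩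

end Telescope

lemma exists_isLipschitzPartition_ball [SecondCountableTopology Y] {A : Set Y} (hA : A.Nonempty)
    {r : Y → ℝ} (hr : ∀ x ∈ A, 0 < r x) :
    ∃ x : ℕ → Y, (∀ j, x j ∈ A) ∧
      ∃ φ C, IsLipschitzPartition A (fun j => ball (x j) (r (x j))) φ C := by
  obtain ⟨t, htA, htc, hcov⟩ := TopologicalSpace.countable_cover_nhdsWithin (s := A)
    (f := fun x => ball x (r x / 3))
    fun x hx => mem_nhdsWithin_of_mem_nhds (ball_mem_nhds x (div_pos (hr x hx) three_pos))
  obtain ⟨a, ha⟩ := hA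
  obtain ⟨x, rfl⟩ := htc.exists_eq_range ⟨_, (mem_iUnion₂.1 (hcov ha)).choose_spec.choose⟩
  have hxA : ∀ j, x j ∈ A := fun j => htA (mem_range_self j)
  have hrx : ∀ j, 0 < r (x j) := fun j => hr _ (hxA j)
  refine ⟨x, hxA, exists_isLipschitzPartition_of_cutoff
    (θ := fun j y => max 0 ((3 / r (x j)) * dist y (x j) - 1)) (fun j y => le_max_left _ _)
    (fun j => ⟨_, (((lipschitzWith_smul (3 / r (x j))).comp (LipschitzWith.dist_left (x j))).sub
      (LipschitzWith.const (1 : ℝ))).const_max 0⟩)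
    (fun j y hy => ?_) fun y hy => ?_⟩
  · have hev : ∀ᶠ z in 𝓝 y, r (x j) * (2 / 3) < dist z (x j) :=
      (continuous_id.dist continuous_const).continuousAt.eventually_const_lt
        (by linarith [hrx j, not_lt.1 (mt mem_ball.2 hy)] : r (x j) * (2 / 3) < dist y (x j))
    filter_upwards [hev] with z hz
    refine le_max_of_le_right ?_
    rw [le_sub_iff_add_le, div_mul_eq_mul_div, le_div_iff₀ (hrx j)]
    linarith
  · obtain ⟨_, ⟨j, rfl⟩, hyj⟩ := mem_iUnion₂.1 (hcov hy)
    refine ⟨j, ?_⟩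
    filter_upwards [isOpen_ball.mem_nhds hyj] with z hz
    rw [max_eq_left]
    rw [sub_nonpos, div_mul_eq_mul_div, div_le_one (hrx j)]
    linarith [mem_ball.1 hz]

namespace IsLipschitzPartition

variable {A : Set Y} {B : ℕ → Set Y} {φ : ℕ → Y → ℝ} {C : ℕ → ℝ≥0}

lemma eq_zero (h : IsLipschitzPartition A B φ C) {j : ℕ} {y : Y} (hy : y ∉ B j) : φ j y = 0 :=
  (h.eventually_eq_zero j y hy).self_of_nhds

lemma support_ofReal_mul_subset (h : IsLipschitzPartition A B φ C) (j : ℕ) (f : Y → ℝ≥0∞) :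
    Function.support (fun y => ENNReal.ofReal (φ j y) * f y) ⊆ B j := by
  refine Function.support_subset_iff'.2 fun y hy => ?_
  rw [h.eq_zero hy, ENNReal.ofReal_zero, zero_mul]

lemma le_one (h : IsLipschitzPartition A B φ C) (j : ℕ) (y : Y) : φ j y ≤ 1 :=
  (Finset.single_le_sum (fun i _ => h.nonneg i y) (Finset.self_mem_range_succ j)).trans
    (h.sum_range_le_one (j + 1) y)

lemma locally_tsum_eq_sum (h : IsLipschitzPartition A B φ C) (V : ℕ → Y → ℝ) {y : Y} (hy : y ∈ A) :
    ∃ J, ∀ᶠ z in 𝓝 y, (∑' j, φ j z * V j z) = ∑ j ∈ Finset.range J, φ j z * V j z ∧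
      ∑ j ∈ Finset.range J, φ j z = 1 := by
  obtain ⟨J, hJ⟩ := h.locally_sum_eq_one y hy
  refine ⟨J, hJ.mono fun z hz => ⟨tsum_eq_sum fun j hj => ?_, hz.2⟩⟩
  rw [hz.1 j (not_lt.1 fun hlt => hj (Finset.mem_range.2 hlt)), zero_mul]

lemma enorm_tsum_sub_le (h : IsLipschitzPartition A B φ C) (V : ℕ → Y → ℝ) (a : ℝ) {y : Y}
    (hy : y ∈ A) :
    ‖∑' j, φ j y * V j y - a‖ₑ ≤ ∑' j, ENNReal.ofReal (φ j y) * ‖V j y - a‖ₑ := by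
  obtain ⟨J, hJ⟩ := h.locally_tsum_eq_sum V hy
  obtain ⟨htsum, hone⟩ := hJ.self_of_nhds
  have hsub : ∑' j, φ j y * V j y - a = ∑ j ∈ Finset.range J, φ j y * (V j y - a) := by
    simp_rw [htsum, mul_sub, Finset.sum_sub_distrib, ← Finset.sum_mul, hone, one_mul]
  rw [hsub]
  refine (enorm_sum_le _ _).trans (le_trans (Finset.sum_le_sum fun j _ => ?_)
    (ENNReal.sum_le_tsum (Finset.range J)))
  rw [enorm_mul, Real.enorm_of_nonneg (h.nonneg j y)]

lemma locLipOn_mul (h : IsLipschitzPartition A B φ C) {j : ℕ} (hB : IsOpen (B j)) {v : Y → ℝ}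
    (hv : LocLipOn v (B j)) : LocLipOn (fun z => φ j z * v z) univ := by
  rw [locLipOn_iff_locallyLipschitzOn]
  intro z _
  by_cases hz : z ∈ B j
  · obtain ⟨K, s, hs, hK⟩ := locLipOn_iff_locallyLipschitzOn.1
      ((locLipOn_of_lipschitzWith (h.lipschitzWith j) (B j)).mul hv) hz
    exact ⟨K, s, nhdsWithin_le_nhds (hB.nhdsWithin_eq hz ▸ hs), hK⟩
  · refine ⟨0, _, nhdsWithin_le_nhds (h.eventually_eq_zero j z hz), fun a ha b hb => ?_⟩
    rw [mem_ofPred_eq] at ha hb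
    simp [ha, hb]

lemma locLipOn_tsum (h : IsLipschitzPartition A B φ C) (hB : ∀ j, IsOpen (B j)) {V : ℕ → Y → ℝ}
    (hV : ∀ j, LocLipOn (V j) (B j)) : LocLipOn (fun y => ∑' j, φ j y * V j y) A := by
  rw [locLipOn_iff_locallyLipschitzOn]
  intro y hy
  obtain ⟨J, hJ⟩ := h.locally_tsum_eq_sum V hy
  obtain ⟨K, s, hs, hK⟩ := locLipOn_iff_locallyLipschitzOn.1
    (LocLipOn.sum (Finset.range J) fun j _ => h.locLipOn_mul (hB j) (hV j)) (mem_univ y)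
  rw [nhdsWithin_univ] at hs
  refine ⟨K, _, nhdsWithin_le_nhds (inter_mem hs hJ), fun a ha b hb => ?_⟩
  simp only [show ∑' j, φ j a * V j a = _ from ha.2.1, show ∑' j, φ j b * V j b = _ from hb.2.1]
  exact hK ha.1 hb.1

lemma hasDerivAt_mul (h : IsLipschitzPartition A B φ C) {j : ℕ} {v : Y → ℝ} {c : ℝ → Y} {t b : ℝ}
    (hc : ContinuousAt c t) (hφ : DifferentiableAt ℝ (fun s => φ j (c s)) t)
    (hv : c t ∈ B j → HasDerivAt (fun s => v (c s)) b t) :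
    HasDerivAt (fun s => φ j (c s) * v (c s))
      (deriv (fun s => φ j (c s)) t * v (c t) + φ j (c t) * b) t := by
  by_cases hj : c t ∈ B j
  · exact hφ.hasDerivAt.mul (hv hj)
  have hzero : (fun s => φ j (c s)) =ᶠ[𝓝 t] fun _ => 0 :=
    hc.eventually (h.eventually_eq_zero j _ hj)
  have hmul : (fun s => φ j (c s) * v (c s)) =ᶠ[𝓝 t] fun _ => 0 := by
    filter_upwards [hzero] with s hs
    rw [hs, zero_mul]
  rw [hzero.deriv_eq, h.eq_zero hj, deriv_const, zero_mul, zero_mul, add_zero]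
  exact (hasDerivAt_const t 0).congr_of_eventuallyEq hmul

lemma deriv_eq_zero (h : IsLipschitzPartition A B φ C) {j : ℕ} {c : ℝ → Y} {t : ℝ}
    (hc : ContinuousAt c t) (hj : c t ∉ B j) : deriv (fun s => φ j (c s)) t = 0 := by
  have hzero : (fun s => φ j (c s)) =ᶠ[𝓝 t] fun _ => 0 :=
    hc.eventually (h.eventually_eq_zero j _ hj)
  exact hzero.deriv_eq.trans (deriv_const t 0)

/-- Since the derivatives of the `φ j` sum to zero, the constant `a` can be subtracted from each
`V j` in the terms where the derivative falls on `φ j`. -/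
lemma exists_hasDerivAt_tsum (h : IsLipschitzPartition A B φ C) {V : ℕ → Y → ℝ} {c : ℝ → Y} {t : ℝ}
    (hc : ContinuousAt c t) (ht : c t ∈ A) (hφ : ∀ j, DifferentiableAt ℝ (fun s => φ j (c s)) t)
    (hV : ∀ j, c t ∈ B j → DifferentiableAt ℝ (fun s => V j (c s)) t) (a : ℝ) :
    ∃ J, HasDerivAt (fun s => ∑' j, φ j (c s) * V j (c s))
      (∑ j ∈ Finset.range J, (φ j (c t) * deriv (fun s => V j (c s)) t +
        deriv (fun s => φ j (c s)) t * (V j (c t) - a))) t := by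
  obtain ⟨J, hJ⟩ := h.locally_tsum_eq_sum V ht
  refine ⟨J, ?_⟩
  have hsum_zero : ∑ j ∈ Finset.range J, deriv (fun s => φ j (c s)) t = 0 := by
    have hone : (fun s => ∑ j ∈ Finset.range J, φ j (c s)) =ᶠ[𝓝 t] fun _ => 1 :=
      (hc.eventually hJ).mono fun s hs => hs.2
    exact (HasDerivAt.fun_sum fun j _ => (hφ j).hasDerivAt).unique
      ((hasDerivAt_const t 1).congr_of_eventuallyEq hone)
  have hsum := (HasDerivAt.fun_sum fun j (_ : j ∈ Finset.range J) =>
    h.hasDerivAt_mul hc (hφ j) fun hj => (hV j hj).hasDerivAt).congr_of_eventuallyEq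
      ((hc.eventually hJ).mono fun s hs => hs.1)
  refine hsum.congr_deriv ?_
  simp only [mul_sub, Finset.sum_add_distrib, Finset.sum_sub_distrib, ← Finset.sum_mul, hsum_zero]
  ring

lemma enorm_deriv_tsum_le (h : IsLipschitzPartition A B φ C) {V : ℕ → Y → ℝ}
    {G : ℕ → Y → ℝ≥0∞} {c : ℝ → Y} {t : ℝ} (hc : ContinuousAt c t) (ht : c t ∈ A)
    (hφ : ∀ j, DifferentiableAt ℝ (fun s => φ j (c s)) t ∧
      ‖deriv (fun s => φ j (c s)) t‖ₑ ≤ C j)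
    (hV : ∀ j, c t ∈ B j → DifferentiableAt ℝ (fun s => V j (c s)) t ∧
      ‖deriv (fun s => V j (c s)) t‖ₑ ≤ G j (c t)) (a : ℝ) :
    ‖deriv (fun s => ∑' j, φ j (c s) * V j (c s)) t‖ₑ ≤
      ∑' j, (ENNReal.ofReal (φ j (c t)) * G j (c t) +
        C j * (B j).indicator (fun y => ‖V j y - a‖ₑ) (c t)) := by
  obtain ⟨J, hderiv⟩ :=
    h.exists_hasDerivAt_tsum hc ht (fun j => (hφ j).1) (fun j hj => (hV j hj).1) a
  rw [hderiv.deriv]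
  refine (enorm_sum_le _ _).trans (le_trans (Finset.sum_le_sum fun j _ => ?_)
    (ENNReal.sum_le_tsum (Finset.range J)))
  refine (enorm_add_le _ _).trans ?_
  rw [enorm_mul, enorm_mul, Real.enorm_of_nonneg (h.nonneg j _)]
  by_cases hj : c t ∈ B j
  · rw [indicator_of_mem hj]
    gcongr
    exacts [(hV j hj).2, (hφ j).2]
  · simp [h.eq_zero hj, h.deriv_eq_zero hc hj]

end IsLipschitzPartition

end LipschitzPartition

section Admissible

variable {Y : Type*} [MetricSpace Y] [MeasurableSpace Y] {μ : Measure Y}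

/-- A competitor in the definition of the total variation on `A`: a locally Lipschitz function
together with a Borel weak upper gradient in derivative form. -/
structure IsAdmissible (μ : Measure Y) (v : Y → ℝ) (g : Y → ℝ≥0∞) (A : Set Y) : Prop where
  locLipOn : LocLipOn v A
  measurable : Measurable g
  isDerivUpperGradientOn : IsDerivUpperGradientOn μ v g A

namespace IsAdmissible

variable {A A' : Set Y} {v w v₁ v₂ : Y → ℝ} {g g₁ g₂ gw : Y → ℝ≥0∞}

lemma mono_set (h : IsAdmissible μ v g A) (hs : A' ⊆ A) : IsAdmissible μ v g A' :=
  ⟨h.locLipOn.mono hs, h.measurable, h.isDerivUpperGradientOn.mono_set hs⟩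

lemma of_deriv (h : IsAdmissible μ v g A) (hA : IsOpen A) (hw : LocLipOn w A) (hgw : Measurable gw)
    (hderiv : ∀ c : ℝ → Y, LipschitzWith 1 c → ∀ t, c t ∈ A →
      DifferentiableAt ℝ (fun s => v (c s)) t → ‖deriv (fun s => v (c s)) t‖ₑ ≤ g (c t) →
      ‖deriv (fun s => w (c s)) t‖ₑ ≤ gw (c t)) : IsAdmissible μ w gw A :=
  ⟨hw, hgw, .of_forall_deriv (ι := Unit) (fun _ => hA) (fun _ => h.locLipOn)
    (fun _ => h.isDerivUpperGradientOn)
    fun c hc t ht hv => hderiv c hc t ht (hv () ht).1 (hv () ht).2⟩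

lemma of_deriv₂ (h₁ : IsAdmissible μ v₁ g₁ A) (h₂ : IsAdmissible μ v₂ g₂ A) (hA : IsOpen A)
    (hw : LocLipOn w A) (hgw : Measurable gw)
    (hderiv : ∀ c : ℝ → Y, LipschitzWith 1 c → ∀ t, c t ∈ A →
      DifferentiableAt ℝ (fun s => v₁ (c s)) t → ‖deriv (fun s => v₁ (c s)) t‖ₑ ≤ g₁ (c t) →
      DifferentiableAt ℝ (fun s => v₂ (c s)) t → ‖deriv (fun s => v₂ (c s)) t‖ₑ ≤ g₂ (c t) →
      ‖deriv (fun s => w (c s)) t‖ₑ ≤ gw (c t)) : IsAdmissible μ w gw A :=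
  ⟨hw, hgw, .of_forall_deriv (ι := Bool) (v := (Bool.rec v₁ v₂ ·)) (g := (Bool.rec g₁ g₂ ·))
    (fun _ => hA) (Bool.rec h₁.locLipOn h₂.locLipOn)
    (Bool.rec h₁.isDerivUpperGradientOn h₂.isDerivUpperGradientOn)
    fun c hc t ht hv => hderiv c hc t ht (hv false ht).1 (hv false ht).2
      (hv true ht).1 (hv true ht).2⟩

lemma congr (h : IsAdmissible μ v g A) (hA : IsOpen A) (he : EqOn v w A) : IsAdmissible μ w g A :=
  h.of_deriv hA (h.locLipOn.congr he) h.measurable fun c hc t ht _ hle => by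
    have hev : (fun s => w (c s)) =ᶠ[𝓝 t] fun s => v (c s) := by
      filter_upwards [hc.continuous.continuousAt.preimage_mem_nhds (hA.mem_nhds ht)] with s hs
      exact (he hs).symm
    rwa [hev.deriv_eq]

lemma add (h₁ : IsAdmissible μ v₁ g₁ A) (h₂ : IsAdmissible μ v₂ g₂ A) (hA : IsOpen A) :
    IsAdmissible μ (fun x => v₁ x + v₂ x) (fun x => g₁ x + g₂ x) A :=
  h₁.of_deriv₂ h₂ hA (h₁.locLipOn.add h₂.locLipOn) (h₁.measurable.add h₂.measurable)
    fun c _ t _ hd₁ hle₁ hd₂ hle₂ => by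
      rw [deriv_fun_add hd₁ hd₂]
      exact (enorm_add_le _ _).trans (add_le_add hle₁ hle₂)

lemma affine (h : IsAdmissible μ v g A) (hA : IsOpen A) (a b : ℝ) :
    IsAdmissible μ (fun x => a * v x + b) (fun x => ‖a‖ₑ * g x) A :=
  h.of_deriv hA (((locLipOn_of_lipschitzWith (LipschitzWith.const a) A).mul h.locLipOn).add
    (locLipOn_of_lipschitzWith (LipschitzWith.const b) A)) (h.measurable.const_mul _)
    fun c _ t _ hd hle => by
      rw [((hd.hasDerivAt.const_mul a).add_const b).deriv, enorm_mul]
      gcongr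

end IsAdmissible

lemma isAdmissible_const (b : ℝ) (A : Set Y) : IsAdmissible μ (fun _ => b) (fun _ => 0) A :=
  ⟨locLipOn_of_lipschitzWith (LipschitzWith.const b) A, measurable_const,
    isDerivUpperGradientOn_of_lipschitzWith (LipschitzWith.const b) A⟩

/-- The total variation of `u` on `A` is at most `c`, witnessed by single admissible functions that
approximate `u` globally in `L¹(A)`. -/
def HasVariationLE (μ : Measure Y) (A : Set Y) (u : Y → ℝ) (c : ℝ≥0∞) : Prop :=
  ∀ ε : ℝ≥0∞, ε ≠ 0 → ∃ (v : Y → ℝ) (g : Y → ℝ≥0∞), IsAdmissible μ v g A ∧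
    ∫⁻ x in A, ‖v x - u x‖ₑ ∂μ ≤ ε ∧ ∫⁻ x in A, g x ∂μ ≤ c + ε

end Admissible

section Gluing

lemma LocLipOn.measurable_indicator {v : X → ℝ} {O : Set X} (h : LocLipOn v O) (hO : IsOpen O) :
    Measurable (O.indicator v) := by
  classical
  rw [← piecewise_eq_indicator]
  exact h.continuousOn.measurable_piecewise continuousOn_const hO.measurableSet

lemma setLIntegral_le_setLIntegral_of_support_subset {α : Type*} [MeasurableSpace α]
    {μ : Measure α} (s : Set α) {t : Set α} {f : α → ℝ≥0∞} (hf : f.support ⊆ t) :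
    ∫⁻ x in s, f x ∂μ ≤ ∫⁻ x in t, f x ∂μ :=
  (setLIntegral_le_lintegral s f).trans_eq (setLIntegral_eq_of_support_subset hf).symm

namespace IsLipschitzPartition

variable {μ : Measure X} {A : Set X} {B : ℕ → Set X} {φ : ℕ → X → ℝ} {C : ℕ → ℝ≥0} {u : X → ℝ}
  {V : ℕ → X → ℝ} {G : ℕ → X → ℝ≥0∞}

lemma measurable_ofReal (h : IsLipschitzPartition A B φ C) (j : ℕ) :
    Measurable fun y => ENNReal.ofReal (φ j y) :=
  (h.lipschitzWith j).continuous.measurable.ennreal_ofReal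

/-- The gradient of the patched function `∑ φ j * V j` produced by the Leibniz rule. -/
def patchGradient (B : ℕ → Set X) (φ : ℕ → X → ℝ) (C : ℕ → ℝ≥0) (u : X → ℝ) (V : ℕ → X → ℝ)
    (G : ℕ → X → ℝ≥0∞) (y : X) : ℝ≥0∞ :=
  ∑' j, (ENNReal.ofReal (φ j y) * G j y + C j * (B j).indicator (fun y => ‖V j y - u y‖ₑ) y)

lemma isAdmissible_tsum (h : IsLipschitzPartition A B φ C) (hB : ∀ j, IsOpen (B j))
    (hV : ∀ j, IsAdmissible μ (V j) (G j) (B j)) (hVm : ∀ j, Measurable (V j))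
    (hu : Measurable u) :
    IsAdmissible μ (fun y => ∑' j, φ j y * V j y) (patchGradient B φ C u V G) A := by
  refine ⟨h.locLipOn_tsum hB fun j => (hV j).locLipOn,
    Measurable.tsum fun j => ((h.measurable_ofReal j).mul (hV j).measurable).add
      ((((hVm j).sub hu).enorm.indicator (hB j).measurableSet).const_mul _),
    .of_forall_deriv (ι := ℕ ⊕ ℕ) (v := Sum.elim φ V) (g := Sum.elim (fun j _ => (C j : ℝ≥0∞)) G)
      (Oi := Sum.elim (fun _ => univ) B) ?_ ?_ ?_ fun c hc t ht hderiv =>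
        h.enorm_deriv_tsum_le hc.continuous.continuousAt ht
          (fun j => hderiv (.inl j) trivial) (fun j => hderiv (.inr j)) (u (c t))⟩
  · exact Sum.rec (fun _ => isOpen_univ) hB
  · exact Sum.rec (fun j => locLipOn_of_lipschitzWith (h.lipschitzWith j) _)
      fun j => (hV j).locLipOn
  · exact Sum.rec (fun j => isDerivUpperGradientOn_of_lipschitzWith (h.lipschitzWith j) _)
      fun j => (hV j).isDerivUpperGradientOn

lemma setLIntegral_enorm_tsum_sub_le (h : IsLipschitzPartition A B φ C) (hA : MeasurableSet A)
    (hV : ∀ j, Measurable (V j)) (hu : Measurable u) :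
    ∫⁻ y in A, ‖∑' j, φ j y * V j y - u y‖ₑ ∂μ ≤ ∑' j, ∫⁻ y in B j, ‖V j y - u y‖ₑ ∂μ := by
  calc ∫⁻ y in A, ‖∑' j, φ j y * V j y - u y‖ₑ ∂μ
      ≤ ∫⁻ y in A, ∑' j, ENNReal.ofReal (φ j y) * ‖V j y - u y‖ₑ ∂μ :=
        setLIntegral_mono' hA fun y hy => h.enorm_tsum_sub_le V (u y) hy
    _ = ∑' j, ∫⁻ y in A, ENNReal.ofReal (φ j y) * ‖V j y - u y‖ₑ ∂μ :=
        lintegral_tsum fun j => ((h.measurable_ofReal j).mul ((hV j).sub hu).enorm).aemeasurable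
    _ ≤ ∑' j, ∫⁻ y in B j, ENNReal.ofReal (φ j y) * ‖V j y - u y‖ₑ ∂μ :=
        ENNReal.tsum_le_tsum fun j => setLIntegral_le_setLIntegral_of_support_subset A
          (h.support_ofReal_mul_subset j _)
    _ ≤ ∑' j, ∫⁻ y in B j, ‖V j y - u y‖ₑ ∂μ :=
        ENNReal.tsum_le_tsum fun j => lintegral_mono fun y =>
          mul_le_of_le_one_left zero_le (ENNReal.ofReal_le_one.2 (h.le_one j y))

lemma setLIntegral_patchGradient_le (h : IsLipschitzPartition A B φ C)
    (hB : ∀ j, MeasurableSet (B j)) (hG : ∀ j, Measurable (G j)) (hV : ∀ j, Measurable (V j))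
    (hu : Measurable u) :
    ∫⁻ y in A, patchGradient B φ C u V G y ∂μ ≤
      ∑' j, (∫⁻ y in B j, ENNReal.ofReal (φ j y) * G j y ∂μ +
        C j * ∫⁻ y in B j, ‖V j y - u y‖ₑ ∂μ) := by
  have hφG : ∀ j, Measurable fun y => ENNReal.ofReal (φ j y) * G j y :=
    fun j => (h.measurable_ofReal j).mul (hG j)
  have hVu : ∀ j, Measurable ((B j).indicator fun y => ‖V j y - u y‖ₑ) :=
    fun j => ((hV j).sub hu).enorm.indicator (hB j)
  have hsum : ∀ j, Measurable fun y => ENNReal.ofReal (φ j y) * G j y +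
      C j * (B j).indicator (fun y => ‖V j y - u y‖ₑ) y :=
    fun j => (hφG j).add ((hVu j).const_mul _)
  unfold patchGradient
  rw [lintegral_tsum fun j => (hsum j).aemeasurable]
  refine ENNReal.tsum_le_tsum fun j => ?_
  rw [lintegral_add_left (hφG j), lintegral_const_mul _ (hVu j),
    ← lintegral_indicator (hB j) fun y => ‖V j y - u y‖ₑ]
  exact add_le_add (setLIntegral_le_setLIntegral_of_support_subset A
    (h.support_ofReal_mul_subset j _)) (mul_le_mul_right (setLIntegral_le_lintegral _ _) _)

lemma exists_isAdmissible (h : IsLipschitzPartition A B φ C) (hA : MeasurableSet A)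
    (hB : ∀ j, IsOpen (B j)) (hV : ∀ j, IsAdmissible μ (V j) (G j) (B j)) (hu : Measurable u) :
    ∃ w gw, IsAdmissible μ w gw A ∧
      ∫⁻ y in A, ‖w y - u y‖ₑ ∂μ ≤ ∑' j, ∫⁻ y in B j, ‖V j y - u y‖ₑ ∂μ ∧
      ∫⁻ y in A, gw y ∂μ ≤ ∑' j, (∫⁻ y in B j, ENNReal.ofReal (φ j y) * G j y ∂μ +
        C j * ∫⁻ y in B j, ‖V j y - u y‖ₑ ∂μ) := by
  have hind : ∀ j, Measurable ((B j).indicator (V j)) := fun j =>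
    (hV j).locLipOn.measurable_indicator (hB j)
  have hint : ∀ j, ∫⁻ y in B j, ‖(B j).indicator (V j) y - u y‖ₑ ∂μ =
      ∫⁻ y in B j, ‖V j y - u y‖ₑ ∂μ := fun j =>
    setLIntegral_congr_fun (hB j).measurableSet fun y hy => by
      simp only [indicator_of_mem hy]
  simp_rw [← hint]
  exact ⟨_, _, h.isAdmissible_tsum hB (fun j => (hV j).congr (hB j)
      fun y hy => (indicator_of_mem hy _).symm) hind hu,
    h.setLIntegral_enorm_tsum_sub_le hA hind hu,
    h.setLIntegral_patchGradient_le (fun j => (hB j).measurableSet)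
      (fun j => (hV j).measurable) hind hu⟩

lemma sum_setLIntegral_mul_le (h : IsLipschitzPartition A B φ C) {ι : Type*} [Fintype ι]
    (n : ℕ → ι) {O : ι → Set X} {g : ι → X → ℝ≥0∞} (hg : ∀ m, Measurable (g m)) {J : ℕ}
    (hBO : ∀ j ∈ Finset.range J, B j ⊆ O (n j)) :
    ∑ j ∈ Finset.range J, ∫⁻ y in B j, ENNReal.ofReal (φ j y) * g (n j) y ∂μ ≤
      ∑ m, ∫⁻ y in O m, g m y ∂μ := by
  classical
  calc ∑ j ∈ Finset.range J, ∫⁻ y in B j, ENNReal.ofReal (φ j y) * g (n j) y ∂μ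
      ≤ ∑ j ∈ Finset.range J, ∫⁻ y in O (n j), ENNReal.ofReal (φ j y) * g (n j) y ∂μ :=
        Finset.sum_le_sum fun j hj => lintegral_mono_set (hBO j hj)
    _ = ∑ m, ∑ j ∈ Finset.range J with n j = m,
          ∫⁻ y in O m, ENNReal.ofReal (φ j y) * g m y ∂μ :=
        (Finset.sum_fiberwise _ n _).symm.trans <| Finset.sum_congr rfl fun m _ =>
          Finset.sum_congr rfl fun j hj => by rw [(Finset.mem_filter.1 hj).2]
    _ = ∑ m, ∫⁻ y in O m, (∑ j ∈ Finset.range J with n j = m, ENNReal.ofReal (φ j y)) * g m y ∂μ :=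
        Finset.sum_congr rfl fun m _ => by
          have hm : ∀ j, Measurable fun y => ENNReal.ofReal (φ j y) * g m y := fun j =>
            (h.measurable_ofReal j).mul (hg m)
          simp_rw [Finset.sum_mul]
          rw [lintegral_finsetSum _ fun j _ => hm j]
    _ ≤ ∑ m, ∫⁻ y in O m, g m y ∂μ := by
        refine Finset.sum_le_sum fun m _ => lintegral_mono fun y =>
          mul_le_of_le_one_left zero_le ?_
        rw [← ENNReal.ofReal_sum_of_nonneg fun j _ => h.nonneg j y, ENNReal.ofReal_le_one]
        exact (Finset.sum_le_sum_of_subset_of_nonneg (Finset.filter_subset _ _)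
          fun j _ _ => h.nonneg j y).trans (h.sum_range_le_one J y)

end IsLipschitzPartition

/-- A limit along an ultrafilter turns the bounds on partial sums into summable individual bounds
without passing to a diagonal subsequence. -/
lemma exists_forall_and_tsum_le_add {f : ℕ → ℕ → ℝ≥0∞} {p : ℕ → ℕ → Prop} {c : ℝ≥0∞}
    (hf : ∀ J, ∀ᶠ k in atTop, ∑ j ∈ Finset.range J, f j k ≤ c) (hp : ∀ j, ∀ᶠ k in atTop, p j k)
    {ε : ℝ≥0∞} (hε : ε ≠ 0) :
    ∃ k : ℕ → ℕ, (∀ j, p j (k j)) ∧ ∑' j, f j (k j) ≤ c + ε := by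
  choose ν hν using fun j =>
    (⟨_, Ultrafilter.le_nhds_lim ((hyperfilter ℕ).map (f j))⟩ :
      ∃ ν, Tendsto (f j) (hyperfilter ℕ) (𝓝 ν))
  have hνsum : ∑' j, ν j ≤ c := ENNReal.tsum_le_of_sum_range_le fun J =>
    le_of_tendsto (tendsto_finsetSum _ fun j _ => hν j) (Nat.hyperfilter_le_atTop (hf J))
  obtain ⟨δ, hδ, hδε⟩ := ENNReal.exists_pos_sum_of_countable hε ℕ
  have hclose : ∀ j, ∀ᶠ k in hyperfilter ℕ, f j k ≤ ν j + δ j := fun j => by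
    by_cases hj : ν j = ∞
    · simp [hj]
    · exact ((hν j).eventually_lt_const
        (ENNReal.lt_add_right hj (ENNReal.coe_ne_zero.2 (hδ j).ne'))).mono fun k => le_of_lt
  choose k hk hkf using fun j =>
    ((show ∀ᶠ k in hyperfilter ℕ, p j k from Nat.hyperfilter_le_atTop (hp j)).and
      (hclose j)).exists
  refine ⟨k, hk, (ENNReal.tsum_le_tsum hkf).trans ?_⟩
  rw [ENNReal.tsum_add]
  exact add_le_add hνsum hδε.le

lemma hasVariationLE_of_locally [SecondCountableTopology X] {ι : Type*} [Fintype ι] {μ : Measure X}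
    {A : Set X} {u : X → ℝ} (hA : IsOpen A) (hu : Measurable u) (c : ι → ℝ≥0∞)
    {O : ι → ℕ → Set X} {v : ι → ℕ → X → ℝ} {g : ι → ℕ → X → ℝ≥0∞}
    (hadm : ∀ n k, IsAdmissible μ (v n k) (g n k) (O n k))
    (hc : ∀ n k, ∫⁻ x in O n k, g n k x ∂μ ≤ c n)
    (hloc : ∀ x ∈ A, ∃ n, ∃ r > (0 : ℝ), (∀ᶠ k in atTop, ball x r ⊆ O n k) ∧
      Tendsto (fun k => ∫⁻ y in ball x r, ‖v n k y - u y‖ₑ ∂μ) atTop (𝓝 0)) :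
    HasVariationLE μ A u (∑ n, c n) := by
  intro ε hε
  rcases A.eq_empty_or_nonempty with rfl | hne
  · exact ⟨_, _, isAdmissible_const 0 _, by simp, by simp⟩
  obtain ⟨x₀, hx₀⟩ := hne
  have : Nonempty ι := ⟨(hloc x₀ hx₀).choose⟩
  choose! n r hr hsub hlim using hloc
  obtain ⟨x, hxA, φ, C, hφ⟩ := exists_isLipschitzPartition_ball ⟨x₀, hx₀⟩ hr
  let B : ℕ → Set X := fun j => ball (x j) (r (x j))
  have hε' : ε / 2 ≠ 0 := (ENNReal.half_pos hε).ne'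
  obtain ⟨δ, hδ, hδε⟩ := ENNReal.exists_pos_sum_of_countable hε' ℕ
  have hgrad : ∀ J, ∀ᶠ k in atTop, ∑ j ∈ Finset.range J,
      ∫⁻ y in B j, ENNReal.ofReal (φ j y) * g (n (x j)) k y ∂μ ≤ ∑ n, c n := fun J => by
    filter_upwards [(Finset.eventually_all _).2 fun j (_ : j ∈ Finset.range J) =>
      hsub (x j) (hxA j)] with k hk
    exact (hφ.sum_setLIntegral_mul_le (fun j => n (x j)) (fun m => (hadm m k).measurable) hk).trans
      (Finset.sum_le_sum fun m _ => hc m k)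
  have hgood : ∀ j, ∀ᶠ k in atTop, B j ⊆ O (n (x j)) k ∧
      (1 + C j) * ∫⁻ y in B j, ‖v (n (x j)) k y - u y‖ₑ ∂μ ≤ δ j := fun j => by
    have hmul := ENNReal.Tendsto.const_mul (a := 1 + C j) (hlim _ (hxA j)) (Or.inr (by simp))
    rw [mul_zero] at hmul
    exact (hsub _ (hxA j)).and
      ((hmul.eventually_lt_const (ENNReal.coe_pos.2 (hδ j))).mono fun k => le_of_lt)
  obtain ⟨k, hk, hksum⟩ := exists_forall_and_tsum_le_add hgrad hgood hε'
  obtain ⟨w, gw, hw, hwu, hgw⟩ := hφ.exists_isAdmissible hA.measurableSet (fun _ => isOpen_ball)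
    (fun j => (hadm (n (x j)) (k j)).mono_set (hk j).1) hu
  refine ⟨w, gw, hw, hwu.trans ?_, hgw.trans ?_⟩
  · refine (ENNReal.tsum_le_tsum fun j => ?_).trans (hδε.le.trans ENNReal.half_le_self)
    exact (le_mul_of_one_le_left zero_le le_self_add).trans (hk j).2
  · rw [ENNReal.tsum_add, ← ENNReal.add_halves ε, ← add_assoc]
    refine add_le_add hksum ((ENNReal.tsum_le_tsum fun j => ?_).trans hδε.le)
    exact (mul_le_mul_left le_add_self _).trans (hk j).2

end Gluing

section L1LocConv

variable {Y : Type*} [MetricSpace Y] [MeasurableSpace Y] {μ : Measure Y} {A B : Set Y}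
  {u u' : Y → ℝ} {v : ℕ → Y → ℝ}

lemma l1LocConv_iff_enorm : L1LocConv μ A v u ↔ ∀ x ∈ A, ∃ r > (0 : ℝ),
    Tendsto (fun i => ∫⁻ y in A ∩ ball x r, ‖v i y - u y‖ₑ ∂μ) atTop (𝓝 0) := by
  simp only [L1LocConv, Real.enorm_eq_ofReal_abs]

lemma l1LocConv_of_le {ε : ℕ → ℝ≥0∞} (hε : Tendsto ε atTop (𝓝 0))
    (h : ∀ i, ∫⁻ x in A, ‖v i x - u x‖ₑ ∂μ ≤ ε i) : L1LocConv μ A v u :=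
  l1LocConv_iff_enorm.2 fun _ _ => ⟨1, one_pos,
    tendsto_of_tendsto_of_tendsto_of_le_of_le tendsto_const_nhds hε (fun _ => zero_le)
      fun i => (lintegral_mono_set inter_subset_left).trans (h i)⟩

lemma L1LocConv.mono_set (h : L1LocConv μ A v u) (hs : B ⊆ A) : L1LocConv μ B v u := fun x hx =>
  have ⟨r, hr, hlim⟩ := h x (hs hx)
  ⟨r, hr, tendsto_of_tendsto_of_tendsto_of_le_of_le tendsto_const_nhds hlim (fun _ => zero_le)
    fun _ => lintegral_mono_set (inter_subset_inter_left _ hs)⟩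

lemma L1LocConv.congr (h : L1LocConv μ A v u) (he : u =ᵐ[μ.restrict A] u') :
    L1LocConv μ A v u' := by
  intro x hx
  obtain ⟨r, hr, hlim⟩ := h x hx
  refine ⟨r, hr, hlim.congr fun i => lintegral_congr_ae ?_⟩
  filter_upwards [ae_restrict_of_ae_restrict_of_subset inter_subset_left he] with y hy
  rw [hy]

lemma tvOpen_congr (he : u =ᵐ[μ.restrict A] u') : tvOpen μ A u = tvOpen μ A u' := by
  have hiff : ∀ v, L1LocConv μ A v u ↔ L1LocConv μ A v u' := fun v =>
    ⟨fun h => h.congr he, fun h => h.congr he.symm⟩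
  simp only [tvOpen, hiff]

end L1LocConv

section HasVariationLE

variable {Y : Type*} [MetricSpace Y] [MeasurableSpace Y] {μ : Measure Y} {A : Set Y}
  {u : Y → ℝ} {c c' : ℝ≥0∞}

lemma HasVariationLE.mono (h : HasVariationLE μ A u c) (hc : c ≤ c') : HasVariationLE μ A u c' :=
  fun ε hε =>
    have ⟨v, g, hadm, hvu, hg⟩ := h ε hε
    ⟨v, g, hadm, hvu, hg.trans (by gcongr)⟩

lemma HasVariationLE.of_forall_add (h : ∀ δ ≠ 0, HasVariationLE μ A u (c + δ)) :
    HasVariationLE μ A u c := by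
  intro ε hε
  have hε2 : ε / 2 ≠ 0 := (ENNReal.half_pos hε).ne'
  obtain ⟨v, g, hadm, hvu, hg⟩ := h (ε / 2) hε2 (ε / 2) hε2
  rw [add_assoc, ENNReal.add_halves] at hg
  exact ⟨v, g, hadm, hvu.trans ENNReal.half_le_self, hg⟩

lemma HasVariationLE.exists_seq (h : HasVariationLE μ A u c) :
    ∃ (v : ℕ → Y → ℝ) (g : ℕ → Y → ℝ≥0∞), (∀ i, IsAdmissible μ (v i) (g i) A) ∧
      (∀ i, ∫⁻ x in A, ‖v i x - u x‖ₑ ∂μ ≤ 2⁻¹ ^ i) ∧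
      ∀ i, ∫⁻ x in A, g i x ∂μ ≤ c + 2⁻¹ ^ i := by
  choose v g hadm hvu hg using fun i : ℕ =>
    h (2⁻¹ ^ i) (pow_ne_zero i (ENNReal.inv_ne_zero.2 ENNReal.ofNat_ne_top))
  exact ⟨v, g, hadm, hvu, hg⟩

lemma hasVariationLE_const (A : Set Y) (b : ℝ) : HasVariationLE μ A (fun _ => b) 0 :=
  fun _ _ => ⟨_, _, isAdmissible_const b A, by simp, by simp⟩

lemma HasVariationLE.affine (h : HasVariationLE μ A u c) (hA : IsOpen A) (a b : ℝ) :
    HasVariationLE μ A (fun x => a * u x + b) (‖a‖ₑ * c) := by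
  intro ε hε
  obtain ⟨v, g, hadm, hvu, hg⟩ := h (ε / ‖a‖ₑ) (ENNReal.div_ne_zero.2 ⟨hε, enorm_ne_top⟩)
  refine ⟨_, _, hadm.affine hA a b, ?_, ?_⟩
  · have hsub : ∀ x, ‖a * v x + b - (a * u x + b)‖ₑ = ‖a‖ₑ * ‖v x - u x‖ₑ := fun x => by
      rw [add_sub_add_right_eq_sub, ← mul_sub, enorm_mul]
    simp only [hsub, lintegral_const_mul' _ _ enorm_ne_top]
    exact (mul_le_mul_right hvu _).trans ENNReal.mul_div_le
  · rw [lintegral_const_mul' _ _ enorm_ne_top]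
    refine (mul_le_mul_right hg _).trans ?_
    rw [mul_add]
    gcongr
    exact ENNReal.mul_div_le

end HasVariationLE

lemma tendsto_two_inv_pow : Tendsto (fun i : ℕ => (2⁻¹ : ℝ≥0∞) ^ i) atTop (𝓝 0) :=
  ENNReal.tendsto_pow_atTop_nhds_zero_of_lt_one ENNReal.one_half_lt_one

lemma liminf_le_of_forall_le_add_two_inv_pow {f : ℕ → ℝ≥0∞} {c : ℝ≥0∞}
    (h : ∀ i, f i ≤ c + 2⁻¹ ^ i) : liminf f atTop ≤ c := by
  have hlim : Tendsto (fun i : ℕ => c + (2⁻¹ : ℝ≥0∞) ^ i) atTop (𝓝 c) := by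
    simpa only [add_zero] using tendsto_const_nhds.add tendsto_two_inv_pow
  exact (liminf_le_liminf (.of_forall h)).trans_eq hlim.liminf_eq

lemma liminf_add_liminf_le_liminf_add (f g : ℕ → ℝ≥0∞) :
    liminf f atTop + liminf g atTop ≤ liminf (fun i => f i + g i) atTop := by
  simp only [liminf_eq_iSup_iInf_of_nat]
  rw [ENNReal.iSup_add_iSup_of_monotone
    (fun _ _ h => le_iInf₂ fun i hi => iInf₂_le i (h.trans hi))
    (fun _ _ h => le_iInf₂ fun i hi => iInf₂_le i (h.trans hi))]
  exact iSup_mono fun n => le_iInf₂ fun i hi => add_le_add (iInf₂_le i hi) (iInf₂_le i hi)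

lemma LocLipOn.aestronglyMeasurable {v : X → ℝ} {O : Set X} (h : LocLipOn v O) (hO : IsOpen O)
    (μ : Measure X) : AEStronglyMeasurable v (μ.restrict O) :=
  h.continuousOn.aestronglyMeasurable hO.measurableSet

section Algebra

variable {μ : Measure X} {A : Set X} {u u₁ u₂ : X → ℝ} {c c₁ c₂ : ℝ≥0∞}

lemma HasVariationLE.add (h₁ : HasVariationLE μ A u₁ c₁) (h₂ : HasVariationLE μ A u₂ c₂)
    (hA : IsOpen A) (hu₁ : Measurable u₁) :
    HasVariationLE μ A (fun x => u₁ x + u₂ x) (c₁ + c₂) := by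
  intro ε hε
  have hε2 : ε / 2 ≠ 0 := (ENNReal.half_pos hε).ne'
  obtain ⟨v₁, g₁, hadm₁, hvu₁, hg₁⟩ := h₁ _ hε2
  obtain ⟨v₂, g₂, hadm₂, hvu₂, hg₂⟩ := h₂ _ hε2
  refine ⟨_, _, hadm₁.add hadm₂ hA, ?_, ?_⟩
  · calc ∫⁻ x in A, ‖v₁ x + v₂ x - (u₁ x + u₂ x)‖ₑ ∂μ
        ≤ ∫⁻ x in A, ‖v₁ x - u₁ x‖ₑ + ‖v₂ x - u₂ x‖ₑ ∂μ := lintegral_mono fun x => by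
          rw [add_sub_add_comm]
          exact enorm_add_le _ _
      _ = ∫⁻ x in A, ‖v₁ x - u₁ x‖ₑ ∂μ + ∫⁻ x in A, ‖v₂ x - u₂ x‖ₑ ∂μ :=
          lintegral_enorm_add_left ((hadm₁.locLipOn.aestronglyMeasurable hA μ).sub
            hu₁.aestronglyMeasurable) _
      _ ≤ ε := (add_le_add hvu₁ hvu₂).trans_eq (ENNReal.add_halves ε)
  · rw [lintegral_add_left hadm₁.measurable, ← ENNReal.add_halves ε, add_add_add_comm]
    exact add_le_add hg₁ hg₂

lemma HasVariationLE.sum {ι : Type*} {s : Finset ι} {u : ι → X → ℝ} {c : ι → ℝ≥0∞}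
    (h : ∀ j ∈ s, HasVariationLE μ A (u j) (c j)) (hA : IsOpen A)
    (hu : ∀ j ∈ s, Measurable (u j)) :
    HasVariationLE μ A (fun x => ∑ j ∈ s, u j x) (∑ j ∈ s, c j) := by
  classical
  induction s using Finset.induction_on with
  | empty => simpa only [Finset.sum_empty] using hasVariationLE_const A 0
  | insert j s hj ih =>
    simp only [Finset.sum_insert hj]
    exact (h j (s.mem_insert_self j)).add
      (ih (fun i hi => h i (Finset.mem_insert_of_mem hi))
        fun i hi => hu i (Finset.mem_insert_of_mem hi)) hA (hu j (s.mem_insert_self j))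

lemma IsAdmissible.clamp {v : X → ℝ} {g : X → ℝ≥0∞} (h : IsAdmissible μ v g A) (hA : IsOpen A)
    {a b : ℝ} (hab : a ≤ b) :
    IsAdmissible μ (fun x => max a (min b (v x))) ((A ∩ v ⁻¹' Ioo a b).indicator g) A := by
  have hlip : LipschitzWith 1 fun y : ℝ => max a (min b y) :=
    (LipschitzWith.id.const_min b).const_max a
  have hopen : IsOpen (A ∩ v ⁻¹' Ioo a b) :=
    h.locLipOn.continuousOn.isOpen_inter_preimage hA isOpen_Ioo
  refine h.of_deriv hA (fun x hx => ?_) (h.measurable.indicator hopen.measurableSet)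
    fun c _ t ht hd hle => ?_
  · obtain ⟨r, hr, K, hK⟩ := h.locLipOn x hx
    exact ⟨r, hr, 1 * K, hlip.comp_lipschitzOnWith hK⟩
  rcases le_or_gt (v (c t)) a with hva | hva
  · have hmin : IsLocalMin (fun s => max a (min b (v (c s)))) t := .of_forall fun s => by
      simp only [max_eq_left ((min_le_right b _).trans hva), le_max_left]
    simp [hmin.deriv_eq_zero]
  rcases le_or_gt b (v (c t)) with hvb | hvb
  · have hmax : IsLocalMax (fun s => max a (min b (v (c s)))) t := .of_forall fun s => by
      simp only [min_eq_left hvb, max_eq_right hab, max_le hab (min_le_left b _)]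
    simp [hmax.deriv_eq_zero]
  · have heq : (fun s => max a (min b (v (c s)))) =ᶠ[𝓝 t] fun s => v (c s) := by
      filter_upwards [hd.continuousAt.eventually (Ioo_mem_nhds hva hvb)] with s hs
      rw [min_eq_right hs.2.le, max_eq_right hs.1.le]
    have hmem : c t ∈ A ∩ v ⁻¹' Ioo a b := ⟨ht, hva, hvb⟩
    rwa [heq.deriv_eq, indicator_of_mem hmem]

end Algebra

section Variation

variable [SecondCountableTopology X] {μ : Measure X} {A B O : Set X} {u u' : X → ℝ} {c : ℝ≥0∞}

lemma hasVariationLE_of_tvOpen_lt (h : tvOpen μ O u < c) (hA : IsOpen A) (hO : IsOpen O)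
    (hAO : A ⊆ O) (hu' : Measurable u') (he : u =ᵐ[μ.restrict A] u') :
    HasVariationLE μ A u' c := by
  simp only [tvOpen, iInf_lt_iff] at h
  obtain ⟨v, g, hv, hg, hconv, hlt⟩ := h
  obtain ⟨φ, hφ, hφc⟩ := extraction_of_frequently_atTop
    (frequently_lt_of_liminf_lt (by isBoundedDefault) hlt)
  choose g' hg' hae hderiv using fun i => (hg (φ i)).1.exists_isDerivUpperGradientOn hO
    fun x _ => ⟨1, one_pos, (lintegral_mono_set inter_subset_left).trans_lt
      ((hφc i).trans_le le_top)⟩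
  have hA' := hasVariationLE_of_locally (ι := Unit) hA hu' (fun _ => c) (O := fun _ _ => O)
    (v := fun _ k => v (φ k)) (fun _ k => ⟨hv (φ k), hg' k, hderiv k⟩)
    (fun _ k => (lintegral_congr_ae (ae_restrict_of_ae (hae k))).trans_le (hφc k).le)
    fun x hx => ?_
  · rwa [Fintype.sum_unique] at hA'
  obtain ⟨r, hr, hlim⟩ := l1LocConv_iff_enorm.1 hconv x (hAO hx)
  obtain ⟨s, hs, hsA⟩ := Metric.isOpen_iff.1 hA x hx
  have hballA : ball x (min r s) ⊆ A := (ball_subset_ball (min_le_right r s)).trans hsA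
  refine ⟨(), min r s, lt_min hr hs, (.of_forall fun _ => hballA.trans hAO),
    tendsto_of_tendsto_of_tendsto_of_le_of_le tendsto_const_nhds (hlim.comp hφ.tendsto_atTop)
      (fun _ => zero_le) fun k => ?_⟩
  have hcongr : (fun y => ‖v (φ k) y - u' y‖ₑ) =ᵐ[μ.restrict (ball x (min r s))]
      fun y => ‖v (φ k) y - u y‖ₑ := by
    filter_upwards [ae_restrict_of_ae_restrict_of_subset hballA he] with y hy
    rw [hy]
  exact (lintegral_congr_ae hcongr).trans_le (lintegral_mono_set
    (subset_inter (hballA.trans hAO) (ball_subset_ball (min_le_left r s))))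

lemma hasVariationLE_of_tvOpen_le (h : tvOpen μ A u ≤ c) (hA : IsOpen A) (hu : Measurable u)
    (hc : c ≠ ∞) : HasVariationLE μ A u c :=
  .of_forall_add fun _ hδ => hasVariationLE_of_tvOpen_lt
    (h.trans_lt (ENNReal.lt_add_right hc hδ)) hA hA subset_rfl hu (ae_eq_refl u)

lemma hasVariationLE_of_eventually_ball_subset {ι : Type*} [Fintype ι] {O : ι → ℕ → Set X}
    {c : ι → ℝ≥0∞} (h : ∀ n k, HasVariationLE μ (O n k) u (c n)) (hA : IsOpen A)
    (hu : Measurable u)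
    (hO : ∀ x ∈ A, ∃ n, ∃ r > (0 : ℝ), ∀ᶠ k in atTop, ball x r ⊆ O n k) :
    HasVariationLE μ A u (∑ n, c n) := by
  refine .of_forall_add fun δ hδ => ?_
  let ε : ℕ → ℝ≥0∞ := fun k => min (δ / Fintype.card ι) (2⁻¹ ^ k)
  have hε : ∀ k, ε k ≠ 0 := fun k => (lt_min
    (ENNReal.div_pos hδ (ENNReal.natCast_ne_top _)) (ENNReal.pow_pos (by simp) k)).ne'
  choose v g hadm hvu hg using fun n k => h n k (ε k) (hε k)
  have hglue := hasVariationLE_of_locally hA hu (fun n => c n + δ / Fintype.card ι) hadm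
    (fun n k => (hg n k).trans (add_le_add_right (min_le_left _ _) _)) fun x hx => ?_
  · refine hglue.mono ?_
    rw [Finset.sum_add_distrib, Finset.sum_const, Finset.card_univ, nsmul_eq_mul]
    gcongr
    exact ENNReal.mul_div_le
  obtain ⟨n, r, hr, hball⟩ := hO x hx
  refine ⟨n, r, hr, hball, tendsto_of_tendsto_of_tendsto_of_le_of_le' tendsto_const_nhds
    tendsto_two_inv_pow (.of_forall fun _ => zero_le) ?_⟩
  filter_upwards [hball] with k hk
  exact (lintegral_mono_set hk).trans ((hvu n k).trans (min_le_right _ _))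

variable [SFinite μ]

lemma tvOpen_le_liminf {v : ℕ → X → ℝ} {g : ℕ → X → ℝ≥0∞} (hA : IsOpen A)
    (h : ∀ i, IsAdmissible μ (v i) (g i) A) (hconv : L1LocConv μ A v u) :
    tvOpen μ A u ≤ liminf (fun i => ∫⁻ x in A, g i x ∂μ) atTop := by
  choose gm hgm hle using fun i => (h i).isDerivUpperGradientOn.exists_isMinimalWUG
    (h i).measurable hA (h i).locLipOn
  calc tvOpen μ A u
      ≤ liminf (fun i => ∫⁻ x in A, gm i x ∂μ) atTop :=
        iInf_le_of_le v <| iInf_le_of_le gm <| iInf_le_of_le (fun i => (h i).locLipOn) <|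
          iInf_le_of_le hgm <| iInf_le _ hconv
    _ ≤ liminf (fun i => ∫⁻ x in A, g i x ∂μ) atTop :=
        liminf_le_liminf (.of_forall fun i => lintegral_mono_ae (hle i))

lemma HasVariationLE.tvOpen_le (h : HasVariationLE μ A u c) (hA : IsOpen A) :
    tvOpen μ A u ≤ c := by
  obtain ⟨v, g, hadm, hvu, hg⟩ := h.exists_seq
  exact (tvOpen_le_liminf hA hadm (l1LocConv_of_le tendsto_two_inv_pow hvu)).trans
    (liminf_le_of_forall_le_add_two_inv_pow hg)

lemma tvOpen_empty (u : X → ℝ) : tvOpen μ ∅ u = 0 :=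
  le_antisymm (HasVariationLE.tvOpen_le
    (fun _ _ => ⟨_, _, isAdmissible_const 0 ∅, by simp, by simp⟩) isOpen_empty) zero_le

lemma tvOpen_le_of_ae_eq (hA : IsOpen A) (hO : IsOpen O) (hAO : A ⊆ O) (hu' : Measurable u')
    (he : u =ᵐ[μ.restrict A] u') : tvOpen μ A u' ≤ tvOpen μ O u :=
  le_of_forall_gt_imp_ge_of_dense fun _ hc =>
    (hasVariationLE_of_tvOpen_lt hc hA hO hAO hu' he).tvOpen_le hA

lemma tvOpen_mono (hA : IsOpen A) (hO : IsOpen O) (hAO : A ⊆ O) (hu : Measurable u) :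
    tvOpen μ A u ≤ tvOpen μ O u :=
  tvOpen_le_of_ae_eq hA hO hAO hu (ae_eq_refl u)

lemma tvOpen_union_le (hA : IsOpen A) (hB : IsOpen B) (hu : Measurable u) :
    tvOpen μ (A ∪ B) u ≤ tvOpen μ A u + tvOpen μ B u := by
  by_cases hfin : tvOpen μ A u + tvOpen μ B u = ∞
  · exact hfin ▸ le_top
  rw [ENNReal.add_eq_top, not_or] at hfin
  have hglue := hasVariationLE_of_eventually_ball_subset (ι := Bool)
    (O := fun b _ => if b then A else B) (c := fun b => if b then tvOpen μ A u else tvOpen μ B u)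
    (Bool.rec (fun _ => hasVariationLE_of_tvOpen_le le_rfl hB hu hfin.2)
      fun _ => hasVariationLE_of_tvOpen_le le_rfl hA hu hfin.1) (hA.union hB) hu ?_
  · exact (hglue.tvOpen_le (hA.union hB)).trans_eq (Fintype.sum_bool _)
  rintro x (hx | hx)
  · obtain ⟨r, hr, hs⟩ := Metric.isOpen_iff.1 hA x hx
    exact ⟨true, r, hr, .of_forall fun _ => hs⟩
  · obtain ⟨r, hr, hs⟩ := Metric.isOpen_iff.1 hB x hx
    exact ⟨false, r, hr, .of_forall fun _ => hs⟩

lemma tvOpen_iUnion_le {A : ℕ → Set X} (hA : ∀ k, IsOpen (A k)) (hmono : Monotone A)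
    (hu : Measurable u) (h : ∀ k, tvOpen μ (A k) u ≤ c) : tvOpen μ (⋃ k, A k) u ≤ c := by
  rcases eq_or_ne c ∞ with rfl | hc
  · exact le_top
  have hglue := hasVariationLE_of_eventually_ball_subset (ι := Unit) (O := fun _ k => A k)
    (fun _ k => hasVariationLE_of_tvOpen_le (h k) (hA k) hu hc) (isOpen_iUnion hA) hu
    fun x hx => ?_
  · exact (hglue.tvOpen_le (isOpen_iUnion hA)).trans_eq (Fintype.sum_unique _)
  obtain ⟨m, hm⟩ := mem_iUnion.1 hx
  obtain ⟨r, hr, hs⟩ := Metric.isOpen_iff.1 (hA m) x hm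
  exact ⟨(), r, hr, (eventually_ge_atTop m).mono fun k hk => hs.trans (hmono hk)⟩

lemma exists_tvOpen_iUnion_le_add {A : ℕ → Set X} (hA : ∀ k, IsOpen (A k)) (hmono : Monotone A)
    (hu : Measurable u) (hfin : tvOpen μ (⋃ k, A k) u ≠ ∞) {δ : ℝ≥0∞} (hδ : δ ≠ 0) :
    ∃ k, tvOpen μ (⋃ k, A k) u ≤ tvOpen μ (A k) u + δ := by
  by_contra! hlt
  have hle : tvOpen μ (⋃ k, A k) u ≤ tvOpen μ (⋃ k, A k) u - δ :=
    tvOpen_iUnion_le hA hmono hu fun k => ENNReal.le_sub_of_add_le_right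
      (ne_top_of_le_ne_top hfin (le_add_self.trans (hlt k).le)) (hlt k).le
  exact hle.not_gt (ENNReal.sub_lt_self hfin (zero_le.trans_lt (hlt 0)).ne' hδ)

lemma tvOpen_le_liminf_tvOpen {v : ℕ → X → ℝ} (hA : IsOpen A) (hv : ∀ i, Measurable (v i))
    (hconv : L1LocConv μ A v u) :
    tvOpen μ A u ≤ liminf (fun i => tvOpen μ A (v i)) atTop := by
  refine le_of_forall_gt_imp_ge_of_dense fun c hlt => ?_
  obtain ⟨φ, hφ, hφc⟩ := extraction_of_frequently_atTop
    (frequently_lt_of_liminf_lt (by isBoundedDefault) hlt)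
  choose w g hadm hwv hg using fun i =>
    hasVariationLE_of_tvOpen_lt (hφc i) hA hA subset_rfl (hv (φ i)) (ae_eq_refl _) (2⁻¹ ^ i)
      (ENNReal.pow_pos (by simp) i).ne'
  refine (tvOpen_le_liminf hA hadm (l1LocConv_iff_enorm.2 fun x hx => ?_)).trans
    (liminf_le_of_forall_le_add_two_inv_pow hg)
  obtain ⟨r, hr, hlim⟩ := l1LocConv_iff_enorm.1 hconv x hx
  refine ⟨r, hr, tendsto_of_tendsto_of_tendsto_of_le_of_le tendsto_const_nhds
    (by simpa only [add_zero] using tendsto_two_inv_pow.add (hlim.comp hφ.tendsto_atTop))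
    (fun _ => zero_le) fun i => ?_⟩
  calc ∫⁻ y in A ∩ ball x r, ‖w i y - u y‖ₑ ∂μ
      ≤ ∫⁻ y in A ∩ ball x r, ‖w i y - v (φ i) y‖ₑ + ‖v (φ i) y - u y‖ₑ ∂μ :=
        lintegral_mono fun y => by
          simpa only [sub_add_sub_cancel] using enorm_add_le (w i y - v (φ i) y) (v (φ i) y - u y)
    _ = ∫⁻ y in A ∩ ball x r, ‖w i y - v (φ i) y‖ₑ ∂μ +
          ∫⁻ y in A ∩ ball x r, ‖v (φ i) y - u y‖ₑ ∂μ :=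
        lintegral_enorm_add_left ((((hadm i).locLipOn.mono inter_subset_left).aestronglyMeasurable
          (hA.inter isOpen_ball) μ).sub (hv _).aestronglyMeasurable) _
    _ ≤ 2⁻¹ ^ i + ∫⁻ y in A ∩ ball x r, ‖v (φ i) y - u y‖ₑ ∂μ :=
        add_le_add_left ((lintegral_mono_set inter_subset_left).trans (hwv i)) _

lemma tvOpen_add_le_of_disjoint (hA : IsOpen A) (hB : IsOpen B) (hO : IsOpen O) (hAO : A ⊆ O)
    (hBO : B ⊆ O) (hAB : Disjoint A B) (hu : Measurable u) :
    tvOpen μ A u + tvOpen μ B u ≤ tvOpen μ O u := by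
  by_cases hfin : tvOpen μ O u = ∞
  · exact hfin ▸ le_top
  obtain ⟨v, g, hadm, hvu, hg⟩ := (hasVariationLE_of_tvOpen_le le_rfl hO hu hfin).exists_seq
  have hconv : L1LocConv μ O v u := l1LocConv_of_le tendsto_two_inv_pow hvu
  calc tvOpen μ A u + tvOpen μ B u
      ≤ liminf (fun i => ∫⁻ x in A, g i x ∂μ) atTop +
          liminf (fun i => ∫⁻ x in B, g i x ∂μ) atTop :=
        add_le_add (tvOpen_le_liminf hA (fun i => (hadm i).mono_set hAO) (hconv.mono_set hAO))
          (tvOpen_le_liminf hB (fun i => (hadm i).mono_set hBO) (hconv.mono_set hBO))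
    _ ≤ liminf (fun i => ∫⁻ x in A, g i x ∂μ + ∫⁻ x in B, g i x ∂μ) atTop :=
        liminf_add_liminf_le_liminf_add _ _
    _ ≤ tvOpen μ O u := liminf_le_of_forall_le_add_two_inv_pow fun i => by
        rw [← lintegral_union hB.measurableSet hAB]
        exact (lintegral_mono_set (union_subset hAO hBO)).trans (hg i)

end Variation

section Superlevel

variable {Y : Type*}

/-- The characteristic function of the superlevel set `{u > t}`. -/
def superlevel (u : Y → ℝ) (t : ℝ) : Y → ℝ :=
  {x | t < u x}.indicator fun _ => 1

lemma superlevel_apply (u : Y → ℝ) (t : ℝ) (x : Y) :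
    superlevel u t x = if t < u x then 1 else 0 := by
  simp only [superlevel, indicator, mem_ofPred_eq]

lemma superlevel_mem_Icc (u : Y → ℝ) (t : ℝ) (x : Y) : superlevel u t x ∈ Icc (0 : ℝ) 1 := by
  rw [superlevel_apply]
  split_ifs <;> simp

lemma tendsto_superlevel (u : Y → ℝ) (x : Y) {t : ℝ} {s : ℕ → ℝ} (hs : Tendsto s atTop (𝓝[>] t)) :
    Tendsto (fun n => superlevel u (s n) x) atTop (𝓝 (superlevel u t x)) := by
  obtain ⟨hlim, hgt⟩ := tendsto_nhdsWithin_iff.1 hs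
  refine tendsto_const_nhds.congr' ?_
  by_cases hx : t < u x
  · filter_upwards [hlim.eventually_lt_const hx] with n hn
    simp only [superlevel_apply, if_pos hx, if_pos hn]
  · filter_upwards [hgt] with n hn
    simp only [superlevel_apply, if_neg hx, if_neg (not_lt.2 ((not_lt.1 hx).trans (le_of_lt hn)))]

lemma measurable_uncurry_superlevel [MeasurableSpace Y] {u : Y → ℝ} (hu : Measurable u) :
    Measurable fun p : ℝ × Y => superlevel u p.1 p.2 := by
  simp only [superlevel_apply]
  exact .ite (measurableSet_lt measurable_fst (hu.comp measurable_snd)) measurable_const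
    measurable_const

lemma measurable_superlevel [MeasurableSpace Y] {u : Y → ℝ} (hu : Measurable u) (t : ℝ) :
    Measurable (superlevel u t) :=
  (measurable_uncurry_superlevel hu).comp measurable_prodMk_left

lemma lintegral_enorm_superlevel_sub (u v : Y → ℝ) (x : Y) :
    ∫⁻ t, ‖superlevel v t x - superlevel u t x‖ₑ = ‖v x - u x‖ₑ := by
  have hind : ∀ t, ‖superlevel v t x - superlevel u t x‖ₑ =
      (Ico (min (v x) (u x)) (max (v x) (u x))).indicator (fun _ => (1 : ℝ≥0∞)) t := fun t => by
    simp only [superlevel_apply, indicator, mem_Ico, min_le_iff, lt_max_iff]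
    by_cases hv : t < v x <;> by_cases hu : t < u x <;> simp [hv, hu, not_lt.1]
  simp only [hind]
  rw [lintegral_indicator_const measurableSet_Ico, Real.volume_Ico, one_mul, max_sub_min_eq_abs',
    Real.enorm_eq_ofReal_abs]

lemma lintegral_setLIntegral_enorm_superlevel_sub [MeasurableSpace Y] {μ : Measure Y} [SFinite μ]
    (A : Set Y) {u v : Y → ℝ} (hu : Measurable u) (hv : Measurable v) :
    ∫⁻ t, ∫⁻ x in A, ‖superlevel v t x - superlevel u t x‖ₑ ∂μ = ∫⁻ x in A, ‖v x - u x‖ₑ ∂μ := by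
  rw [lintegral_lintegral_swap ((measurable_uncurry_superlevel hv).sub
    (measurable_uncurry_superlevel hu)).enorm.aemeasurable]
  exact lintegral_congr fun x => lintegral_enorm_superlevel_sub u v x

end Superlevel

section DominatedConvergence

variable {Y : Type*} [MetricSpace Y] [MeasurableSpace Y] {μ : Measure Y} {A : Set Y}

lemma memL1Loc_iff_lintegrableLocOn {u : Y → ℝ} :
    MemL1Loc μ A u ↔ AEMeasurable u (μ.restrict A) ∧ LIntegrableLocOn μ (‖u ·‖ₑ) A := by
  simp only [MemL1Loc, LIntegrableLocOn, Real.enorm_eq_ofReal_abs]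

lemma LIntegrableLocOn.add_const [IsLocallyFiniteMeasure μ] {b : Y → ℝ≥0∞}
    (hb : LIntegrableLocOn μ b A) {C : ℝ≥0∞} (hC : C ≠ ∞) :
    LIntegrableLocOn μ (fun x => b x + C) A := by
  intro x hx
  obtain ⟨r, hr, hrb⟩ := hb x hx
  obtain ⟨s, hs, hfin⟩ := (nhds_basis_ball.exists_iff fun _ _ h => measure_lt_top_mono h).1
    (μ.finiteAt_nhds x)
  refine ⟨min r s, lt_min hr hs, ?_⟩
  rw [lintegral_add_right _ measurable_const, lintegral_const, Measure.restrict_apply_univ]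
  refine ENNReal.add_lt_top.2 ⟨(lintegral_mono_set (inter_subset_inter_right _
    (ball_subset_ball (min_le_left r s)))).trans_lt hrb, ENNReal.mul_lt_top hC.lt_top ?_⟩
  exact (measure_mono (inter_subset_right.trans
    (ball_subset_ball (min_le_right r s)))).trans_lt hfin

lemma l1LocConv_of_dominated {v : ℕ → Y → ℝ} {u : Y → ℝ} {b : Y → ℝ≥0∞}
    (hb : LIntegrableLocOn μ b A) (hv : ∀ n, Measurable (v n)) (hu : Measurable u)
    (hvb : ∀ n x, ‖v n x - u x‖ₑ ≤ b x)
    (hlim : ∀ x, Tendsto (fun n => v n x) atTop (𝓝 (u x))) : L1LocConv μ A v u := by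
  refine l1LocConv_iff_enorm.2 fun x hx => ?_
  obtain ⟨r, hr, hfin⟩ := hb x hx
  refine ⟨r, hr, ?_⟩
  have hdom := tendsto_lintegral_of_dominated_convergence
    (F := fun n y => ‖v n y - u y‖ₑ) b
    (fun n => ((hv n).sub hu).enorm) (fun n => .of_forall (hvb n)) hfin.ne
    (.of_forall fun y => ((hlim y).sub_const (u y)).enorm)
  simpa only [sub_self, enorm_zero, lintegral_zero] using hdom

lemma l1LocConv_of_mem_Icc [IsLocallyFiniteMeasure μ] {v : ℕ → Y → ℝ} {u : Y → ℝ}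
    (hv : ∀ n, Measurable (v n)) (hu : Measurable u) (hv01 : ∀ n x, v n x ∈ Icc (0 : ℝ) 1)
    (hu01 : ∀ x, u x ∈ Icc (0 : ℝ) 1) (hlim : ∀ x, Tendsto (fun n => v n x) atTop (𝓝 (u x))) :
    L1LocConv μ A v u := by
  have hone : LIntegrableLocOn μ (fun _ => 0 + 1) A :=
    LIntegrableLocOn.add_const (fun x _ => ⟨1, one_pos, by simp⟩) ENNReal.one_ne_top
  refine l1LocConv_of_dominated hone hv hu (fun n x => ?_) hlim
  rw [zero_add, Real.enorm_eq_ofReal_abs, ENNReal.ofReal_le_one, abs_le]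
  constructor <;> linarith [(hv01 n x).1, (hv01 n x).2, (hu01 x).1, (hu01 x).2]

lemma ae_l1LocConv_superlevel [SFinite μ] {v : ℕ → Y → ℝ} {u : Y → ℝ}
    (hv : ∀ i, Measurable (v i)) (hu : Measurable u)
    (hvu : ∑' i, ∫⁻ x in A, ‖v i x - u x‖ₑ ∂μ ≠ ∞) :
    ∀ᵐ t, L1LocConv μ A (fun i => superlevel (v i) t) (superlevel u t) := by
  have hmeas : ∀ i, Measurable fun t =>
      ∫⁻ x in A, ‖superlevel (v i) t x - superlevel u t x‖ₑ ∂μ := fun i =>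
    ((measurable_uncurry_superlevel (hv i)).sub
      (measurable_uncurry_superlevel hu)).enorm.lintegral_prod_right'
  have hsum : ∫⁻ t, ∑' i, ∫⁻ x in A, ‖superlevel (v i) t x - superlevel u t x‖ₑ ∂μ ≠ ∞ := by
    rw [lintegral_tsum fun i => (hmeas i).aemeasurable]
    simpa only [lintegral_setLIntegral_enorm_superlevel_sub A hu (hv _)]
  filter_upwards [ae_lt_top (.tsum hmeas) hsum] with t ht
  exact l1LocConv_of_le (ENNReal.tendsto_atTop_zero_of_tsum_ne_top ht.ne) fun _ => le_rfl

end DominatedConvergence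

section Ramp

/-- The piecewise linear function equal to `0` below `t` and to `1` above `t + d`. -/
def ramp (t d y : ℝ) : ℝ :=
  d⁻¹ * max t (min (t + d) y) + -(d⁻¹ * t)

lemma ramp_mem_Icc (t : ℝ) {d : ℝ} (hd : 0 < d) (y : ℝ) : ramp t d y ∈ Icc (0 : ℝ) 1 := by
  have hramp : ramp t d y = d⁻¹ * (max t (min (t + d) y) - t) := by rw [ramp]; ring
  have hle : max t (min (t + d) y) - t ≤ d := by
    linarith [max_le (show t ≤ t + d by linarith) (min_le_left (t + d) y)]
  rw [hramp, mem_Icc, inv_mul_le_iff₀ hd, mul_one]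
  exact ⟨mul_nonneg (inv_nonneg.2 hd.le) (sub_nonneg.2 (le_max_left _ _)), hle⟩

lemma measurable_ramp (t d : ℝ) : Measurable (ramp t d) := by
  unfold ramp
  fun_prop

lemma tendsto_ramp {Y : Type*} (v : Y → ℝ) (t : ℝ) (x : Y) {d : ℕ → ℝ} (hd : ∀ n, 0 < d n)
    (hlim : Tendsto d atTop (𝓝 0)) :
    Tendsto (fun n => ramp t (d n) (v x)) atTop (𝓝 (superlevel v t x)) := by
  rw [superlevel_apply]
  refine tendsto_const_nhds.congr' ?_
  split_ifs with hx
  · filter_upwards [hlim.eventually_lt_const (sub_pos.2 hx)] with n hn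
    rw [ramp, min_eq_left (by linarith), max_eq_right (by linarith [hd n])]
    field_simp [(hd n).ne']
    ring
  · refine .of_forall fun n => ?_
    simp only [ramp]
    rw [max_eq_left ((min_le_right _ _).trans (not_lt.1 hx)), add_neg_cancel]

lemma IsAdmissible.ramp {μ : Measure X} {v : X → ℝ} {g : X → ℝ≥0∞} {A : Set X}
    (h : IsAdmissible μ v g A) (hA : IsOpen A) (t : ℝ) {d : ℝ} (hd : 0 < d) :
    IsAdmissible μ (fun x => ramp t d (v x))
      (fun x => ‖d⁻¹‖ₑ * (A ∩ v ⁻¹' Ioo t (t + d)).indicator g x) A :=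
  (h.clamp hA (by linarith)).affine hA d⁻¹ (-(d⁻¹ * t))

lemma lintegral_ramp_gradient (a : ℝ) (c : ℝ≥0∞) {d : ℝ} (hd : 0 < d) :
    ∫⁻ t, ‖d⁻¹‖ₑ * {t | a ∈ Ioo t (t + d)}.indicator (fun _ => c) t = c := by
  have hset : {t | a ∈ Ioo t (t + d)} = Ioo (a - d) a := by
    ext t
    simp only [mem_ofPred_eq, mem_Ioo]
    constructor <;> rintro ⟨h₁, h₂⟩ <;> constructor <;> linarith
  rw [hset, lintegral_const_mul' _ _ enorm_ne_top, lintegral_indicator_const measurableSet_Ioo,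
    Real.volume_Ioo, sub_sub_cancel, ← Real.enorm_of_nonneg hd.le, mul_left_comm, ← enorm_mul,
    inv_mul_cancel₀ hd.ne', enorm_one, mul_one]

end Ramp

section CoareaOpenGE

variable [SecondCountableTopology X] {μ : Measure X} [IsLocallyFiniteMeasure μ] {A : Set X}
  {u : X → ℝ}

lemma measurable_perimOpen_superlevel (hA : IsOpen A) (hu : Measurable u) :
    Measurable fun t => perimOpen μ {x | t < u x} A := by
  refine measurable_of_Ioi fun a => MeasurableSet.of_mem_nhdsGT fun t ht => ?_
  by_contra hnot
  have hfreq : ∃ᶠ s in 𝓝[>] t, perimOpen μ {x | s < u x} A ≤ a := fun h =>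
    hnot (h.mono fun s hs => not_le.1 hs)
  obtain ⟨s, hs, hsa⟩ := exists_seq_forall_of_frequently hfreq
  refine absurd ?_ (not_le.2 (show a < perimOpen μ {x | t < u x} A from ht))
  calc perimOpen μ {x | t < u x} A
      ≤ liminf (fun i => tvOpen μ A (superlevel u (s i))) atTop :=
        tvOpen_le_liminf_tvOpen hA (fun i => measurable_superlevel hu (s i))
          (l1LocConv_of_mem_Icc (fun i => measurable_superlevel hu (s i))
            (measurable_superlevel hu t) (fun i => superlevel_mem_Icc u (s i))
            (superlevel_mem_Icc u t) fun x => tendsto_superlevel u x hs)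
    _ ≤ liminf (fun _ : ℕ => a) atTop := liminf_le_liminf (.of_forall hsa)
    _ = a := liminf_const a

lemma IsAdmissible.lintegral_perimOpen_superlevel_le {v : X → ℝ} {g : X → ℝ≥0∞}
    (h : IsAdmissible μ v g A) (hA : IsOpen A) (hv : Measurable v) :
    ∫⁻ t, perimOpen μ {x | t < v x} A ≤ ∫⁻ x in A, g x ∂μ := by
  let d : ℕ → ℝ := fun n => 1 / ((n : ℝ) + 1)
  have hd : ∀ n, 0 < d n := fun n => Nat.one_div_pos_of_nat
  let G : ℕ → ℝ → X → ℝ≥0∞ := fun n t x =>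
    ‖(d n)⁻¹‖ₑ * {t | v x ∈ Ioo t (t + d n)}.indicator (fun _ => g x) t
  have hG : ∀ n, Measurable (Function.uncurry (G n)) := fun n =>
    .const_mul (.indicator (h.measurable.comp measurable_snd)
      ((measurableSet_lt measurable_fst (hv.comp measurable_snd)).inter
        (measurableSet_lt (hv.comp measurable_snd) (measurable_fst.add_const _)))) _
  have hperim : ∀ t, perimOpen μ {x | t < v x} A ≤
      liminf (fun n => ∫⁻ x in A, G n t x ∂μ) atTop := fun t => by
    refine (tvOpen_le_liminf hA (fun n => h.ramp hA t (hd n)) (l1LocConv_of_mem_Icc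
      (fun n => (measurable_ramp t (d n)).comp hv) (measurable_superlevel hv t)
      (fun n x => ramp_mem_Icc t (hd n) (v x)) (superlevel_mem_Icc v t)
      fun x => tendsto_ramp v t x hd tendsto_one_div_add_atTop_nhds_zero_nat)).trans ?_
    exact liminf_le_liminf (.of_forall fun n => lintegral_mono fun x => mul_le_mul_right
      (indicator_le_indicator_of_subset inter_subset_right (fun _ => zero_le) x) _)
  calc ∫⁻ t, perimOpen μ {x | t < v x} A
      ≤ ∫⁻ t, liminf (fun n => ∫⁻ x in A, G n t x ∂μ) atTop := lintegral_mono hperim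
    _ ≤ liminf (fun n => ∫⁻ t, ∫⁻ x in A, G n t x ∂μ) atTop :=
        lintegral_liminf_le fun n => (hG n).lintegral_prod_right
    _ = liminf (fun _ : ℕ => ∫⁻ x in A, g x ∂μ) atTop := by
        congr with n
        rw [lintegral_lintegral_swap (hG n).aemeasurable]
        exact lintegral_congr fun x => lintegral_ramp_gradient (v x) (g x) (hd n)
    _ = ∫⁻ x in A, g x ∂μ := liminf_const _

lemma lintegral_perimOpen_superlevel_le (hA : IsOpen A) (hu : Measurable u) :
    ∫⁻ t, perimOpen μ {x | t < u x} A ≤ tvOpen μ A u := by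
  by_cases hfin : tvOpen μ A u = ∞
  · exact hfin ▸ le_top
  obtain ⟨v, g, hadm, hvu, hg⟩ := (hasVariationLE_of_tvOpen_le le_rfl hA hu hfin).exists_seq
  let w : ℕ → X → ℝ := fun i => A.indicator (v i)
  have hwm : ∀ i, Measurable (w i) := fun i => (hadm i).locLipOn.measurable_indicator hA
  have hwv : ∀ i, EqOn (v i) (w i) A := fun i x hx => (indicator_of_mem hx _).symm
  have hwu : ∀ i, ∫⁻ x in A, ‖w i x - u x‖ₑ ∂μ ≤ 2⁻¹ ^ i := fun i =>
    (setLIntegral_congr_fun hA.measurableSet fun x hx => by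
      simp only [hwv i hx]).trans_le (hvu i)
  have hsum : ∑' i, ∫⁻ x in A, ‖w i x - u x‖ₑ ∂μ ≠ ∞ :=
    ((ENNReal.tsum_le_tsum hwu).trans_lt (by simp [ENNReal.tsum_geometric])).ne
  have hlsc : ∀ᵐ t, perimOpen μ {x | t < u x} A ≤
      liminf (fun i => perimOpen μ {x | t < w i x} A) atTop := by
    filter_upwards [ae_l1LocConv_superlevel hwm hu hsum] with t ht
    exact tvOpen_le_liminf_tvOpen hA (fun i => measurable_superlevel (hwm i) t) ht
  calc ∫⁻ t, perimOpen μ {x | t < u x} A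
      ≤ ∫⁻ t, liminf (fun i => perimOpen μ {x | t < w i x} A) atTop := lintegral_mono_ae hlsc
    _ ≤ liminf (fun i => ∫⁻ t, perimOpen μ {x | t < w i x} A) atTop :=
        lintegral_liminf_le fun i => measurable_perimOpen_superlevel hA (hwm i)
    _ ≤ tvOpen μ A u := liminf_le_of_forall_le_add_two_inv_pow fun i =>
        (((hadm i).congr hA (hwv i)).lintegral_perimOpen_superlevel_le hA (hwm i)).trans (hg i)

end CoareaOpenGE

section Staircase

/-- The step function that starts at `a` and jumps up by `h` at each of the points
`t 0, …, t (n - 1)`. -/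
def staircase (a h : ℝ) (n : ℕ) (t : ℕ → ℝ) (y : ℝ) : ℝ :=
  h * ∑ j ∈ Finset.range n, (if t j < y then 1 else 0) + a

variable {a h : ℝ} {t : ℕ → ℝ}

lemma staircase_succ (n : ℕ) (y : ℝ) :
    staircase a h (n + 1) t y = staircase a h n t y + if t n < y then h else 0 := by
  simp only [staircase, Finset.sum_range_succ]
  split_ifs <;> ring

lemma measurable_staircase (n : ℕ) : Measurable (staircase a h n t) :=
  ((Finset.measurable_fun_sum _ fun _ _ => Measurable.ite measurableSet_Ioi measurable_const
    measurable_const).const_mul h).add_const a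

lemma staircase_eq_of_le (hh : 0 ≤ h) (ht : ∀ j : ℕ, t j < a + (j + 1 : ℕ) * h) {n : ℕ} {y : ℝ}
    (hy : a + n * h ≤ y) : staircase a h n t y = a + n * h := by
  induction n with
  | zero => simp [staircase]
  | succ n ih =>
    have hn : a + n * h ≤ y := by push_cast at hy; linarith
    rw [staircase_succ, ih hn, if_pos ((ht n).trans_le hy)]
    push_cast
    ring

lemma abs_max_sub_staircase_le (hh : 0 ≤ h)
    (ht : ∀ j : ℕ, t j ∈ Ico (a + j * h) (a + (j + 1 : ℕ) * h)) {n : ℕ} {y : ℝ}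
    (hy : y ≤ a + n * h) : |max a y - staircase a h n t y| ≤ h := by
  induction n with
  | zero => simpa [staircase, show y ≤ a by simpa using hy] using hh
  | succ n ih =>
    rw [staircase_succ]
    rcases le_or_gt y (a + n * h) with hn | hn
    · rw [if_neg (hn.trans (ht n).1).not_gt, add_zero]
      exact ih hn
    · have hay : a ≤ y := by nlinarith [n.cast_nonneg (α := ℝ)]
      rw [staircase_eq_of_le hh (fun j => (ht j).2) hn.le, max_eq_right hay, abs_le]
      push_cast at hy
      split_ifs <;> constructor <;> linarith

lemma abs_staircase_sub_le (hh : 0 ≤ h)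
    (ht : ∀ j : ℕ, t j ∈ Ico (a + j * h) (a + (j + 1 : ℕ) * h)) (n : ℕ) (y : ℝ) :
    |staircase a h n t y - max a (min (a + n * h) y)| ≤ h := by
  have hn : 0 ≤ n * h := by positivity
  rw [abs_sub_comm]
  rcases le_total y (a + n * h) with hy | hy
  · rw [min_eq_right hy]
    exact abs_max_sub_staircase_le hh ht hy
  · rw [min_eq_left hy, staircase_eq_of_le hh (fun j => (ht j).2) hy, max_eq_right (by linarith)]
    simpa using hh

lemma abs_max_min_sub_le {a : ℝ} (ha : 0 ≤ a) (y : ℝ) : |max (-a) (min a y) - y| ≤ |y| := by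
  rcases le_total a y with hy | hy
  · rw [min_eq_left hy, max_eq_right (by linarith), abs_le, abs_of_nonneg (ha.trans hy)]
    constructor <;> linarith
  · rcases le_total (-a) y with hy' | hy'
    · simp [min_eq_right hy, max_eq_right hy']
    · rw [min_eq_right hy, max_eq_left hy', abs_le, abs_of_nonpos (by linarith)]
      constructor <;> linarith

lemma tendsto_of_abs_sub_clamp_le {s h : ℕ → ℝ} {y : ℝ}
    (hs : ∀ n : ℕ, |s n - max (-n : ℝ) (min n y)| ≤ h n) (hh : Tendsto h atTop (𝓝 0)) :
    Tendsto s atTop (𝓝 y) := by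
  refine tendsto_iff_dist_tendsto_zero.2 (squeeze_zero' (.of_forall fun _ => dist_nonneg) ?_ hh)
  filter_upwards [tendsto_natCast_atTop_atTop.eventually_ge_atTop |y|] with n hn
  simpa only [Real.dist_eq, min_eq_right (le_of_abs_le hn),
    max_eq_right (neg_le_of_abs_le hn)] using hs n

lemma sum_setLIntegral_Ico_succ_le {p : ℕ → ℝ} (hp : Monotone p) (f : ℝ → ℝ≥0∞) (s : Finset ℕ) :
    ∑ j ∈ s, ∫⁻ t in Ico (p j) (p (j + 1)), f t ≤ ∫⁻ t, f t := by
  have hdisj : Pairwise (Function.onFun Disjoint fun j => Ico (p j) (p (j + 1))) :=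
    hp.pairwise_disjoint_on_Ico_succ
  rw [← lintegral_biUnion_finset (fun i _ j _ hij => hdisj hij) fun _ _ => measurableSet_Ico]
  exact setLIntegral_le_lintegral _ _

lemma exists_mem_Ico_ofReal_mul_le {a b : ℝ} (hab : a < b) {f : ℝ → ℝ≥0∞} (hf : Measurable f) :
    ∃ t ∈ Ico a b, ENNReal.ofReal (b - a) * f t ≤ ∫⁻ t in Ico a b, f t := by
  have hpos : ENNReal.ofReal (b - a) ≠ 0 := (ENNReal.ofReal_pos.2 (sub_pos.2 hab)).ne'
  obtain ⟨t, ht, hle⟩ := exists_le_setLAverage (μ := volume) (s := Ico a b)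
    (by rwa [Real.volume_Ico]) (by rw [Real.volume_Ico]; exact ENNReal.ofReal_ne_top)
    hf.aemeasurable
  rw [setLAverage_eq, Real.volume_Ico,
    ENNReal.le_div_iff_mul_le (.inl hpos) (.inl ENNReal.ofReal_ne_top), mul_comm] at hle
  exact ⟨t, ht, hle⟩

end Staircase

lemma l1LocConv_of_abs_sub_clamp_le {Y : Type*} [MetricSpace Y] [MeasurableSpace Y]
    {μ : Measure Y} [IsLocallyFiniteMeasure μ] {A : Set Y} {u : Y → ℝ} {s : ℕ → Y → ℝ}
    {h : ℕ → ℝ} (hL : MemL1Loc μ A u) (hsm : ∀ n, Measurable (s n)) (hu : Measurable u)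
    (hs : ∀ (n : ℕ) x, |s n x - max (-n : ℝ) (min n (u x))| ≤ h n) (hh1 : ∀ n, h n ≤ 1)
    (hh : Tendsto h atTop (𝓝 0)) : L1LocConv μ A s u := by
  refine l1LocConv_of_dominated
    ((memL1Loc_iff_lintegrableLocOn.1 hL).2.add_const ENNReal.one_ne_top) hsm hu (fun n x => ?_)
    fun x => tendsto_of_abs_sub_clamp_le (hs · x) hh
  have hle : |s n x - u x| ≤ |u x| + 1 :=
    calc |s n x - u x|
        ≤ |s n x - max (-n : ℝ) (min n (u x))| + |max (-n : ℝ) (min n (u x)) - u x| :=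
          abs_sub_le _ _ _
      _ ≤ |u x| + 1 := by linarith [hs n x, abs_max_min_sub_le n.cast_nonneg (u x), hh1 n]
  simp only [Real.enorm_eq_ofReal_abs]
  rw [← ENNReal.ofReal_one, ← ENNReal.ofReal_add (abs_nonneg _) zero_le_one]
  exact ENNReal.ofReal_le_ofReal hle

section CoareaOpenLE

variable [SecondCountableTopology X] {μ : Measure X} [IsLocallyFiniteMeasure μ] {A : Set X}
  {u : X → ℝ}

lemma exists_tvOpen_staircase_le (hA : IsOpen A) (hu : Measurable u)
    (hfin : ∫⁻ t, perimOpen μ {x | t < u x} A ≠ ∞) (a : ℝ) {h : ℝ} (hh : 0 < h) (n : ℕ) :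
    ∃ t : ℕ → ℝ, (∀ j : ℕ, t j ∈ Ico (a + j * h) (a + (j + 1 : ℕ) * h)) ∧
      tvOpen μ A (fun x => staircase a h n t (u x)) ≤ ∫⁻ t, perimOpen μ {x | t < u x} A := by
  have hstep : ∀ j : ℕ, a + (j + 1 : ℕ) * h - (a + j * h) = h := fun j => by push_cast; ring
  have hgrid : Monotone fun j : ℕ => a + j * h :=
    monotone_nat_of_le_succ fun j => by linarith [hstep j]
  choose t ht hle using fun j : ℕ => exists_mem_Ico_ofReal_mul_le
    (sub_pos.1 ((hstep j).symm ▸ hh)) (measurable_perimOpen_superlevel (μ := μ) hA hu)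
  simp only [hstep, ← Real.enorm_of_nonneg hh.le] at hle
  have htop : ∀ j, perimOpen μ {x | t j < u x} A ≠ ∞ := fun j hj => by
    have hj' := (hle j).trans_lt ((setLIntegral_le_lintegral _ _).trans_lt hfin.lt_top)
    rw [hj, ENNReal.mul_top (enorm_ne_zero.2 hh.ne')] at hj'
    exact absurd rfl hj'.ne
  have hvar : HasVariationLE μ A (fun x => h * ∑ j ∈ Finset.range n, superlevel u (t j) x + a)
      (‖h‖ₑ * ∑ j ∈ Finset.range n, perimOpen μ {x | t j < u x} A) :=
    (HasVariationLE.sum (fun j _ => hasVariationLE_of_tvOpen_le le_rfl hA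
      (measurable_superlevel hu (t j)) (htop j)) hA
      fun j _ => measurable_superlevel hu (t j)).affine hA h a
  simp only [superlevel_apply] at hvar
  refine ⟨t, ht, (hvar.tvOpen_le hA).trans ?_⟩
  rw [Finset.mul_sum]
  exact (Finset.sum_le_sum fun j _ => hle j).trans (sum_setLIntegral_Ico_succ_le hgrid _ _)

lemma tvOpen_le_lintegral_perimOpen_superlevel (hA : IsOpen A) (hu : Measurable u)
    (hL : MemL1Loc μ A u) : tvOpen μ A u ≤ ∫⁻ t, perimOpen μ {x | t < u x} A := by
  by_cases hfin : ∫⁻ t, perimOpen μ {x | t < u x} A = ∞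
  · exact hfin ▸ le_top
  let h : ℕ → ℝ := fun n => 1 / ((n : ℝ) + 1)
  have hh : ∀ n, 0 < h n := fun n => Nat.one_div_pos_of_nat
  have hh1 : ∀ n, h n ≤ 1 := fun n => (Nat.one_div_le_one_div n.zero_le).trans (by simp)
  choose t ht hle using fun n : ℕ =>
    exists_tvOpen_staircase_le hA hu hfin (-n) (hh n) (2 * n * (n + 1))
  let s : ℕ → X → ℝ := fun n x => staircase (-n) (h n) (2 * n * (n + 1)) (t n) (u x)
  have hs : ∀ n x, |s n x - max (-n : ℝ) (min n (u x))| ≤ h n := fun n x => by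
    have htop : -(n : ℝ) + (2 * n * (n + 1) : ℕ) * h n = n := by
      simp only [h]
      push_cast
      field_simp
      ring
    simpa only [htop] using abs_staircase_sub_le (hh n).le (ht n) (2 * n * (n + 1)) (u x)
  have hconv : L1LocConv μ A s u := l1LocConv_of_abs_sub_clamp_le hL
    (fun n => (measurable_staircase _).comp hu) hu hs hh1 tendsto_one_div_add_atTop_nhds_zero_nat
  calc tvOpen μ A u
      ≤ liminf (fun n => tvOpen μ A (s n)) atTop :=
        tvOpen_le_liminf_tvOpen hA (fun n => (measurable_staircase _).comp hu) hconv
    _ ≤ liminf (fun _ : ℕ => ∫⁻ t, perimOpen μ {x | t < u x} A) atTop :=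
        liminf_le_liminf (.of_forall hle)
    _ = ∫⁻ t, perimOpen μ {x | t < u x} A := liminf_const _

end CoareaOpenLE

section LipschitzApprox

variable {Y : Type*} [PseudoEMetricSpace Y]

/-- The Lipschitz regularization (Pasch–Hausdorff envelope) of `g` truncated at height `m`: the
largest `m`-Lipschitz function below `min g m`. It increases to `g` when `g` is lower
semicontinuous. -/
def lipschitzApprox (g : Y → ℝ≥0∞) (m : ℕ) (x : Y) : ℝ≥0∞ := ⨅ y, min (g y) m + m * edist x y

lemma lipschitzApprox_le (g : Y → ℝ≥0∞) (m : ℕ) (x : Y) : lipschitzApprox g m x ≤ g x :=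
  (iInf_le _ x).trans (by simp)

lemma lipschitzApprox_le_natCast (g : Y → ℝ≥0∞) (m : ℕ) (x : Y) : lipschitzApprox g m x ≤ m :=
  (iInf_le _ x).trans (by simp)

lemma lipschitzApprox_mono (g : Y → ℝ≥0∞) {k m : ℕ} (h : k ≤ m) (x : Y) :
    lipschitzApprox g k x ≤ lipschitzApprox g m x :=
  iInf_mono fun y => by gcongr

lemma le_lipschitzApprox {g : Y → ℝ≥0∞} {m : ℕ} {c : ℝ≥0∞} (hc : ∀ x, c ≤ g x) (hm : c ≤ m)
    (x : Y) : c ≤ lipschitzApprox g m x :=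
  le_iInf fun y => (le_min (hc y) hm).trans le_self_add

lemma lipschitzApprox_le_add_mul_edist (g : Y → ℝ≥0∞) (m : ℕ) (x y : Y) :
    lipschitzApprox g m x ≤ lipschitzApprox g m y + m * edist x y := by
  unfold lipschitzApprox
  rw [ENNReal.iInf_add]
  refine iInf_mono fun z => ?_
  rw [add_assoc, ← mul_add, add_comm (edist y z)]
  gcongr
  exact edist_triangle x y z

lemma continuous_lipschitzApprox (g : Y → ℝ≥0∞) (m : ℕ) : Continuous (lipschitzApprox g m) :=
  continuous_of_le_add_edist m (ENNReal.natCast_ne_top m) (lipschitzApprox_le_add_mul_edist g m)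

lemma le_iSup_lipschitzApprox {g : Y → ℝ≥0∞} (hg : LowerSemicontinuous g) (x : Y) :
    g x ≤ ⨆ m, lipschitzApprox g m x := by
  refine le_of_forall_lt fun a ha => ?_
  obtain ⟨b, hab, hb⟩ := exists_between ha
  have hb_top : b ≠ ∞ := ne_top_of_lt hb
  obtain ⟨r, hr, hball⟩ := Metric.nhds_basis_eball.eventually_iff.1 (hg x b hb)
  obtain ⟨m, hm⟩ := ENNReal.exists_nat_gt hb_top
  obtain ⟨k, hk⟩ := ENNReal.exists_nat_mul_gt hr.ne' hb_top
  refine hab.trans_le (le_iSup_of_le (max m k) (le_iInf fun y => ?_))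
  by_cases hy : edist y x < r
  · refine le_trans (le_min (hball hy).le (hm.le.trans ?_)) le_self_add
    exact_mod_cast le_max_left m k
  · refine le_trans (hk.le.trans ?_) le_add_self
    rw [edist_comm]
    exact mul_le_mul' (by exact_mod_cast le_max_right m k) (not_lt.1 hy)

lemma le_liminf_lipschitzApprox {g : Y → ℝ≥0∞} (hg : LowerSemicontinuous g) {x : Y} {y : ℕ → Y}
    {φ : ℕ → ℕ} (hφ : Tendsto φ atTop atTop) (hy : Tendsto y atTop (𝓝 x)) :
    g x ≤ liminf (fun j => lipschitzApprox g (φ j) (y j)) atTop := by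
  refine (le_iSup_lipschitzApprox hg x).trans (iSup_le fun k => ?_)
  have htendsto : Tendsto (fun j => lipschitzApprox g k (y j)) atTop (𝓝 (lipschitzApprox g k x)) :=
    ((continuous_lipschitzApprox g k).tendsto x).comp hy
  rw [← htendsto.liminf_eq]
  exact liminf_le_liminf ((hφ.eventually_ge_atTop k).mono fun j hj => lipschitzApprox_mono g hj _)

end LipschitzApprox

section Chains

variable {Y : Type*} [MetricSpace Y] {g : Y → ℝ≥0∞} {F Z : Set Y} {δ : ℝ} {x y : Y}

/-- `IsChainCost g F Z δ x c`: some finite chain in `Z` with steps of length at most `δ` leads from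
`x` to `F` and has weighted length `c = ∑ g (xᵢ) d(xᵢ, xᵢ₊₁)`. -/
inductive IsChainCost (g : Y → ℝ≥0∞) (F Z : Set Y) (δ : ℝ) : Y → ℝ≥0∞ → Prop
  | base (x : Y) : x ∈ F → x ∈ Z → IsChainCost g F Z δ x 0
  | step (x y : Y) (c : ℝ≥0∞) : x ∈ Z → dist x y ≤ δ → IsChainCost g F Z δ y c →
      IsChainCost g F Z δ x (g x * edist x y + c)

/-- The `g`-weighted distance to `F` along chains in `Z` with steps of length at most `δ`; it is
`∞` at points that no such chain connects to `F`. -/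
def chainDist (g : Y → ℝ≥0∞) (F Z : Set Y) (δ : ℝ) (x : Y) : ℝ≥0∞ :=
  ⨅ (c : ℝ≥0∞) (_ : IsChainCost g F Z δ x c), c

lemma chainDist_lt_iff {s : ℝ≥0∞} :
    chainDist g F Z δ x < s ↔ ∃ c, IsChainCost g F Z δ x c ∧ c < s := by
  simp only [chainDist, iInf_lt_iff, exists_prop]

lemma chainDist_le_mul_edist_add (hx : x ∈ Z) (h : dist x y ≤ δ) :
    chainDist g F Z δ x ≤ g x * edist x y + chainDist g F Z δ y := by
  unfold chainDist
  rw [ENNReal.add_iInf]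
  refine le_iInf fun c => ?_
  by_cases hc : IsChainCost g F Z δ y c
  · simp only [hc, iInf_pos]
    exact iInf₂_le _ (.step x y c hx h hc)
  · simp [hc]

lemma chainDist_eq_zero (hF : x ∈ F) (hx : x ∈ Z) : chainDist g F Z δ x = 0 :=
  le_antisymm (iInf₂_le _ (.base x hF hx)) zero_le

/-- The cutoff function with value `1` on `F` that decreases with the chain distance to `F` and
vanishes where this distance is at least `1`. -/
def chainPotential (g : Y → ℝ≥0∞) (F Z : Set Y) (δ : ℝ) (x : Y) : ℝ :=
  (1 - chainDist g F Z δ x).toReal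

lemma chainPotential_nonneg : 0 ≤ chainPotential g F Z δ x := ENNReal.toReal_nonneg

lemma chainPotential_le_one : chainPotential g F Z δ x ≤ 1 := by
  rw [← ENNReal.toReal_one]
  exact ENNReal.toReal_mono ENNReal.one_ne_top tsub_le_self

lemma chainPotential_eq_one (hF : x ∈ F) (hx : x ∈ Z) : chainPotential g F Z δ x = 1 := by
  simp [chainPotential, chainDist_eq_zero hF hx]

lemma chainPotential_sub_le (hx : x ∈ Z) (hgx : g x ≠ ∞) (h : dist x y ≤ δ) :
    chainPotential g F Z δ y - chainPotential g F Z δ x ≤ (g x).toReal * dist x y := by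
  have hstep : 1 - chainDist g F Z δ y ≤ (1 - chainDist g F Z δ x) + g x * edist x y := by
    rw [tsub_le_iff_right, add_assoc]
    exact le_tsub_add.trans (add_le_add_right (chainDist_le_mul_edist_add hx h) _)
  have hfin : 1 - chainDist g F Z δ x ≠ ∞ := ne_top_of_le_ne_top ENNReal.one_ne_top tsub_le_self
  have hmul_fin : g x * edist x y ≠ ∞ := ENNReal.mul_ne_top hgx (edist_ne_top _ _)
  rw [sub_le_iff_le_add', dist_edist, ← ENNReal.toReal_mul]
  exact (ENNReal.toReal_mono (ENNReal.add_ne_top.2 ⟨hfin, hmul_fin⟩) hstep).trans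
    ENNReal.toReal_add_le

lemma abs_chainPotential_sub_le (hx : x ∈ Z) (hy : y ∈ Z) {a : ℝ} (ha : 0 ≤ a)
    (hgx : g x ≤ ENNReal.ofReal a) (hgy : g y ≤ ENNReal.ofReal a) (h : dist x y ≤ δ) :
    |chainPotential g F Z δ x - chainPotential g F Z δ y| ≤ a * dist x y := by
  have sub_le : ∀ {p q : Y}, p ∈ Z → g p ≤ ENNReal.ofReal a → dist p q ≤ δ →
      chainPotential g F Z δ q - chainPotential g F Z δ p ≤ a * dist p q := fun hp hgp hpq =>
    (chainPotential_sub_le hp (ne_top_of_le_ne_top ENNReal.ofReal_ne_top hgp) hpq).trans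
      (mul_le_mul_of_nonneg_right (ENNReal.toReal_le_of_le_ofReal ha hgp) dist_nonneg)
  refine abs_sub_le_iff.2 ⟨?_, sub_le hx hgx h⟩
  rw [dist_comm] at h ⊢
  exact sub_le hy hgy h

lemma enorm_deriv_chainPotential_le (hg : Continuous g) {V : Set Y} (hδ : 0 < δ) (hV : IsOpen V)
    (hVZ : V ⊆ Z) {c : ℝ → Y} (hc : LipschitzWith 1 c) {t : ℝ} (ht : c t ∈ V) :
    ‖deriv (fun s => chainPotential g F Z δ (c s)) t‖ₑ ≤ g (c t) := by
  refine ENNReal.le_of_forall_pos_le_add fun a ha hfin => ?_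
  obtain ⟨b, hb⟩ : ∃ b : ℝ≥0, (b : ℝ≥0∞) = g (c t) + a :=
    ⟨_, ENNReal.coe_toNNReal (ENNReal.add_ne_top.2 ⟨hfin.ne, ENNReal.coe_ne_top⟩)⟩
  have hlt : g (c t) < ENNReal.ofReal b := by
    rw [ENNReal.ofReal_coe_nnreal, hb]
    exact ENNReal.lt_add_right hfin.ne (by exact_mod_cast ha.ne')
  have hcont := hc.continuous.tendsto t
  rw [← hb, ← ofReal_norm, ← ENNReal.ofReal_coe_nnreal]
  refine ENNReal.ofReal_le_ofReal (norm_deriv_le_of_lip' b.coe_nonneg ?_)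
  filter_upwards [((hg.tendsto _).comp hcont).eventually_lt_const hlt,
    hcont.eventually (hV.mem_nhds ht), hcont.eventually (ball_mem_nhds _ hδ)] with s hgs hsV hsδ
  refine (abs_chainPotential_sub_le (hVZ hsV) (hVZ ht) b.coe_nonneg hgs.le hlt.le hsδ.le).trans ?_
  gcongr
  simpa [Real.dist_eq] using hc.dist_le_mul s t

lemma locLipOn_chainPotential {m : ℕ} (hg : ∀ x, g x ≤ m) (hδ : 0 < δ) :
    LocLipOn (chainPotential g F Z δ) Z := by
  refine fun x _ => ⟨δ / 2, half_pos hδ, m, LipschitzOnWith.of_dist_le_mul fun y hy z hz => ?_⟩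
  have hyz : dist y z ≤ δ := by
    linarith [dist_triangle_right y z x, mem_ball.1 hy.2, mem_ball.1 hz.2]
  exact abs_chainPotential_sub_le hy.1 hz.1 (NNReal.coe_nonneg _) (by simpa using hg y)
    (by simpa using hg z) hyz

end Chains

section DelayedPath

variable {Y : Type*}

/-- Wait at `x` for time `d`, then follow `σ`. -/
def delayedPath (x : Y) (d : ℝ) (σ : ℝ → Y) (t : ℝ) : Y := if t < d then x else σ (t - d)

lemma lintegral_delayedPath (g : Y → ℝ≥0∞) (x : Y) (σ : ℝ → Y) {d l : ℝ} (hd : 0 ≤ d)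
    (hl : 0 ≤ l) :
    ∫⁻ t in Ico 0 (d + l), g (delayedPath x d σ t) =
      g x * ENNReal.ofReal d + ∫⁻ t in Ico 0 l, g (σ t) := by
  rw [← Ico_union_Ico_eq_Ico hd (le_add_of_nonneg_right hl),
    lintegral_union measurableSet_Ico (Ico_disjoint_Ico_same)]
  congr 1
  · rw [setLIntegral_congr_fun (g := fun _ => g x) measurableSet_Ico
      fun t ht => by simp only [delayedPath, if_pos ht.2], setLIntegral_const, Real.volume_Ico,
      sub_zero]
  · rw [setLIntegral_congr_fun (g := fun t => g (σ (t - d))) measurableSet_Ico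
      fun t ht => by simp only [delayedPath, if_neg (not_lt.2 ht.1)],
      ← lintegral_indicator measurableSet_Ico, ← lintegral_indicator measurableSet_Ico,
      ← lintegral_sub_right_eq_self ((Ico 0 l).indicator fun t => g (σ t)) d]
    refine lintegral_congr fun t => ?_
    simp only [indicator, mem_Ico, sub_nonneg, sub_lt_iff_lt_add']

end DelayedPath

section QuasiPaths

variable {Y : Type*} [MetricSpace Y] [MeasurableSpace Y] {g : Y → ℝ≥0∞} {F Z : Set Y} {δ l : ℝ}
  {x y : Y} {σ : ℝ → Y}

lemma isAdmissible_chainPotential {μ : Measure Y} (hg : Measurable g) {V : Set Y} {m : ℕ}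
    (hδ : 0 < δ) (hV : IsOpen V) (hVZ : V ⊆ Z) :
    IsAdmissible μ (chainPotential (lipschitzApprox g m) F Z δ) g V where
  locLipOn := (locLipOn_chainPotential (lipschitzApprox_le_natCast g m) hδ).mono hVZ
  measurable := hg
  isDerivUpperGradientOn :=
    .of_forall_deriv (ι := Empty) (v := fun e => e.elim) (g := fun e => e.elim)
      (Oi := fun e => e.elim) (fun e => e.elim) (fun e => e.elim) (fun e => e.elim)
      fun _ hc _ ht _ => (enorm_deriv_chainPotential_le (continuous_lipschitzApprox g m) hδ hV hVZ
        hc ht).trans (lipschitzApprox_le g m _)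

/-- `σ` is a path in `Z` that starts at `x`, lies in `F` from time `l` on, and moves with speed at
most `1` up to an error `δ`. It may be discontinuous: the typical example visits the points of a
chain one after the other. -/
structure IsQuasiPath (F Z : Set Y) (δ : ℝ) (x : Y) (l : ℝ) (σ : ℝ → Y) : Prop where
  nonneg : 0 ≤ l
  measurable : Measurable σ
  mem : ∀ t, σ t ∈ Z
  dist_start_le : ∀ t, dist x (σ t) ≤ max 0 t
  dist_le : ∀ s t, dist (σ s) (σ t) ≤ dist s t + δ
  mem_of_le : ∀ t, l ≤ t → σ t ∈ F

lemma isQuasiPath_const (hδ : 0 ≤ δ) (hF : x ∈ F) (hx : x ∈ Z) :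
    IsQuasiPath F Z δ x 0 fun _ => x where
  nonneg := le_rfl
  measurable := measurable_const
  mem _ := hx
  dist_start_le t := by simp
  dist_le s t := by rw [dist_self]; positivity
  mem_of_le _ _ := hF

lemma IsQuasiPath.delayedPath (h : IsQuasiPath F Z δ y l σ) (hx : x ∈ Z) (hxy : dist x y ≤ δ) :
    IsQuasiPath F Z δ x (dist x y + l) (delayedPath x (dist x y) σ) := by
  have dist_start : ∀ {t}, dist x y ≤ t → dist x (σ (t - dist x y)) ≤ t := fun {t} ht => by
    have := h.dist_start_le (t - dist x y)
    rw [max_eq_right (by linarith)] at this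
    linarith [dist_triangle x y (σ (t - dist x y))]
  have dist_jump : ∀ {s t}, s < dist x y → dist x y ≤ t →
      dist x (σ (t - dist x y)) ≤ dist s t + δ := fun {s t} hs ht => by
    have := dist_start ht
    rw [dist_comm s t, Real.dist_eq]
    linarith [le_abs_self (t - s)]
  refine ⟨add_nonneg dist_nonneg h.nonneg,
    Measurable.ite measurableSet_Iio measurable_const
      (h.measurable.comp (measurable_id.sub_const _)), fun t => ?_, fun t => ?_, fun s t => ?_,
    fun t ht => ?_⟩ <;> unfold PaperBV.delayedPath
  · split_ifs
    exacts [hx, h.mem _]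
  · split_ifs with ht
    · simp
    · exact (dist_start (not_lt.1 ht)).trans (le_max_right _ _)
  · have hδ : 0 ≤ δ := dist_nonneg.trans hxy
    split_ifs with hs ht ht
    · rw [dist_self]; positivity
    · exact dist_jump hs (not_lt.1 ht)
    · rw [dist_comm, dist_comm s]; exact dist_jump ht (not_lt.1 hs)
    · simpa using h.dist_le (s - dist x y) (t - dist x y)
  · rw [if_neg (by linarith [h.nonneg])]
    exact h.mem_of_le _ (by linarith)

lemma IsChainCost.exists_isQuasiPath (hδ : 0 ≤ δ) {c : ℝ≥0∞} (h : IsChainCost g F Z δ x c) :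
    ∃ l σ, IsQuasiPath F Z δ x l σ ∧ ∫⁻ t in Ico 0 l, g (σ t) = c := by
  induction h with
  | base x hF hZ => exact ⟨0, _, isQuasiPath_const hδ hF hZ, by simp⟩
  | step x y c hx hxy _ ih =>
    obtain ⟨l, σ, hσ, hc⟩ := ih
    refine ⟨_, _, hσ.delayedPath hx hxy, ?_⟩
    rw [lintegral_delayedPath _ _ _ dist_nonneg hσ.nonneg, hc, edist_dist]

end QuasiPaths

lemma le_toReal_div_of_setLIntegral_Ico_le {f : ℝ → ℝ≥0∞} {l : ℝ} {c s : ℝ≥0∞} (hc₀ : c ≠ 0)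
    (hc : c ≠ ∞) (hf : ∀ t, c ≤ f t) (hs : s ≠ ∞) (hle : ∫⁻ t in Ico 0 l, f t ≤ s) :
    l ≤ (s / c).toReal := by
  have hmul : c * ENNReal.ofReal l ≤ s := calc
    c * ENNReal.ofReal l = ∫⁻ _ in Ico 0 l, c := by
      rw [setLIntegral_const, Real.volume_Ico, sub_zero]
    _ ≤ ∫⁻ t in Ico 0 l, f t := lintegral_mono hf
    _ ≤ s := hle
  rw [← ENNReal.ofReal_le_iff_le_toReal (ENNReal.div_ne_top hs hc₀),
    ENNReal.le_div_iff_mul_le (.inl hc₀) (.inl hc), mul_comm]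
  exact hmul

section LimitCurves

variable {Y : Type*} [MetricSpace Y] {F Z : Set Y} {x : Y}

/-- A diagonal extraction over a countable dense set of times, as in the Arzelà–Ascoli theorem; the
maps `σ k` need not be continuous. -/
lemma exists_subseq_tendsto_lipschitzWith_of_dist_le_add {S : Type*} [PseudoMetricSpace S]
    [TopologicalSpace.SeparableSpace S] (hZ : IsCompact Z) {σ : ℕ → S → Y} {δ : ℕ → ℝ}
    (hσ : ∀ k t, σ k t ∈ Z) (hdist : ∀ k s t, dist (σ k s) (σ k t) ≤ dist s t + δ k)
    (hδ : Tendsto δ atTop (𝓝 0)) :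
    ∃ τ : S → Y, LipschitzWith 1 τ ∧ ∃ ψ : ℕ → ℕ, StrictMono ψ ∧
      ∀ t, Tendsto (fun j => σ (ψ j) t) atTop (𝓝 (τ t)) := by
  obtain ⟨D, hD_count, hD⟩ := TopologicalSpace.exists_countable_dense S
  have := hD_count.to_subtype
  obtain ⟨τ₀, -, ψ, hψ, hτ₀⟩ := (isCompact_univ_pi fun _ : D => hZ).tendsto_subseq
    (x := fun k (q : D) => σ k q) fun k q _ => hσ k q
  have hδψ : Tendsto (fun j => δ (ψ j)) atTop (𝓝 0) := hδ.comp hψ.tendsto_atTop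
  have hcauchy : ∀ t, CauchySeq fun j => σ (ψ j) t := fun t => by
    refine Metric.cauchySeq_iff.2 fun ε hε => ?_
    obtain ⟨q, hqD, hq⟩ := hD.exists_dist_lt t (show 0 < ε / 5 by positivity)
    obtain ⟨N, hN⟩ := eventually_atTop.1 (hδψ.eventually_lt_const (show 0 < ε / 5 by positivity))
    obtain ⟨M, hM⟩ := Metric.cauchySeq_iff.1 (tendsto_pi_nhds.1 hτ₀ ⟨q, hqD⟩).cauchySeq (ε / 5)
      (by positivity)
    refine ⟨max N M, fun i hi j hj => ?_⟩
    have hiq := hdist (ψ i) t q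
    have hjq := hdist (ψ j) t q
    have hij : dist (σ (ψ i) q) (σ (ψ j) q) < ε / 5 :=
      hM i (le_of_max_le_right hi) j (le_of_max_le_right hj)
    linarith [hN i (le_of_max_le_left hi), hN j (le_of_max_le_left hj),
      dist_triangle4_right (σ (ψ i) t) (σ (ψ j) t) (σ (ψ i) q) (σ (ψ j) q)]
  choose τ _ hτ using fun t => cauchySeq_tendsto_of_isComplete hZ.isComplete
    (fun j => hσ (ψ j) t) (hcauchy t)
  refine ⟨τ, LipschitzWith.of_dist_le_mul fun s t => ?_, ψ, hψ, hτ⟩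
  rw [NNReal.coe_one, one_mul, ← add_zero (dist s t)]
  exact le_of_tendsto_of_tendsto' ((hτ s).dist (hτ t)) (hδψ.const_add _) fun j => hdist _ s t

variable [MeasurableSpace Y] {δ l : ℕ → ℝ} {σ : ℕ → ℝ → Y}

lemma exists_subseq_tendsto_curve (hF : IsClosed F) (hZ : IsCompact Z)
    (hσ : ∀ k, IsQuasiPath F Z (δ k) x (l k) (σ k)) (hδ : Tendsto δ atTop (𝓝 0)) {L : ℝ}
    (hL : ∀ k, l k ≤ L) :
    ∃ γ : Curve Y, γ.toFun 0 = x ∧ γ.toFun γ.len ∈ F ∧ ∃ ψ : ℕ → ℕ, StrictMono ψ ∧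
      Tendsto (fun j => l (ψ j)) atTop (𝓝 γ.len) ∧
      ∀ t, Tendsto (fun j => σ (ψ j) t) atTop (𝓝 (γ.toFun t)) := by
  obtain ⟨l₀, hl₀, φ, hφ, hlφ⟩ := (isCompact_Icc (a := 0) (b := L)).tendsto_subseq
    fun k => ⟨(hσ k).nonneg, hL k⟩
  obtain ⟨τ, hτ, ψ, hψ, hστ⟩ := exists_subseq_tendsto_lipschitzWith_of_dist_le_add hZ
    (fun k => (hσ (φ k)).mem) (fun k => (hσ (φ k)).dist_le) (hδ.comp hφ.tendsto_atTop)
  have hlψ := hlφ.comp hψ.tendsto_atTop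
  have hδψ := hδ.comp (hφ.comp hψ).tendsto_atTop
  refine ⟨⟨l₀, hl₀.1, τ, hτ.lipschitzOnWith⟩, ?_, ?_, φ ∘ ψ, hφ.comp hψ, hlψ, hστ⟩
  · have hstart : ∀ k, σ k 0 = x := fun k =>
      (dist_le_zero.1 (by simpa using (hσ k).dist_start_le 0)).symm
    exact tendsto_nhds_unique (by simpa only [hstart] using hστ 0) tendsto_const_nhds
  · have hmem : ∀ j, σ (φ (ψ j)) (l (φ (ψ j))) ∈ F := fun j => (hσ _).mem_of_le _ le_rfl
    refine hF.mem_of_tendsto (b := atTop) ?_ (Eventually.of_forall hmem)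
    refine (hστ l₀).congr_dist (squeeze_zero (fun _ => dist_nonneg)
      (fun j => (hσ (φ (ψ j))).dist_le l₀ (l (φ (ψ j)))) ?_)
    simpa using ((tendsto_const_nhds (x := l₀)).dist hlψ).add hδψ

lemma Curve.integral_le_of_tendsto {g : Y → ℝ≥0∞} {f : ℕ → Y → ℝ≥0∞} (hf : ∀ j, Measurable (f j))
    (hσ : ∀ j, Measurable (σ j)) (γ : Curve Y) (hl : Tendsto l atTop (𝓝 γ.len))
    (hliminf : ∀ t, g (γ.toFun t) ≤ liminf (fun j => f j (σ j t)) atTop) {s : ℝ≥0∞}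
    (hs : ∀ j, ∫⁻ t in Ico 0 (l j), f j (σ j t) ≤ s) : γ.integral g ≤ s := by
  let F : ℕ → ℝ → ℝ≥0∞ := fun j => (Ico 0 (l j)).indicator fun t => f j (σ j t)
  have hF : ∀ j, ∫⁻ t, F j t ≤ s := fun j => by
    rw [lintegral_indicator measurableSet_Ico]
    exact hs j
  have hpointwise : ∀ t, (Ico 0 γ.len).indicator (fun t => g (γ.toFun t)) t ≤
      liminf (fun j => F j t) atTop := fun t => by
    refine indicator_apply_le' (fun ht => (hliminf t).trans (liminf_le_liminf ?_)) fun _ => zero_le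
    filter_upwards [hl.eventually_const_lt ht.2] with j hj
    exact (indicator_of_mem (show t ∈ Ico 0 (l j) from ⟨ht.1, hj⟩) fun t => f j (σ j t)).ge
  calc γ.integral g = ∫⁻ t, (Ico 0 γ.len).indicator (fun t => g (γ.toFun t)) t := by
        rw [lintegral_indicator measurableSet_Ico, Curve.integral,
          setLIntegral_congr Ico_ae_eq_Icc.symm]
    _ ≤ ∫⁻ t, liminf (fun j => F j t) atTop := lintegral_mono hpointwise
    _ ≤ liminf (fun j => ∫⁻ t, F j t) atTop :=
        lintegral_liminf_le fun j => ((hf j).comp (hσ j)).indicator measurableSet_Ico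
    _ ≤ s := liminf_le_of_frequently_le' (Frequently.of_forall hF)

end LimitCurves

lemma exists_curve_integral_le_of_frequently_chainDist_lt {g : X → ℝ≥0∞}
    (hg : LowerSemicontinuous g) {c : ℝ≥0∞} (hc₀ : c ≠ 0) (hc : c ≠ ∞) (hgc : ∀ x, c ≤ g x)
    {F Z : Set X} (hF : IsClosed F) (hZ : IsCompact Z) {x : X} {s : ℝ≥0∞} (hs : s ≠ ∞)
    {δ : ℕ → ℝ} (hδ : Tendsto δ atTop (𝓝 0)) (hδ₀ : ∀ m, 0 ≤ δ m)
    (h : ∃ᶠ m in atTop, chainDist (lipschitzApprox g m) F Z (δ m) x < s) :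
    ∃ γ : Curve X, γ.toFun 0 = x ∧ γ.toFun γ.len ∈ F ∧ γ.integral g ≤ s := by
  obtain ⟨N, hN⟩ := ENNReal.exists_nat_gt hc
  obtain ⟨φ, hφ, hφ_lt⟩ := extraction_of_frequently_atTop
    (h.and_eventually (eventually_ge_atTop N))
  have hquasi : ∀ k, ∃ l σ, IsQuasiPath F Z (δ (φ k)) x l σ ∧
      ∫⁻ t in Ico 0 l, lipschitzApprox g (φ k) (σ t) ≤ s := fun k => by
    obtain ⟨a, ha, has⟩ := chainDist_lt_iff.1 (hφ_lt k).1
    obtain ⟨l, σ, hσ, hint⟩ := ha.exists_isQuasiPath (hδ₀ _)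
    exact ⟨l, σ, hσ, hint.trans_le has.le⟩
  choose l σ hσ hint using hquasi
  have hlen : ∀ k, l k ≤ (s / c).toReal := fun k => by
    have hcN : c ≤ φ k := hN.le.trans (by exact_mod_cast (hφ_lt k).2)
    exact le_toReal_div_of_setLIntegral_Ico_le hc₀ hc
      (fun t => le_lipschitzApprox hgc hcN (σ k t)) hs (hint k)
  obtain ⟨γ, hγ₀, hγF, ψ, hψ, hlψ, hσψ⟩ :=
    exists_subseq_tendsto_curve hF hZ hσ (hδ.comp hφ.tendsto_atTop) hlen
  exact ⟨γ, hγ₀, hγF, γ.integral_le_of_tendsto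
    (fun j => (continuous_lipschitzApprox g (φ (ψ j))).measurable) (fun j => (hσ (ψ j)).measurable)
    hlψ (fun t => le_liminf_lipschitzApprox hg (hφ.comp hψ).tendsto_atTop (hσψ t))
    fun j => hint (ψ j)⟩

lemma UGIneq.mono_fun {Y : Type*} [MetricSpace Y] {w : Y → ℝ} {g g' : Y → ℝ≥0∞} {γ : Curve Y}
    (h : UGIneq w g γ) (hle : g ≤ g') : UGIneq w g' γ :=
  h.trans (lintegral_mono fun _ => hle _)

section UpperGradients

variable {Y : Type*} [MetricSpace Y] [MeasurableSpace Y] {μ : Measure Y} {w : Y → ℝ}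
  {g : Y → ℝ≥0∞} {A F : Set Y}

lemma IsWeakUpperGradientOn.exists_isUpperGradient_lintegral_lt
    (h : IsWeakUpperGradientOn μ w g univ) {ε : ℝ≥0∞} (hε : ∫⁻ x, g x ∂μ < ε) :
    ∃ g', IsUpperGradient w g' ∧ ∫⁻ x, g' x ∂μ < ε := by
  obtain ⟨hg, ρ, hρ, hρ_fin, hρ_top⟩ := h
  obtain ⟨a, ha, haε⟩ := ENNReal.exists_nnreal_pos_mul_lt hρ_fin.ne (tsub_pos_of_lt hε).ne'
  obtain ⟨g₁, hg₁, hle, hae⟩ := exists_measurable_ge_ae_eq hg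
  refine ⟨fun x => g₁ x + a * ρ x, ⟨hg₁.add (hρ.const_mul _), fun γ => ?_⟩, ?_⟩
  · by_cases hγ : UGIneq w g γ
    · exact hγ.mono_fun fun x => (hle x).trans le_self_add
    · have hρ_le : a * γ.integral ρ ≤ γ.integral fun x => g₁ x + a * ρ x := by
        unfold Curve.integral
        rw [← lintegral_const_mul' _ _ ENNReal.coe_ne_top]
        exact lintegral_mono fun t => le_add_self
      rw [hρ_top γ ⟨fun t _ => mem_univ _, hγ⟩, ENNReal.mul_top (by exact_mod_cast ha.ne')]
        at hρ_le
      exact le_top.trans hρ_le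
  · rw [lintegral_add_left hg₁, lintegral_const_mul _ hρ, lintegral_congr_ae hae, add_comm]
    exact lt_tsub_iff_right.1 haε

/-- `w` is a cutoff function on `A` with values in `[0, 1]` that is `1` on `A ∩ F` and has `g` as
admissible gradient on `A`. -/
structure IsCutoff (μ : Measure Y) (A F : Set Y) (w : Y → ℝ) (g : Y → ℝ≥0∞) : Prop where
  isAdmissible : IsAdmissible μ w g A
  nonneg : ∀ x, 0 ≤ w x
  le_one : ∀ x, w x ≤ 1
  eq_one : ∀ x ∈ A, x ∈ F → w x = 1

lemma isCutoff_chainPotential {Z : Set Y} (hA : IsOpen A) (hAZ : A ⊆ Z)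
    (hg : Measurable g) {m : ℕ} {δ : ℝ} (hδ : 0 < δ) :
    IsCutoff μ A F (chainPotential (lipschitzApprox g m) F Z δ) g where
  isAdmissible := isAdmissible_chainPotential hg hδ hA hAZ
  nonneg _ := chainPotential_nonneg
  le_one _ := chainPotential_le_one
  eq_one _ hx hxF := chainPotential_eq_one hxF (hAZ hx)

lemma IsCutoff.enorm_le_one (h : IsCutoff μ A F w g) (x : Y) : ‖w x‖ₑ ≤ 1 := by
  rw [Real.enorm_of_nonneg (h.nonneg x), ← ENNReal.ofReal_one]
  exact ENNReal.ofReal_le_ofReal (h.le_one x)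

end UpperGradients

section Cutoffs

variable {μ : Measure X} {G F Z : Set X} {ε : ℝ≥0∞}

lemma exists_isUpperGradient_lowerSemicontinuous_of_capa1_lt [SecondCountableTopology X]
    [IsLocallyFiniteMeasure μ] (h : capa1 μ G < ε) :
    ∃ (w : X → ℝ) (g : X → ℝ≥0∞), (∀ x ∈ G, 1 ≤ w x) ∧ ∫⁻ x, ‖w x‖ₑ ∂μ < ε ∧
      IsUpperGradient w g ∧ LowerSemicontinuous g ∧ ∫⁻ x, g x ∂μ < ε := by
  simp only [capa1, iInf_lt_iff] at h
  obtain ⟨w, -, hwG, hw⟩ := h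
  simp only [NNorm, ← Real.enorm_eq_ofReal_abs, Measure.restrict_univ] at hw
  have hinf := le_add_self.trans_lt hw
  simp only [iInf_lt_iff] at hinf
  obtain ⟨g, hg, hgε⟩ := hinf
  obtain ⟨g₁, hg₁, hg₁ε⟩ := hg.exists_isUpperGradient_lintegral_lt hgε
  obtain ⟨η, hη, hηε⟩ := exists_between (tsub_pos_of_lt hg₁ε)
  obtain ⟨g₂, hle, hlsc, hg₂⟩ := exists_le_lowerSemicontinuous_lintegral_ge μ g₁ hg₁.1 hη.ne'
  refine ⟨w, g₂, hwG, le_self_add.trans_lt hw,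
    ⟨hlsc.measurable, fun γ => (hg₁.2 γ).mono_fun hle⟩, hlsc, hg₂.trans_lt ?_⟩
  rw [add_comm]
  exact lt_tsub_iff_right.1 hηε

lemma limsup_chainPotential_le {w : X → ℝ} {g : X → ℝ≥0∞} (hwF : ∀ x ∈ F, 1 ≤ w x)
    (hwg : IsUpperGradient w g) (hg : LowerSemicontinuous g) {c : ℝ≥0∞} (hc₀ : c ≠ 0) (hc : c ≠ ∞)
    (hgc : ∀ x, c ≤ g x) (hF : IsClosed F) (hZ : IsCompact Z) {δ : ℕ → ℝ}
    (hδ : Tendsto δ atTop (𝓝 0)) (hδ₀ : ∀ m, 0 ≤ δ m) (x : X) :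
    limsup (fun m => ‖chainPotential (lipschitzApprox g m) F Z (δ m) x‖ₑ) atTop ≤ ‖w x‖ₑ := by
  refine le_of_forall_lt_imp_le_of_dense fun a ha => ?_
  have hfreq : ∃ᶠ m in atTop, a < 1 - chainDist (lipschitzApprox g m) F Z (δ m) x := by
    refine (frequently_lt_of_lt_limsup (by isBoundedDefault) ha).mono fun m hm => ?_
    rwa [Real.enorm_of_nonneg chainPotential_nonneg, chainPotential, ENNReal.ofReal_toReal
      (ne_top_of_le_ne_top ENNReal.one_ne_top tsub_le_self)] at hm
  have hsub_fin : 1 - a ≠ ∞ := ne_top_of_le_ne_top ENNReal.one_ne_top tsub_le_self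
  obtain ⟨γ, hγ₀, hγF, hγ⟩ := exists_curve_integral_le_of_frequently_chainDist_lt hg hc₀ hc hgc hF
    hZ hsub_fin hδ hδ₀ (hfreq.mono fun m hm => lt_tsub_comm.1 hm)
  have hdiff : ‖w x - w (γ.toFun γ.len)‖ₑ ≤ 1 - a := by
    rw [Real.enorm_eq_ofReal_abs, ← hγ₀]
    exact (hwg.2 γ).trans hγ
  have hend : (1 : ℝ≥0∞) ≤ ‖w (γ.toFun γ.len)‖ₑ := by
    rw [Real.enorm_eq_ofReal_abs, ← ENNReal.ofReal_one]
    exact ENNReal.ofReal_le_ofReal ((hwF _ hγF).trans (le_abs_self _))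
  have ha_le : a ≤ 1 := let ⟨_, hm⟩ := hfreq.exists; hm.le.trans tsub_le_self
  refine (ENNReal.add_le_add_iff_right hsub_fin).1 ?_
  calc a + (1 - a) = 1 := add_tsub_cancel_of_le ha_le
    _ ≤ ‖w (γ.toFun γ.len)‖ₑ := hend
    _ = ‖w x - (w x - w (γ.toFun γ.len))‖ₑ := by rw [sub_sub_cancel]
    _ ≤ ‖w x‖ₑ + ‖w x - w (γ.toFun γ.len)‖ₑ := enorm_sub_le
    _ ≤ ‖w x‖ₑ + (1 - a) := add_le_add_right hdiff _

lemma limsup_setLIntegral_enorm_le {A : Set X} (hA : IsOpen A) (hμA : μ A ≠ ∞) {W : ℕ → X → ℝ}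
    {g : ℕ → X → ℝ≥0∞} (hW : ∀ m, IsCutoff μ A F (W m) (g m)) {w : X → ℝ}
    (hlim : ∀ x, limsup (fun m => ‖W m x‖ₑ) atTop ≤ ‖w x‖ₑ) :
    limsup (fun m => ∫⁻ x in A, ‖W m x‖ₑ ∂μ) atTop ≤ ∫⁻ x, ‖w x‖ₑ ∂μ := by
  have hmeas : ∀ m, Measurable fun x => ‖A.indicator (W m) x‖ₑ := fun m =>
    ((hW m).isAdmissible.locLipOn.measurable_indicator hA).enorm
  have hindicator : ∀ m, EqOn (fun x => ‖W m x‖ₑ) (fun x => ‖A.indicator (W m) x‖ₑ) A :=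
    fun m x hx => by simp only [indicator_of_mem hx]
  simp only [fun m => setLIntegral_congr_fun (μ := μ) hA.measurableSet (hindicator m)]
  refine (limsup_lintegral_le 1 hmeas (fun m => Eventually.of_forall fun x => ?_) ?_).trans
    ((lintegral_mono fun x => ?_).trans (setLIntegral_le_lintegral A _))
  · exact (enorm_indicator_le_enorm_self _ _).trans ((hW m).enorm_le_one x)
  · simpa using hμA
  · exact (limsup_le_limsup (Eventually.of_forall fun m =>
      enorm_indicator_le_enorm_self _ _)).trans
      (hlim x)

lemma exists_isCutoff_of_capa1_lt [ProperSpace X] [IsLocallyFiniteMeasure μ] (h : capa1 μ G < ε)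
    (hF : IsClosed F) (hFG : F ⊆ G) (x₀ : X) (R : ℝ) :
    ∃ w g, IsCutoff μ (ball x₀ R) F w g ∧ ∫⁻ x in ball x₀ R, g x ∂μ < ε ∧
      ∫⁻ x in ball x₀ R, ‖w x‖ₑ ∂μ < ε := by
  obtain ⟨w, g, hwG, hw, hwg, hg, hgε⟩ :=
    exists_isUpperGradient_lowerSemicontinuous_of_capa1_lt h
  have hball_fin : μ (ball x₀ R) ≠ ∞ := measure_ball_lt_top.ne
  obtain ⟨c, hc, hcε⟩ := ENNReal.exists_nnreal_pos_mul_lt hball_fin (tsub_pos_of_lt hgε).ne'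
  let g₁ : X → ℝ≥0∞ := fun x => g x + c
  have hg₁ : LowerSemicontinuous g₁ := hg.add lowerSemicontinuous_const
  let W : ℕ → X → ℝ := fun m =>
    chainPotential (lipschitzApprox g₁ m) F (closedBall x₀ R) (1 / ((m : ℝ) + 1))
  have hW : ∀ m, IsCutoff μ (ball x₀ R) F (W m) g₁ := fun m =>
    isCutoff_chainPotential isOpen_ball ball_subset_closedBall hg₁.measurable (by positivity)
  have hlimsup := limsup_setLIntegral_enorm_le isOpen_ball hball_fin hW <|
    limsup_chainPotential_le (fun x hx => hwG x (hFG hx))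
      ⟨hg₁.measurable, fun γ => (hwg.2 γ).mono_fun fun _ => le_self_add⟩ hg₁
      (ENNReal.coe_ne_zero.2 hc.ne') ENNReal.coe_ne_top (fun _ => le_add_self) hF
      (isCompact_closedBall x₀ R) tendsto_one_div_add_atTop_nhds_zero_nat fun _ => by positivity
  obtain ⟨m, hm⟩ :=
    (eventually_lt_of_limsup_lt (hlimsup.trans_lt hw) (by isBoundedDefault)).exists
  refine ⟨W m, g₁, hW m, ?_, hm⟩
  rw [lintegral_add_right _ measurable_const, setLIntegral_const, add_comm]
  exact (add_le_add_right (setLIntegral_le_lintegral _ _) _).trans_lt (lt_tsub_iff_right.1 hcε)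

end Cutoffs

section Multiplication

variable {Y : Type*} [MetricSpace Y] [MeasurableSpace Y] {μ : Measure Y} {A B E F : Set Y}
  {w v₁ v₂ : Y → ℝ} {g g₁ g₂ : Y → ℝ≥0∞}

lemma IsAdmissible.mul_of_enorm_le_one (h₁ : IsAdmissible μ v₁ g₁ A) (h₂ : IsAdmissible μ v₂ g₂ A)
    (hA : IsOpen A) (hv₁ : Measurable v₁) (hv₂ : ∀ x ∈ A, ‖v₂ x‖ₑ ≤ 1) :
    IsAdmissible μ (fun x => v₁ x * v₂ x) (fun x => ‖v₁ x‖ₑ * g₂ x + g₁ x) A :=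
  h₁.of_deriv₂ h₂ hA (h₁.locLipOn.mul h₂.locLipOn)
    ((hv₁.enorm.mul h₂.measurable).add h₁.measurable) fun c _ t ht hd₁ hle₁ hd₂ hle₂ => by
      rw [deriv_fun_mul hd₁ hd₂, add_comm]
      refine (enorm_add_le _ _).trans ?_
      rw [enorm_mul, enorm_mul]
      exact add_le_add (mul_le_mul_right hle₂ _)
        ((mul_le_mul' hle₁ (hv₂ _ ht)).trans_eq (mul_one _))

namespace IsCutoff

lemma mono (h : IsCutoff μ A F w g) (hB : B ⊆ A) (hE : E ⊆ F) : IsCutoff μ B E w g where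
  isAdmissible := h.isAdmissible.mono_set hB
  nonneg := h.nonneg
  le_one := h.le_one
  eq_one x hx hxE := h.eq_one x (hB hx) (hE hxE)

lemma indicator (h : IsCutoff μ A F w g) (hA : IsOpen A) : IsCutoff μ A F (A.indicator w) g where
  isAdmissible := h.isAdmissible.congr hA fun _ hx => (indicator_of_mem hx _).symm
  nonneg := indicator_nonneg fun x _ => h.nonneg x
  le_one := indicator_le' (fun x _ => h.le_one x) fun _ _ => zero_le_one
  eq_one x hx hxF := (indicator_of_mem hx _).trans (h.eq_one x hx hxF)

lemma isAdmissible_one_sub (h : IsCutoff μ A F w g) (hA : IsOpen A) :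
    IsAdmissible μ (fun x => 1 - w x) g A := by
  have haffine := h.isAdmissible.affine hA (-1) 1
  simpa only [neg_one_mul, neg_add_eq_sub, enorm_neg, enorm_one, one_mul] using haffine

lemma enorm_one_sub_le_one (h : IsCutoff μ A F w g) (x : Y) : ‖1 - w x‖ₑ ≤ 1 := by
  rw [Real.enorm_of_nonneg (sub_nonneg.2 (h.le_one x))]
  exact ENNReal.ofReal_le_one.2 (sub_le_self 1 (h.nonneg x))

end IsCutoff

end Multiplication

section AbsoluteContinuity

variable {μ : Measure X} {A F G H : Set X} {u w : X → ℝ} {h : X → ℝ≥0∞}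

lemma HasVariationLE.exists_seq_mem_Icc {c : ℝ≥0∞} (hvar : HasVariationLE μ A u c) (hA : IsOpen A)
    {a b : ℝ} (hab : a ≤ b) (hu : ∀ x, u x ∈ Icc a b) :
    ∃ (v : ℕ → X → ℝ) (g : ℕ → X → ℝ≥0∞), (∀ i, IsAdmissible μ (v i) (g i) A) ∧
      (∀ i x, v i x ∈ Icc a b) ∧ (∀ i, ∫⁻ x in A, ‖v i x - u x‖ₑ ∂μ ≤ 2⁻¹ ^ i) ∧
      ∀ i, ∫⁻ x in A, g i x ∂μ ≤ c + 2⁻¹ ^ i := by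
  obtain ⟨v, g, hadm, hvu, hg⟩ := hvar.exists_seq
  have hlip : LipschitzWith 1 fun y : ℝ => max a (min b y) :=
    (LipschitzWith.id.const_min b).const_max a
  refine ⟨fun i x => max a (min b (v i x)), _, fun i => (hadm i).clamp hA hab,
    fun i x => ⟨le_max_left _ _, max_le hab (min_le_left _ _)⟩,
    fun i => (lintegral_mono fun x => ?_).trans (hvu i),
    fun i => (lintegral_mono fun x => indicator_le_self _ _ x).trans (hg i)⟩
  have hux : max a (min b (u x)) = u x := by rw [min_eq_right (hu x).2, max_eq_right (hu x).1]
  simpa only [hux, edist_eq_enorm_sub, ENNReal.coe_one, one_mul] using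
    hlip.edist_le_mul (v i x) (u x)

lemma IsCutoff.lintegral_add_lintegral_inter_le (hw : IsCutoff μ A H w h) (hA : IsOpen A)
    (hH : IsOpen H) {g : X → ℝ≥0∞} (hg : Measurable g) :
    ∫⁻ x in A, (‖1 - w x‖ₑ * g x + h x) ∂μ + ∫⁻ x in A ∩ H, g x ∂μ ≤
      ∫⁻ x in A, g x ∂μ + ∫⁻ x in A, h x ∂μ := by
  rw [lintegral_add_right _ hw.isAdmissible.measurable, add_right_comm, inter_comm,
    ← Measure.restrict_restrict hH.measurableSet, ← lintegral_indicator hH.measurableSet,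
    ← lintegral_add_right _ (hg.indicator hH.measurableSet)]
  refine add_le_add_left (setLIntegral_mono' hA.measurableSet fun x hx => ?_) _
  by_cases hxH : x ∈ H
  · simp [hw.eq_one x hx hxH, hxH]
  · simpa only [indicator_of_notMem hxH, add_zero] using
      mul_le_of_le_one_left' (hw.enorm_one_sub_le_one x)

lemma IsCutoff.tvOpen_one_sub_mul_add_tvOpen_inter_le [SecondCountableTopology X] [SFinite μ]
    (hw : IsCutoff μ A H w h) (hA : IsOpen A) (hH : IsOpen H) (hu : Measurable u)
    (hu01 : ∀ x, u x ∈ Icc (0 : ℝ) 1) (hwm : Measurable w) :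
    tvOpen μ A (fun x => (1 - w x) * u x) + tvOpen μ (A ∩ H) u ≤
      tvOpen μ A u + ∫⁻ x in A, h x ∂μ := by
  by_cases hfin : tvOpen μ A u = ∞
  · simp [hfin]
  obtain ⟨v, g, hadm, hv01, hvu, hg⟩ := (hasVariationLE_of_tvOpen_le le_rfl hA hu
    hfin).exists_seq_mem_Icc hA zero_le_one hu01
  have hv_enorm : ∀ i x, ‖v i x‖ₑ ≤ 1 := fun i x => by
    rw [Real.enorm_of_nonneg (hv01 i x).1]
    exact ENNReal.ofReal_le_one.2 (hv01 i x).2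
  have hcut : ∀ i x, ‖(1 - w x) * v i x - (1 - w x) * u x‖ₑ ≤ ‖v i x - u x‖ₑ := fun i x => by
    rw [← mul_sub, enorm_mul]
    exact mul_le_of_le_one_left' (hw.enorm_one_sub_le_one x)
  calc tvOpen μ A (fun x => (1 - w x) * u x) + tvOpen μ (A ∩ H) u
      ≤ liminf (fun i => ∫⁻ x in A, (‖1 - w x‖ₑ * g i x + h x) ∂μ) atTop +
          liminf (fun i => ∫⁻ x in A ∩ H, g i x ∂μ) atTop :=
        add_le_add
          (tvOpen_le_liminf hA (fun i => (hw.isAdmissible_one_sub hA).mul_of_enorm_le_one (hadm i)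
            hA (measurable_const.sub hwm) fun x _ => hv_enorm i x) <|
            l1LocConv_of_le tendsto_two_inv_pow fun i => (lintegral_mono (hcut i)).trans (hvu i))
          (tvOpen_le_liminf (hA.inter hH) (fun i => (hadm i).mono_set inter_subset_left) <|
            (l1LocConv_of_le tendsto_two_inv_pow hvu).mono_set inter_subset_left)
    _ ≤ liminf (fun i => ∫⁻ x in A, (‖1 - w x‖ₑ * g i x + h x) ∂μ + ∫⁻ x in A ∩ H, g i x ∂μ)
          atTop := liminf_add_liminf_le_liminf_add _ _
    _ ≤ tvOpen μ A u + ∫⁻ x in A, h x ∂μ := liminf_le_of_forall_le_add_two_inv_pow fun i => by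
        rw [add_right_comm]
        exact (hw.lintegral_add_lintegral_inter_le hA hH (hadm i).measurable).trans
          (add_le_add_left (hg i) _)

lemma exists_isOpen_isClosed_exhaustion {Y : Type*} [PseudoEMetricSpace Y] {G : Set Y}
    (hG : IsOpen G) :
    ∃ H F : ℕ → Set Y, (∀ k, IsOpen (H k)) ∧ Monotone H ∧ ⋃ k, H k = G ∧
      ∀ k, IsClosed (F k) ∧ H k ⊆ F k ∧ F k ⊆ G := by
  let r : ℕ → ℝ≥0∞ := fun k => 2⁻¹ ^ k
  let H : ℕ → Set Y := fun k => {x | r k < infEDist x Gᶜ}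
  let F : ℕ → Set Y := fun k => {x | r k ≤ infEDist x Gᶜ}
  have hHF : ∀ k, H k ⊆ F k := fun k x (hx : r k < infEDist x Gᶜ) => hx.le
  have hFG : ∀ k, F k ⊆ G := fun k x (hx : r k ≤ infEDist x Gᶜ) => by
    by_contra hxG
    rw [infEDist_zero_of_mem hxG] at hx
    exact (ENNReal.pow_pos (by simp) k).not_ge hx
  refine ⟨H, F, fun k => isOpen_lt continuous_const continuous_infEDist,
    fun k m hkm x hx =>
      (pow_le_pow_right_of_le_one' (ENNReal.inv_le_one.2 one_le_two) hkm).trans_lt hx,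
    subset_antisymm (iUnion_subset fun k => (hHF k).trans (hFG k)) fun x hx => ?_,
    fun k => ⟨isClosed_le continuous_const continuous_infEDist, hHF k, hFG k⟩⟩
  have hpos : 0 < infEDist x Gᶜ := pos_iff_ne_zero.2 fun h0 =>
    (mem_iff_infEDist_zero_of_closed hG.isClosed_compl).2 h0 hx
  exact mem_iUnion.2 (tendsto_two_inv_pow.eventually_lt_const hpos).exists

lemma exists_tvOpen_inter_le_of_isOpen [SecondCountableTopology X] [SFinite μ] (hA : IsOpen A)
    (hG : IsOpen G) (hu : Measurable u) (hfin : tvOpen μ A u ≠ ∞) {δ : ℝ≥0∞} (hδ : δ ≠ 0) :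
    ∃ H F, IsOpen H ∧ IsClosed F ∧ H ⊆ F ∧ F ⊆ G ∧
      tvOpen μ (A ∩ G) u ≤ tvOpen μ (A ∩ H) u + δ := by
  obtain ⟨H, F, hH, hmono, hunion, hF⟩ := exists_isOpen_isClosed_exhaustion hG
  have hAunion : ⋃ k, A ∩ H k = A ∩ G := by rw [← inter_iUnion, hunion]
  obtain ⟨k, hk⟩ := exists_tvOpen_iUnion_le_add (fun k => hA.inter (hH k))
    (fun k m hkm => inter_subset_inter_right A (hmono hkm)) hu
    (hAunion ▸ ne_top_of_le_ne_top hfin (tvOpen_mono (hA.inter hG) hA inter_subset_left hu)) hδ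
  exact ⟨H k, F k, hH k, (hF k).1, (hF k).2.1, (hF k).2.2, hAunion ▸ hk⟩

lemma exists_tvOpen_inter_compl_closedBall_le [SecondCountableTopology X] [SFinite μ]
    (x₀ : X) (hA : IsOpen A) (hu : Measurable u) (hfin : tvOpen μ A u ≠ ∞) {δ : ℝ≥0∞} (hδ : δ ≠ 0) :
    ∃ R : ℝ, tvOpen μ (A ∩ (closedBall x₀ R)ᶜ) u ≤ δ := by
  have hunion : ⋃ n : ℕ, A ∩ ball x₀ n = A := by rw [← inter_iUnion, iUnion_ball_nat, inter_univ]
  obtain ⟨n, hn⟩ := exists_tvOpen_iUnion_le_add (A := fun n : ℕ => A ∩ ball x₀ n)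
    (fun n => hA.inter isOpen_ball)
    (fun a b hab => inter_subset_inter_right _ (ball_subset_ball (Nat.cast_le.2 hab))) hu
    (hunion.symm ▸ hfin) hδ
  rw [hunion] at hn
  have hball : IsOpen (A ∩ ball x₀ n) := hA.inter isOpen_ball
  have hdisj : Disjoint (A ∩ ball x₀ n) (A ∩ (closedBall x₀ n)ᶜ) :=
    (disjoint_compl_right.mono_left ball_subset_closedBall).mono inter_subset_right
      inter_subset_right
  refine ⟨n, (ENNReal.add_le_add_iff_left (ne_top_of_le_ne_top hfin
    (tvOpen_mono hball hA inter_subset_left hu))).1 (le_trans ?_ hn)⟩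
  exact tvOpen_add_le_of_disjoint hball (hA.inter isClosed_closedBall.isOpen_compl) hA
    inter_subset_left inter_subset_left hdisj hu

lemma tendsto_zero_of_add_le_of_le_liminf {a b e : ℕ → ℝ≥0∞} {T : ℝ≥0∞} (hT : T ≠ ∞)
    (ha : T ≤ liminf a atTop) (hab : ∀ i, a i + b i ≤ T + e i) (he : Tendsto e atTop (𝓝 0)) :
    Tendsto b atTop (𝓝 0) := by
  have hTe : Tendsto (fun i => T + e i) atTop (𝓝 T) := by
    simpa only [add_zero] using tendsto_const_nhds.add he
  have ha_lim : Tendsto a atTop (𝓝 T) := tendsto_of_le_liminf_of_limsup_le ha <|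
    (limsup_le_limsup (Eventually.of_forall fun i => le_self_add.trans (hab i))).trans
      hTe.limsup_eq.le
  have hsub : Tendsto (fun i => T + e i - a i) atTop (𝓝 0) := by
    simpa only [tsub_self] using ENNReal.Tendsto.sub hTe ha_lim (Or.inl hT)
  refine tendsto_of_tendsto_of_tendsto_of_le_of_le' tendsto_const_nhds hsub
    (Eventually.of_forall fun _ => zero_le) ?_
  filter_upwards [ha_lim.eventually_lt_const hT.lt_top] with i hi
  exact ENNReal.le_sub_of_add_le_left hi.ne (hab i)

variable [ProperSpace X] [IsLocallyFiniteMeasure μ]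

lemma exists_tvOpen_add_tvOpen_inter_le {x₀ : X} {R : ℝ} (hA : IsOpen A) (hAR : A ⊆ ball x₀ R)
    (hu : Measurable u) (hu01 : ∀ x, u x ∈ Icc (0 : ℝ) 1) (hfin : tvOpen μ A u ≠ ∞) (hG : IsOpen G)
    {ε : ℝ≥0∞} (hε : capa1 μ G < ε) :
    ∃ v : X → ℝ, Measurable v ∧ ∫⁻ x in A, ‖v x - u x‖ₑ ∂μ ≤ ε ∧
      tvOpen μ A v + tvOpen μ (A ∩ G) u ≤ tvOpen μ A u + (ε + ε) := by
  obtain ⟨H, F, hH, hF, hHF, hFG, hGH⟩ :=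
    exists_tvOpen_inter_le_of_isOpen hA hG hu hfin (pos_of_gt hε).ne'
  obtain ⟨w, h, hw, hh, hwε⟩ := exists_isCutoff_of_capa1_lt hε hF hFG x₀ R
  have hcutoff := (hw.indicator isOpen_ball).mono hAR hHF
  have hwm : Measurable ((ball x₀ R).indicator w) :=
    hw.isAdmissible.locLipOn.measurable_indicator isOpen_ball
  refine ⟨fun x => (1 - (ball x₀ R).indicator w x) * u x, (measurable_const.sub hwm).mul hu, ?_, ?_⟩
  · refine (lintegral_mono fun x => ?_).trans ((lintegral_mono_set hAR).trans hwε.le)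
    simp only [sub_mul, one_mul, sub_sub_cancel_left, enorm_neg, enorm_mul]
    rw [Real.enorm_of_nonneg (hu01 x).1]
    exact (mul_le_of_le_one_right' (ENNReal.ofReal_le_one.2 (hu01 x).2)).trans
      (enorm_indicator_le_enorm_self _ _)
  · refine (add_le_add_right hGH _).trans ?_
    rw [← add_assoc, ← add_assoc]
    exact add_le_add_left ((hcutoff.tvOpen_one_sub_mul_add_tvOpen_inter_le hA hH hu hu01
      hwm).trans (add_le_add_right ((lintegral_mono_set hAR).trans hh.le) _)) _

variable {G : ℕ → Set X} {ε : ℕ → ℝ≥0∞}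

lemma tendsto_tvOpen_inter_of_subset_ball {x₀ : X} {R : ℝ} (hA : IsOpen A) (hAR : A ⊆ ball x₀ R)
    (hu : Measurable u) (hu01 : ∀ x, u x ∈ Icc (0 : ℝ) 1) (hfin : tvOpen μ A u ≠ ∞)
    (hG : ∀ i, IsOpen (G i)) (hε : Tendsto ε atTop (𝓝 0)) (hcap : ∀ i, capa1 μ (G i) < ε i) :
    Tendsto (fun i => tvOpen μ (A ∩ G i) u) atTop (𝓝 0) := by
  choose v hv hvu hle using fun i =>
    exists_tvOpen_add_tvOpen_inter_le hA hAR hu hu01 hfin (hG i) (hcap i)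
  exact tendsto_zero_of_add_le_of_le_liminf hfin
    (tvOpen_le_liminf_tvOpen hA hv (l1LocConv_of_le hε hvu)) hle
    (by simpa only [add_zero] using hε.add hε)

lemma tendsto_tvOpen_inter_of_capa1_lt (hA : IsOpen A) (hu : Measurable u)
    (hu01 : ∀ x, u x ∈ Icc (0 : ℝ) 1) (hfin : tvOpen μ A u ≠ ∞) (hG : ∀ i, IsOpen (G i))
    (hε : Tendsto ε atTop (𝓝 0)) (hcap : ∀ i, capa1 μ (G i) < ε i) :
    Tendsto (fun i => tvOpen μ (A ∩ G i) u) atTop (𝓝 0) := by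
  rcases A.eq_empty_or_nonempty with rfl | ⟨x₀, _⟩
  · simp [tvOpen_empty]
  refine ENNReal.tendsto_atTop_zero.2 fun η hη => ?_
  have hη2 : 0 < η / 2 := ENNReal.half_pos hη.ne'
  obtain ⟨R, hR⟩ := exists_tvOpen_inter_compl_closedBall_le x₀ hA hu hfin hη2.ne'
  have hinner : IsOpen (A ∩ ball x₀ (R + 1)) := hA.inter isOpen_ball
  have houter : IsOpen (A ∩ (closedBall x₀ R)ᶜ) := hA.inter isClosed_closedBall.isOpen_compl
  have hlim := tendsto_tvOpen_inter_of_subset_ball hinner inter_subset_right hu hu01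
    (ne_top_of_le_ne_top hfin (tvOpen_mono hinner hA inter_subset_left hu)) hG hε hcap
  obtain ⟨N, hN⟩ := ENNReal.tendsto_atTop_zero.1 hlim (η / 2) hη2
  refine ⟨N, fun i hi => ?_⟩
  have hcover : A ∩ G i ⊆ A ∩ ball x₀ (R + 1) ∩ G i ∪ A ∩ (closedBall x₀ R)ᶜ := by
    rintro x ⟨hx, hxG⟩
    by_cases hxR : x ∈ closedBall x₀ R
    · exact Or.inl ⟨⟨hx, closedBall_subset_ball (lt_add_one R) hxR⟩, hxG⟩
    · exact Or.inr ⟨hx, hxR⟩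
  calc tvOpen μ (A ∩ G i) u
      ≤ tvOpen μ (A ∩ ball x₀ (R + 1) ∩ G i ∪ A ∩ (closedBall x₀ R)ᶜ) u :=
        tvOpen_mono (hA.inter (hG i)) ((hinner.inter (hG i)).union houter) hcover hu
    _ ≤ tvOpen μ (A ∩ ball x₀ (R + 1) ∩ G i) u + tvOpen μ (A ∩ (closedBall x₀ R)ᶜ) u :=
        tvOpen_union_le (hinner.inter (hG i)) houter hu
    _ ≤ η / 2 + η / 2 := add_le_add (hN i hi) hR
    _ = η := ENNReal.add_halves η

end AbsoluteContinuity

section TotallyBounded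

variable {Y : Type*} [PseudoMetricSpace Y] {s : Set Y}

lemma exists_seq_pairwise_le_dist_of_not_totallyBounded (hs : ¬ TotallyBounded s) :
    ∃ ε > 0, ∃ f : ℕ → Y, (∀ n, f n ∈ s) ∧ Pairwise fun m n => ε ≤ dist (f m) (f n) := by
  rw [Metric.totallyBounded_iff] at hs
  push Not at hs
  obtain ⟨ε, hε, hs⟩ := hs
  obtain ⟨f, hfs, hf⟩ := exists_seq_of_forall_finset_exists (· ∈ s) (fun y z => ε ≤ dist y z)
    fun t _ => by
      obtain ⟨y, hy, hyt⟩ := not_subset.1 (hs t t.finite_toSet)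
      refine ⟨y, hy, fun z hz => not_lt.1 fun hlt => hyt (mem_biUnion hz ?_)⟩
      rwa [mem_ball']
  refine ⟨ε, hε, f, hfs, fun m n hmn => ?_⟩
  rcases hmn.lt_or_gt with hlt | hgt
  · exact hf m n hlt
  · rw [dist_comm]
    exact hf n m hgt

lemma totallyBounded_of_forall_exists_le_measure_ball [MeasurableSpace Y] [OpensMeasurableSpace Y]
    {μ : Measure Y} (hfin : ∀ r, μ (thickening r s) ≠ ∞)
    (hlow : ∀ r > 0, ∃ c > 0, ∀ y ∈ s, c ≤ μ (ball y r)) : TotallyBounded s := by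
  by_contra hs
  obtain ⟨ε, hε, f, hfs, hf⟩ := exists_seq_pairwise_le_dist_of_not_totallyBounded hs
  obtain ⟨c, hc, hcs⟩ := hlow (ε / 2) (half_pos hε)
  have hdisj : Pairwise (Function.onFun Disjoint fun n => ball (f n) (ε / 2)) := fun m n hmn =>
    ball_disjoint_ball ((add_halves ε).le.trans (hf hmn))
  have hunion : μ (⋃ n, ball (f n) (ε / 2)) ≠ ∞ := measure_ne_top_of_subset
    (iUnion_subset fun n => ball_subset_thickening (hfs n) _) (hfin (ε / 2))
  refine infinite_univ ((Measure.finite_const_le_meas_of_disjoint_iUnion μ hc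
    (fun _ => measurableSet_ball) hdisj hunion).subset fun n _ => hcs (f n) (hfs n))

end TotallyBounded

namespace Doubling

variable {Y : Type*} [MetricSpace Y] [MeasurableSpace Y] {μ : Measure Y} {Cd r : ℝ}

lemma measure_ball_two_pow_mul_le (h : Doubling μ Cd) (x : Y) (hr : 0 < r) (n : ℕ) :
    μ (ball x (2 ^ n * r)) ≤ ENNReal.ofReal Cd ^ n * μ (ball x r) := by
  induction n with
  | zero => simp
  | succ n ih =>
    rw [pow_succ', mul_assoc, pow_succ', mul_assoc]
    exact (h.2 x (2 ^ n * r) (by positivity)).2.1.trans (by gcongr)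

lemma measure_ball_pos (h : Doubling μ Cd) (x : Y) (hr : 0 < r) : 0 < μ (ball x r) := by
  simpa only [mul_div_cancel₀ r two_ne_zero] using (h.2 x (r / 2) (half_pos hr)).1

lemma measure_ball_ne_top (h : Doubling μ Cd) (x : Y) (r : ℝ) : μ (ball x r) ≠ ∞ := by
  rcases le_or_gt r 0 with hr | hr
  · simp [ball_eq_empty.2 hr]
  · exact (h.2 x r hr).2.2.ne

lemma isLocallyFiniteMeasure (h : Doubling μ Cd) : IsLocallyFiniteMeasure μ :=
  ⟨fun x => ⟨ball x 1, ball_mem_nhds x one_pos, (h.measure_ball_ne_top x 1).lt_top⟩⟩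

lemma exists_le_measure_ball (h : Doubling μ Cd) (x : Y) (R : ℝ) (hr : 0 < r) :
    ∃ c > 0, ∀ y ∈ closedBall x R, c ≤ μ (ball y r) := by
  obtain ⟨n, hn⟩ := pow_unbounded_of_one_lt ((R + 1) / r) one_lt_two
  rw [div_lt_iff₀ hr] at hn
  have hCd : ENNReal.ofReal Cd ^ n ≠ 0 :=
    pow_ne_zero n (ENNReal.ofReal_pos.2 (one_pos.trans_le h.1)).ne'
  have hCd_top : ENNReal.ofReal Cd ^ n ≠ ∞ := ENNReal.pow_ne_top ENNReal.ofReal_ne_top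
  refine ⟨μ (ball x 1) / ENNReal.ofReal Cd ^ n,
    ENNReal.div_pos (h.measure_ball_pos x one_pos).ne' hCd_top, fun y hy => ?_⟩
  have hsub : ball x 1 ⊆ ball y (2 ^ n * r) :=
    ball_subset_ball' (by linarith [mem_closedBall'.1 hy])
  rw [ENNReal.div_le_iff hCd hCd_top, mul_comm]
  exact (measure_mono hsub).trans (h.measure_ball_two_pow_mul_le y hr n)

lemma properSpace [OpensMeasurableSpace Y] [CompleteSpace Y] (h : Doubling μ Cd) :
    ProperSpace Y := by
  refine ⟨fun x R => isCompact_iff_totallyBounded_isComplete.2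
    ⟨totallyBounded_of_forall_exists_le_measure_ball (μ := μ) (fun r => ?_) fun r hr =>
      h.exists_le_measure_ball x R hr, isClosed_closedBall.isComplete⟩⟩
  refine measure_ne_top_of_subset (fun y hy => ?_) (h.measure_ball_ne_top x (r + R))
  obtain ⟨z, hz, hyz⟩ := mem_thickening_iff.1 hy
  exact (dist_triangle y z x).trans_lt (add_lt_add_of_lt_of_le hyz hz)

end Doubling

section Restriction

variable {Y : Type*} [MeasurableSpace Y] {μ : Measure Y} {A U Ω : Set Y} {u w : Y → ℝ}

lemma superlevel_ae_congr (h : u =ᵐ[μ.restrict A] w) (t : ℝ) :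
    superlevel u t =ᵐ[μ.restrict A] superlevel w t := by
  filter_upwards [h] with x hx
  rw [superlevel_apply, superlevel_apply, hx]

variable [MetricSpace Y]

lemma tv_le_tvOpen (hA : IsOpen A) (hUA : U ⊆ A) : tv μ U u ≤ tvOpen μ A u :=
  iInf_le_of_le A (iInf_le_of_le hA (iInf_le _ hUA))

lemma MemL1Loc.congr_of_subset (hL : MemL1Loc μ Ω u) (hAΩ : A ⊆ Ω) (hw : Measurable w)
    (he : u =ᵐ[μ.restrict A] w) : MemL1Loc μ A w := by
  refine ⟨hw.aemeasurable, fun x hx => ?_⟩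
  obtain ⟨r, hr, hfin⟩ := hL.2 x (hAΩ hx)
  refine ⟨r, hr, lt_of_le_of_lt ?_ hfin⟩
  have he' : u =ᵐ[μ.restrict (A ∩ ball x r)] w := ae_restrict_of_ae_restrict_of_subset
    inter_subset_left he
  calc ∫⁻ y in A ∩ ball x r, ENNReal.ofReal |w y| ∂μ
      = ∫⁻ y in A ∩ ball x r, ENNReal.ofReal |u y| ∂μ :=
        lintegral_congr_ae (he'.mono fun y hy => by simp only [hy])
    _ ≤ ∫⁻ y in Ω ∩ ball x r, ENNReal.ofReal |u y| ∂μ :=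
        lintegral_mono_set (inter_subset_inter_left _ hAΩ)

end Restriction

section CoareaQuasiopen

variable {μ : Measure X} {G U Ω : Set X} {u w : X → ℝ}

lemma tvOpen_union_inter_le_tv_add [SecondCountableTopology X] [SFinite μ] (hΩ : IsOpen Ω)
    (hG : IsOpen G) (hUG : IsOpen (U ∪ G)) (hw : Measurable w) (he : u =ᵐ[μ.restrict Ω] w) :
    tvOpen μ ((U ∪ G) ∩ Ω) w ≤ tv μ U u + tvOpen μ (Ω ∩ G) w := by
  rw [← tsub_le_iff_right]
  refine le_iInf fun O => le_iInf fun hO => le_iInf fun hUO => ?_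
  rw [tsub_le_iff_right]
  have hsub : (U ∪ G) ∩ Ω ⊆ (O ∩ Ω) ∪ (Ω ∩ G) := by
    rintro x ⟨hx | hx, hxΩ⟩
    · exact Or.inl ⟨hUO hx, hxΩ⟩
    · exact Or.inr ⟨hxΩ, hx⟩
  calc tvOpen μ ((U ∪ G) ∩ Ω) w
      ≤ tvOpen μ ((O ∩ Ω) ∪ (Ω ∩ G)) w :=
        tvOpen_mono (hUG.inter hΩ) ((hO.inter hΩ).union (hΩ.inter hG)) hsub hw
    _ ≤ tvOpen μ (O ∩ Ω) w + tvOpen μ (Ω ∩ G) w :=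
        tvOpen_union_le (hO.inter hΩ) (hΩ.inter hG) hw
    _ ≤ tvOpen μ O u + tvOpen μ (Ω ∩ G) w := by
        gcongr
        exact tvOpen_le_of_ae_eq (hO.inter hΩ) hO inter_subset_left hw
          (ae_restrict_of_ae_restrict_of_subset inter_subset_right he)

lemma lintegral_perim_superlevel_le_tv [SecondCountableTopology X] [IsLocallyFiniteMeasure μ]
    (hΩ : IsOpen Ω) (hUΩ : U ⊆ Ω) (hu : AEMeasurable u (μ.restrict Ω)) :
    ∫⁻ t : ℝ, perim μ {x | t < u x} U ≤ tv μ U u := by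
  obtain ⟨w, hw, he⟩ := hu
  refine le_iInf fun O => le_iInf fun hO => le_iInf fun hUO => ?_
  have hA : IsOpen (O ∩ Ω) := hO.inter hΩ
  have heA : u =ᵐ[μ.restrict (O ∩ Ω)] w :=
    ae_restrict_of_ae_restrict_of_subset inter_subset_right he
  calc ∫⁻ t : ℝ, perim μ {x | t < u x} U
      ≤ ∫⁻ t : ℝ, perimOpen μ {x | t < w x} (O ∩ Ω) := lintegral_mono fun t =>
        (tv_le_tvOpen hA (subset_inter hUO hUΩ)).trans_eq
          (tvOpen_congr (superlevel_ae_congr heA t))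
    _ ≤ tvOpen μ (O ∩ Ω) w := lintegral_perimOpen_superlevel_le hA hw
    _ ≤ tvOpen μ O u := tvOpen_le_of_ae_eq hA hO inter_subset_left hw heA

lemma tv_le_lintegral_perim_superlevel_add [SecondCountableTopology X] [IsLocallyFiniteMeasure μ]
    (hΩ : IsOpen Ω) (hUΩ : U ⊆ Ω) (hG : IsOpen G) (hUG : IsOpen (U ∪ G)) (hL : MemL1Loc μ Ω u)
    (hw : Measurable w) (he : u =ᵐ[μ.restrict Ω] w) :
    tv μ U u ≤ (∫⁻ t : ℝ, perim μ {x | t < u x} U)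
      + ∫⁻ t : ℝ, perimOpen μ {x | t < w x} (Ω ∩ G) := by
  have hA : IsOpen ((U ∪ G) ∩ Ω) := hUG.inter hΩ
  have heA : u =ᵐ[μ.restrict ((U ∪ G) ∩ Ω)] w :=
    ae_restrict_of_ae_restrict_of_subset inter_subset_right he
  calc tv μ U u
      ≤ tvOpen μ ((U ∪ G) ∩ Ω) u := tv_le_tvOpen hA (subset_inter subset_union_left hUΩ)
    _ = tvOpen μ ((U ∪ G) ∩ Ω) w := tvOpen_congr heA
    _ ≤ ∫⁻ t : ℝ, perimOpen μ {x | t < w x} ((U ∪ G) ∩ Ω) :=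
        tvOpen_le_lintegral_perimOpen_superlevel hA hw
          (hL.congr_of_subset inter_subset_right hw heA)
    _ ≤ ∫⁻ t : ℝ, (perim μ {x | t < u x} U + perimOpen μ {x | t < w x} (Ω ∩ G)) :=
        lintegral_mono fun t => tvOpen_union_inter_le_tv_add hΩ hG hUG
          (measurable_superlevel hw t) (superlevel_ae_congr he t)
    _ = _ := lintegral_add_right _ (measurable_perimOpen_superlevel (hΩ.inter hG) hw)

variable [ProperSpace X] [IsLocallyFiniteMeasure μ]

lemma tendsto_lintegral_perimOpen_superlevel_inter (hΩ : IsOpen Ω) (hw : Measurable w)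
    (hfin : tvOpen μ Ω w ≠ ∞) {G : ℕ → Set X} {ε : ℕ → ℝ≥0∞} (hG : ∀ i, IsOpen (G i))
    (hε : Tendsto ε atTop (𝓝 0)) (hcap : ∀ i, capa1 μ (G i) < ε i) :
    Tendsto (fun i => ∫⁻ t : ℝ, perimOpen μ {x | t < w x} (Ω ∩ G i)) atTop (𝓝 0) := by
  have hperim : ∫⁻ t : ℝ, perimOpen μ {x | t < w x} Ω ≠ ∞ :=
    ne_top_of_le_ne_top hfin (lintegral_perimOpen_superlevel_le hΩ hw)
  have hperim_ae : ∀ᵐ t : ℝ, perimOpen μ {x | t < w x} Ω < ∞ :=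
    ae_lt_top (measurable_perimOpen_superlevel hΩ hw) hperim
  rw [← lintegral_zero (μ := (volume : Measure ℝ))]
  refine tendsto_lintegral_of_dominated_convergence (fun t => perimOpen μ {x | t < w x} Ω)
    (fun i => measurable_perimOpen_superlevel (hΩ.inter (hG i)) hw)
    (fun i => .of_forall fun t => tvOpen_mono (hΩ.inter (hG i)) hΩ inter_subset_left
      (measurable_superlevel hw t)) hperim ?_
  filter_upwards [hperim_ae] with t ht
  exact tendsto_tvOpen_inter_of_capa1_lt hΩ (measurable_superlevel hw t) (superlevel_mem_Icc w t)
    ht.ne hG hε hcap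

lemma QuasiOpen.tv_le_lintegral_perim_superlevel (hU : QuasiOpen μ U) (hΩ : IsOpen Ω)
    (hUΩ : U ⊆ Ω) (hL : MemL1Loc μ Ω u) (hfin : tvOpen μ Ω u ≠ ∞) :
    tv μ U u ≤ ∫⁻ t : ℝ, perim μ {x | t < u x} U := by
  obtain ⟨w, hw, he⟩ := hL.1
  choose G hG hcap hUG using fun i : ℕ => hU (1 / ((i : ℝ) + 1)) Nat.one_div_pos_of_nat
  have hε : Tendsto (fun i : ℕ => ENNReal.ofReal (1 / ((i : ℝ) + 1))) atTop (𝓝 0) := by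
    simpa only [ENNReal.ofReal_zero] using
      ENNReal.tendsto_ofReal (tendsto_one_div_add_atTop_nhds_zero_nat (𝕜 := ℝ))
  have hlim := tendsto_lintegral_perimOpen_superlevel_inter hΩ hw (tvOpen_congr he ▸ hfin) hG hε
    hcap
  have hsum := hlim.const_add (∫⁻ t : ℝ, perim μ {x | t < u x} U)
  rw [add_zero] at hsum
  exact ge_of_tendsto' hsum fun i =>
    tv_le_lintegral_perim_superlevel_add hΩ hUΩ (hG i) (hUG i) hL hw he

theorem coarea_in_quasiopen_general (hU : QuasiOpen μ U)
    (hfin : ∃ Ω : Set X, IsOpen Ω ∧ U ⊆ Ω ∧ MemL1Loc μ Ω u ∧ tvOpen μ Ω u < ∞) :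
    tv μ U u = ∫⁻ t : ℝ, perim μ {x | t < u x} U := by
  obtain ⟨Ω, hΩ, hUΩ, hL, hΩfin⟩ := hfin
  exact (hU.tv_le_lintegral_perim_superlevel hΩ hUΩ hL hΩfin.ne).antisymm
    (lintegral_perim_superlevel_le_tv hΩ hUΩ hL.1)

end CoareaQuasiopen

/-- Coarea formula in `1`-quasiopen sets: if `U` is `1`-quasiopen and
`‖Du‖(U) < ∞`, then `‖Du‖(U) = ∫_{-∞}^{∞} P({u > t}, U) dt`. -/
theorem coarea_in_quasiopen
    (μ : Measure X) (hcomp : CompleteSpace X)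
    (hdoub : ∃ Cd : ℝ, Doubling μ Cd) (hpoin : ∃ CP lam : ℝ, Poincare μ CP lam)
    (U : Set X) (hU : QuasiOpen μ U) (u : X → ℝ)
    (hfin : ∃ Ω : Set X, IsOpen Ω ∧ U ⊆ Ω ∧ MemL1Loc μ Ω u ∧ tvOpen μ Ω u < ∞) :
    tv μ U u = ∫⁻ t : ℝ, perim μ {x | t < u x} U := by
  obtain ⟨Cd, hCd⟩ := hdoub
  have := hCd.properSpace
  have := hCd.isLocallyFiniteMeasure
  exact coarea_in_quasiopen_general hU hfin

end PaperBV
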